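/- There exists a universal constant C₀ > 0 such that for all C ≥ C₀ the following holds: if a graph G is a C-expander, then G is Hamilton-connected, i.e. for every pair of distinct vertices x, y of G there is a Hamilton path of G with endpoints x and y. -/

import Mathlib

open SimpleGraph

/-- `G` is `m`-joined: between any two disjoint vertex sets of size `m` there is an edge. -/
def IsJoined {V : Type*} (G : SimpleGraph V) (m : ℕ) : Prop :=
  ∀ A B : Finset V, Disjoint A B → A.card = m → B.card = m →
    ∃ a ∈ A, ∃ b ∈ B, G.Adj a b

/-- The external neighbourhood of a vertex set `X`: the vertices outside `X`
having a neighbour in `X`. -/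
def extNbhd {V : Type*} [Fintype V] [DecidableEq V]
    (G : SimpleGraph V) [DecidableRel G.Adj] (X : Finset V) : Finset V :=
  Finset.univ.filter fun v => v ∉ X ∧ ∃ u ∈ X, G.Adj u v

/-- `G` (on `n` vertices) is a `C`-expander: `G` is `⌈n/(2C)⌉`-joined, and every
vertex set `X` with `1 ≤ |X| ≤ n/(2C)` satisfies `|N(X)| ≥ C|X|`. -/
def IsCExpander {V : Type*} [Fintype V] [DecidableEq V]
    (G : SimpleGraph V) [DecidableRel G.Adj] (C : ℝ) : Prop :=
  IsJoined G ⌈(Fintype.card V : ℝ) / (2 * C)⌉₊ ∧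
  ∀ X : Finset V, 1 ≤ X.card → (X.card : ℝ) ≤ (Fintype.card V : ℝ) / (2 * C) →
    C * (X.card : ℝ) ≤ ((extNbhd G X).card : ℝ)

/-!
Among the path families covering everything outside an absorber, take one with the fewest paths and,
subject to this, of minimal potential, so that no rotation can balance it better. If it had too many
short paths, Pósa rotations would yield two disjoint subfamilies, each with `m` rotation ends, where
the graph is `m`-joined; an edge between these ends would merge two paths. Hence there are few.

A joined graph of large expansion contains large Friedman–Pippenger extendable sets, in which trees
can be grown and connected by short paths without destroying extendability. This yields an absorber:
many paths whose ends, whenever they are among the ends of a path family, can be traded one after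
the other, leaving in the end two prescribed vertices. Inserting paths of the absorber into the
cover, again by rotations, eliminates all the ends of the cover, and the absorber then produces a
Hamilton path between the prescribed vertices.

If `n / (2 * C) ≤ 1`, the graph is `1`-joined, hence complete.
-/

namespace ExpanderHamilton

/-! ### Families of disjoint paths -/

section Families

variable {V : Type*} {G : SimpleGraph V}

/-- The multiset of vertices covered by a family of vertex lists. -/
def verts (F : Multiset (List V)) : Multiset V := F.bind fun l => (l : Multiset V)

/-- The two end vertices of a list; a one-element list has its vertex counted twice, so that every
path has exactly two ends. -/
def listEnds (l : List V) : Multiset V := (l.head?.toList : Multiset V) + l.getLast?.toList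

/-- The multiset of end vertices of a family of lists. -/
def ends (F : Multiset (List V)) : Multiset V := F.bind listEnds

/-- `F` is a family of nonempty, pairwise vertex-disjoint paths of `G`. -/
def Valid (G : SimpleGraph V) (F : Multiset (List V)) : Prop :=
  (∀ l ∈ F, l ≠ [] ∧ l.IsChain G.Adj) ∧ (verts F).Nodup

/-- `a` and `b` are consecutive, in some order, in the list `l`. -/
def ListAdj (l : List V) (a b : V) : Prop := [a, b] <:+: l ∨ [b, a] <:+: l

/-- `a` and `b` are consecutive on some member of the family `F`. -/
def FamilyAdj (F : Multiset (List V)) (a b : V) : Prop := ∃ l ∈ F, ListAdj l a b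

/-- The vertices of `F` are also covered by a path family whose ends are those of `F` without `x`
and `y`: the effect of joining two paths of `F` through their ends `x` and `y`. -/
def Mergeable (G : SimpleGraph V) (F : Multiset (List V)) (x y : V) : Prop :=
  ∃ C, Valid G C ∧ verts C = verts F ∧ x ::ₘ y ::ₘ ends C = ends F

@[simp] lemma verts_zero : verts (0 : Multiset (List V)) = 0 := rfl

@[simp] lemma verts_cons (l : List V) (F) : verts (l ::ₘ F) = (l : Multiset V) + verts F := by
  simp [verts]

@[simp] lemma verts_add (E F : Multiset (List V)) : verts (E + F) = verts E + verts F := by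
  simp [verts]

@[simp] lemma ends_zero : ends (0 : Multiset (List V)) = 0 := rfl

@[simp] lemma ends_cons (l : List V) (F) : ends (l ::ₘ F) = listEnds l + ends F := by
  simp [ends]

@[simp] lemma ends_add (E F : Multiset (List V)) : ends (E + F) = ends E + ends F := by
  simp [ends]

@[simp] lemma ends_singleton (l : List V) : ends {l} = listEnds l := by
  simp [ends]

lemma mem_verts {F : Multiset (List V)} {a : V} : a ∈ verts F ↔ ∃ l ∈ F, a ∈ l := by
  simp [verts]

lemma mem_ends {F : Multiset (List V)} {a : V} : a ∈ ends F ↔ ∃ l ∈ F, a ∈ listEnds l := by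
  simp [ends]

lemma mem_listEnds {l : List V} {a : V} :
    a ∈ listEnds l ↔ l.head? = some a ∨ l.getLast? = some a := by
  simp [listEnds]

lemma listEnds_reverse (l : List V) : listEnds l.reverse = listEnds l := by
  simp [listEnds, add_comm]

lemma mem_of_mem_listEnds {l : List V} {a : V} (h : a ∈ listEnds l) : a ∈ l :=
  (mem_listEnds.1 h).elim List.mem_of_mem_head? List.mem_of_mem_getLast?

lemma mem_verts_of_mem_ends {F : Multiset (List V)} {a : V} (h : a ∈ ends F) :
    a ∈ verts F := by
  obtain ⟨l, hl, h⟩ := mem_ends.1 h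
  exact mem_verts.2 ⟨l, hl, mem_of_mem_listEnds h⟩

lemma card_listEnds {l : List V} (h : l ≠ []) : (listEnds l).card = 2 := by
  obtain ⟨a, l, rfl⟩ := List.exists_cons_of_ne_nil h
  simp [listEnds, List.getLast?_cons]

lemma listEnds_append {P Q : List V} (hP : P ≠ []) (hQ : Q ≠ []) :
    listEnds (P ++ Q) = (P.head?.toList : Multiset V) + Q.getLast?.toList := by
  simp [listEnds, List.head?_append_of_ne_nil _ hP, List.getLast?_append_of_ne_nil _ hQ]

lemma cons_cons_listEnds_append {P Q : List V} {x y : V} (hx : P.getLast? = some x)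
    (hy : Q.head? = some y) :
    x ::ₘ y ::ₘ listEnds (P ++ Q) = listEnds P + listEnds Q := by
  rw [listEnds_append (by rintro rfl; simp at hx) (by rintro rfl; simp at hy), listEnds, listEnds,
    hx, hy]
  simp only [Option.toList_some, Multiset.coe_singleton, ← Multiset.singleton_add]
  abel

lemma listAdj_append (l₁ l₂ : List V) (a b : V) :
    ListAdj (l₁ ++ l₂) a b ↔ ListAdj l₁ a b ∨ ListAdj l₂ a b ∨
      (l₁.getLast? = some a ∧ l₂.head? = some b) ∨
      (l₁.getLast? = some b ∧ l₂.head? = some a) := by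
  have pair_infix (a b : V) : [a, b] <:+: l₁ ++ l₂ ↔ [a, b] <:+: l₁ ∨ [a, b] <:+: l₂ ∨
      (l₁.getLast? = some a ∧ l₂.head? = some b) := by
    rw [List.infix_append_iff_ne_nil]
    refine or_congr_right (or_congr_right ⟨?_, ?_⟩)
    · rintro ⟨s, t, hs, ht, h, ⟨u, rfl⟩, ⟨v, rfl⟩⟩
      obtain ⟨rfl, rfl⟩ : s = [a] ∧ t = [b] := by
        rcases s with _ | ⟨a', _ | ⟨b', s⟩⟩ <;> simp_all
      simp
    · rintro ⟨h₁, h₂⟩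
      obtain ⟨u, rfl⟩ := List.getLast?_eq_some_iff.1 h₁
      obtain ⟨v, rfl⟩ := List.head?_eq_some_iff.1 h₂
      exact ⟨[a], [b], by simp, by simp, rfl, List.suffix_append _ _, [b].prefix_append v⟩
  unfold ListAdj
  rw [pair_infix, pair_infix]
  tauto

lemma listAdj_reverse (l : List V) (a b : V) : ListAdj l.reverse a b ↔ ListAdj l a b := by
  have h (a b : V) : [a, b] <:+: l.reverse ↔ [b, a] <:+: l := by
    rw [← List.reverse_infix, List.reverse_reverse]
    rfl
  rw [ListAdj, ListAdj, h, h, or_comm]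

lemma listAdj_comm {l : List V} {a b : V} : ListAdj l a b ↔ ListAdj l b a := or_comm

lemma ListAdj.left_mem {l : List V} {a b : V} (h : ListAdj l a b) : a ∈ l :=
  h.elim (·.subset (by simp)) (·.subset (by simp))

lemma ListAdj.right_mem {l : List V} {a b : V} (h : ListAdj l a b) : b ∈ l :=
  (listAdj_comm.1 h).left_mem

lemma not_listAdj_singleton (q a b : V) : ¬ ListAdj [q] a b := by
  rintro (h | h) <;> simpa using h.length_le

@[simp] lemma familyAdj_cons (l : List V) (F) (a b : V) :
    FamilyAdj (l ::ₘ F) a b ↔ ListAdj l a b ∨ FamilyAdj F a b := by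
  simp [FamilyAdj]

lemma familyAdj_add (E F : Multiset (List V)) (a b : V) :
    FamilyAdj (E + F) a b ↔ FamilyAdj E a b ∨ FamilyAdj F a b := by
  simp [FamilyAdj, or_and_right, exists_or]

lemma isChain_adj_reverse {l : List V} : l.reverse.IsChain G.Adj ↔ l.IsChain G.Adj := by
  rw [List.isChain_reverse]
  simp only [G.adj_comm]

lemma valid_zero : Valid G (0 : Multiset (List V)) := by simp [Valid]

lemma valid_cons {l : List V} {F : Multiset (List V)} :
    Valid G (l ::ₘ F) ↔ (l ≠ [] ∧ l.IsChain G.Adj ∧ l.Nodup) ∧ Valid G F ∧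
      ∀ a ∈ l, a ∉ verts F := by
  simp only [Valid, Multiset.forall_mem_cons, verts_cons, Multiset.nodup_add,
    Multiset.coe_nodup, Multiset.disjoint_left, Multiset.mem_coe]
  tauto

lemma valid_add {E F : Multiset (List V)} :
    Valid G (E + F) ↔ Valid G E ∧ Valid G F ∧ ∀ a ∈ verts E, a ∉ verts F := by
  simp only [Valid, Multiset.mem_add, verts_add, Multiset.nodup_add, Multiset.disjoint_left,
    or_imp, forall_and]
  tauto

lemma valid_append_cons {P Q : List V} {F : Multiset (List V)} (hP : P ≠ []) (hQ : Q ≠ []) :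
    Valid G ((P ++ Q) ::ₘ F) ↔ Valid G (P ::ₘ Q ::ₘ F) ∧
      ∀ x ∈ P.getLast?, ∀ y ∈ Q.head?, G.Adj x y := by
  simp only [Valid, Multiset.forall_mem_cons, verts_cons, ← Multiset.coe_add, add_assoc,
    List.isChain_append, ne_eq, List.append_eq_nil_iff, hP, hQ]
  tauto

lemma Valid.append {P Q : List V} {F : Multiset (List V)} {x y : V}
    (h : Valid G (P ::ₘ Q ::ₘ F)) (hx : P.getLast? = some x) (hy : Q.head? = some y)
    (hxy : G.Adj x y) : Valid G ((P ++ Q) ::ₘ F) :=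
  (valid_append_cons (h.1 P (by simp)).1 (h.1 Q (by simp)).1).2
    ⟨h, by simpa [hx, hy] using hxy⟩

lemma valid_reverse_cons {l : List V} {F : Multiset (List V)} :
    Valid G (l.reverse ::ₘ F) ↔ Valid G (l ::ₘ F) := by
  simp only [valid_cons, isChain_adj_reverse, List.nodup_reverse, List.mem_reverse, ne_eq,
    List.reverse_eq_nil_iff]

lemma Valid.mono {E F : Multiset (List V)} (h : Valid G F) (hE : E ≤ F) : Valid G E := by
  obtain ⟨D, rfl⟩ := Multiset.le_iff_exists_add.1 hE
  exact (valid_add.1 h).1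

lemma Valid.nodup {F : Multiset (List V)} (hF : Valid G F) : F.Nodup := by
  induction F using Multiset.induction_on with
  | empty => simp
  | cons l F ih =>
    obtain ⟨⟨hl, -, -⟩, hF, hlF⟩ := valid_cons.1 hF
    obtain ⟨a, ha⟩ := List.exists_mem_of_ne_nil l hl
    exact Multiset.nodup_cons.2 ⟨fun hmem => hlF a ha (mem_verts.2 ⟨l, hmem, ha⟩), ih hF⟩

lemma Valid.eq_of_mem {F : Multiset (List V)} (hF : Valid G F) {l r : List V} (hl : l ∈ F)
    (hr : r ∈ F) {a : V} (hal : a ∈ l) (har : a ∈ r) : l = r := by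
  obtain ⟨F, rfl⟩ := Multiset.exists_cons_of_mem hl
  by_contra hne
  exact (valid_cons.1 hF).2.2 a hal
    (mem_verts.2 ⟨r, (Multiset.mem_cons.1 hr).resolve_left (Ne.symm hne), har⟩)

lemma Valid.card_ends {F : Multiset (List V)} (h : Valid G F) :
    (ends F).card = 2 * F.card := by
  have hcard : F.map (Multiset.card ∘ listEnds) = F.map fun _ => 2 :=
    Multiset.map_congr rfl fun l hl => card_listEnds (h.1 l hl).1
  rw [ends, Multiset.card_bind, hcard]
  simp [mul_comm]

lemma exists_familyAdj {F : Multiset (List V)} {q : V} (hq : q ∈ verts F) (h : [q] ∉ F) :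
    ∃ w, FamilyAdj F q w := by
  obtain ⟨l, hl, hql⟩ := mem_verts.1 hq
  obtain ⟨A, B, rfl⟩ := List.append_of_mem hql
  rcases List.eq_nil_or_concat A with rfl | ⟨A, w, rfl⟩
  · rcases B with _ | ⟨w, B⟩
    · exact absurd hl h
    · exact ⟨w, _, hl, Or.inl ([q, w].prefix_append B).isInfix⟩
  · refine ⟨w, _, hl, ?_⟩
    rw [listAdj_append]
    simp

lemma Valid.not_familyAdj_of_singleton {F : Multiset (List V)} (hF : Valid G F) {q : V}
    (h : [q] ∈ F) (w : V) : ¬ FamilyAdj F q w := by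
  rintro ⟨l, hl, hadj⟩
  obtain rfl := hF.eq_of_mem h hl (List.mem_singleton_self q) hadj.left_mem
  exact not_listAdj_singleton q q w hadj

lemma verts_mono {E F : Multiset (List V)} (h : E ≤ F) : verts E ≤ verts F := by
  obtain ⟨D, rfl⟩ := Multiset.le_iff_exists_add.1 h
  simp

lemma FamilyAdj.mono {E F : Multiset (List V)} (h : E ≤ F) {a b : V} (hab : FamilyAdj E a b) :
    FamilyAdj F a b :=
  hab.imp fun _ hl => ⟨Multiset.mem_of_le h hl.1, hl.2⟩

/-- `F'` carries all the data of `F` that survive reversing the orientation of members. -/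
structure Reorient (F F' : Multiset (List V)) : Prop where
  valid : ∀ G : SimpleGraph V, Valid G F → Valid G F'
  verts_eq : verts F' = verts F
  ends_eq : ends F' = ends F
  adj_iff : ∀ a b, FamilyAdj F' a b ↔ FamilyAdj F a b
  singleton_mem_iff : ∀ q, [q] ∈ F' ↔ [q] ∈ F

lemma Reorient.refl (F : Multiset (List V)) : Reorient F F :=
  ⟨fun _ h => h, rfl, rfl, fun _ _ => Iff.rfl, fun _ => Iff.rfl⟩

lemma Reorient.reverse (l : List V) (F : Multiset (List V)) :
    Reorient (l ::ₘ F) (l.reverse ::ₘ F) where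
  valid _ h := valid_reverse_cons.2 h
  verts_eq := by simp
  ends_eq := by simp [listEnds_reverse]
  adj_iff a b := by simp [listAdj_reverse]
  singleton_mem_iff q := by simp [eq_comm (a := [q]), List.reverse_eq_iff]

lemma Reorient.trans {F F' F'' : Multiset (List V)} (h : Reorient F F')
    (h' : Reorient F' F'') : Reorient F F'' :=
  ⟨fun G hG => h'.valid G (h.valid G hG), h'.verts_eq.trans h.verts_eq,
    h'.ends_eq.trans h.ends_eq, fun a b => (h'.adj_iff a b).trans (h.adj_iff a b),
    fun q => (h'.singleton_mem_iff q).trans (h.singleton_mem_iff q)⟩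

lemma exists_reorient_cons {F : Multiset (List V)} {x : V} (hx : x ∈ ends F) :
    ∃ l F₀, Reorient F ((x :: l) ::ₘ F₀) := by
  obtain ⟨l, hl, h⟩ := mem_ends.1 hx
  obtain ⟨F₀, rfl⟩ := Multiset.exists_cons_of_mem hl
  rcases mem_listEnds.1 h with h | h
  · obtain ⟨l, rfl⟩ := List.head?_eq_some_iff.1 h
    exact ⟨l, F₀, Reorient.refl _⟩
  · obtain ⟨l, rfl⟩ := List.getLast?_eq_some_iff.1 h
    exact ⟨l.reverse, F₀, by simpa using Reorient.reverse (l ++ [x]) F₀⟩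

lemma Mergeable.of_adj {A B : Multiset (List V)} (h : Valid G (A + B)) {x y : V}
    (hx : x ∈ ends A) (hy : y ∈ ends B) (hxy : G.Adj x y) : Mergeable G (A + B) x y := by
  obtain ⟨l, A₀, hA⟩ := exists_reorient_cons hx
  obtain ⟨r, B₀, hB⟩ := exists_reorient_cons hy
  have hcons : Valid G ((x :: l) ::ₘ (y :: r) ::ₘ (A₀ + B₀)) := by
    rw [← Multiset.add_cons, ← Multiset.cons_add, valid_add, hA.verts_eq, hB.verts_eq]
    exact ⟨hA.valid G (valid_add.1 h).1, hB.valid G (valid_add.1 h).2.1, (valid_add.1 h).2.2⟩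
  refine ⟨((x :: l).reverse ++ y :: r) ::ₘ (A₀ + B₀),
    (valid_reverse_cons.2 hcons).append (by simp) rfl hxy, ?_, ?_⟩
  · rw [verts_add, ← hA.verts_eq, ← hB.verts_eq]
    simp only [verts_cons, verts_add, ← Multiset.coe_add, Multiset.coe_reverse]
    abel
  · rw [ends_add, ends_cons, ← Multiset.cons_add, ← Multiset.cons_add,
      cons_cons_listEnds_append (by simp) rfl, ← hA.ends_eq, ← hB.ends_eq]
    simp only [ends_cons, ends_add, listEnds_reverse]
    abel

/-! ### Rotations -/

/-- `F'` arises from `F` by a rotation with pivot `q`, which replaces the end `x` by `w`. -/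
structure Exchange (G : SimpleGraph V) (F : Multiset (List V)) (x q w : V)
    (F' : Multiset (List V)) : Prop where
  valid : Valid G F'
  verts_eq : verts F' = verts F
  ends_eq : x ::ₘ ends F' = w ::ₘ ends F
  adj : FamilyAdj F q w
  stable : ∀ a, a ≠ x → a ≠ q → a ≠ w → ∀ b, FamilyAdj F' a b ↔ FamilyAdj F a b

lemma Exchange.of_reorient {F E F' : Multiset (List V)} {x q w : V} (h : Reorient F E)
    (hE : Exchange G E x q w F') : Exchange G F x q w F' where
  valid := hE.valid
  verts_eq := hE.verts_eq.trans h.verts_eq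
  ends_eq := by rw [hE.ends_eq, h.ends_eq]
  adj := (h.adj_iff _ _).1 hE.adj
  stable a hx hq hw b := (hE.stable a hx hq hw b).trans (h.adj_iff _ _)

lemma exchange_same_path {P B : List V} {F : Multiset (List V)} {x q w : V}
    (hF : Valid G ((P ++ q :: B) ::ₘ F)) (hx : P.head? = some x) (hw : P.getLast? = some w)
    (hxq : G.Adj x q) :
    Exchange G ((P ++ q :: B) ::ₘ F) x q w ((P.reverse ++ q :: B) ::ₘ F) where
  valid := by
    have hP : P ≠ [] := by rintro rfl; simp at hx
    have hcut := ((valid_append_cons hP (List.cons_ne_nil q B)).1 hF).1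
    exact (valid_reverse_cons.2 hcut).append (by simpa using hx) rfl hxq
  verts_eq := by simp [← Multiset.coe_add]
  ends_eq := by
    rw [← Multiset.cons_inj_right q, Multiset.cons_swap, Multiset.cons_swap q, ends_cons, ends_cons,
      ← Multiset.cons_add, ← Multiset.cons_add, ← Multiset.cons_add, ← Multiset.cons_add,
      cons_cons_listEnds_append (by simpa using hx) rfl, cons_cons_listEnds_append hw rfl,
      listEnds_reverse]
  adj := by
    rw [familyAdj_cons, listAdj_append]
    simp [hw]
  stable a _ _ _ b := by
    rw [familyAdj_cons, familyAdj_cons, listAdj_append, listAdj_append, listAdj_reverse]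
    simp only [List.getLast?_reverse, List.head?_cons, hx, hw, Option.some.injEq]
    grind

lemma exchange_other_path {P A B : List V} {F : Multiset (List V)} {x q w : V}
    (hF : Valid G (P ::ₘ (A ++ q :: B) ::ₘ F)) (hx : P.head? = some x)
    (hw : A.getLast? = some w) (hxq : G.Adj x q) :
    Exchange G (P ::ₘ (A ++ q :: B) ::ₘ F) x q w ((P.reverse ++ q :: B) ::ₘ A ::ₘ F) where
  valid := by
    have hA : A ≠ [] := by rintro rfl; simp at hw
    rw [Multiset.cons_swap] at hF
    have hcut := ((valid_append_cons hA (List.cons_ne_nil q B)).1 hF).1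
    rw [Multiset.cons_swap _ P, Multiset.cons_swap A, Multiset.cons_swap A] at hcut
    exact (valid_reverse_cons.2 hcut).append (by simpa using hx) rfl hxq
  verts_eq := by
    simp only [verts_cons, ← Multiset.coe_add, Multiset.coe_reverse]
    abel
  ends_eq := by
    have hnew := cons_cons_listEnds_append (P := P.reverse) (Q := q :: B) (by simpa using hx) rfl
    have hold := cons_cons_listEnds_append (Q := q :: B) hw rfl
    rw [← Multiset.cons_inj_right q]
    rw [listEnds_reverse] at hnew
    simp only [ends_cons]
    simp only [← Multiset.singleton_add] at hnew hold ⊢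
    calc _ = ({x} + ({q} + listEnds (P.reverse ++ q :: B))) + (listEnds A + ends F) := by abel
      _ = listEnds P + ({w} + ({q} + listEnds (A ++ q :: B))) + ends F := by rw [hnew, hold]; abel
      _ = _ := by abel
  adj := by
    rw [familyAdj_cons, familyAdj_cons, listAdj_append]
    simp [hw]
  stable a _ _ _ b := by
    simp only [familyAdj_cons, listAdj_append, listAdj_reverse, List.getLast?_reverse,
      List.head?_cons, hx, hw, Option.some.injEq]
    grind

lemma exists_exchange {F : Multiset (List V)} (hF : Valid G F) {x q : V} (hx : x ∈ ends F)
    (hq : q ∈ verts F) (hqF : [q] ∉ F) (hxq : G.Adj x q) : ∃ w F', Exchange G F x q w F' := by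
  obtain ⟨l, F₀, h⟩ := exists_reorient_cons hx
  by_cases hql : q ∈ x :: l
  · obtain ⟨P, B, hPB⟩ := List.append_of_mem ((List.mem_cons.1 hql).resolve_left hxq.ne')
    subst hPB
    exact ⟨_, _, .of_reorient h (exchange_same_path (P := x :: P) (h.valid G hF) rfl
      (List.getLast?_eq_some_getLast (List.cons_ne_nil _ _)) hxq)⟩
  · rw [← h.verts_eq, verts_cons, Multiset.mem_add, Multiset.mem_coe] at hq
    obtain ⟨R, hR, hqR⟩ := mem_verts.1 (hq.resolve_left hql)
    obtain ⟨F₁, rfl⟩ := Multiset.exists_cons_of_mem hR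
    obtain ⟨A, B, rfl⟩ := List.append_of_mem hqR
    rcases List.eq_nil_or_concat A with rfl | ⟨A, w, rfl⟩
    · rcases B with _ | ⟨w, B⟩
      · exact absurd ((h.singleton_mem_iff q).1 (by simp)) hqF
      have h' : Reorient F ((x :: l) ::ₘ ((w :: B).reverse ++ [q]) ::ₘ F₁) := by
        refine h.trans ?_
        rw [Multiset.cons_swap, Multiset.cons_swap (x :: l)]
        simpa using Reorient.reverse (q :: w :: B) ((x :: l) ::ₘ F₁)
      exact ⟨_, _, .of_reorient h' (exchange_other_path (h'.valid G hF) rfl (by simp; rfl) hxq)⟩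
    · exact ⟨_, _, .of_reorient h (exchange_other_path (h.valid G hF) rfl (by simp; rfl) hxq)⟩

/-- Rotations have moved the end `v` of `F₀` to `x`, resulting in the family `F`. -/
inductive RotatesTo (G : SimpleGraph V) (F₀ : Multiset (List V)) (v : V) :
    V → Multiset (List V) → Prop
  | refl : RotatesTo G F₀ v v F₀
  | step {x q w : V} {F₁ F₂ : Multiset (List V)} :
      RotatesTo G F₀ v x F₁ → Exchange G F₁ x q w F₂ → RotatesTo G F₀ v w F₂

/-- The vertices to which the end `v` of `F` can be moved by rotations. -/
def rotationEnds (G : SimpleGraph V) (F : Multiset (List V)) (v : V) : Set V :=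
  {x | ∃ F', RotatesTo G F v x F'}

lemma self_mem_rotationEnds (F : Multiset (List V)) (v : V) : v ∈ rotationEnds G F v := ⟨F, .refl⟩

lemma RotatesTo.verts_eq {F₀ F : Multiset (List V)} {v x : V} (h : RotatesTo G F₀ v x F) :
    verts F = verts F₀ := by
  induction h with
  | refl => rfl
  | step _ hE ih => rw [hE.verts_eq, ih]

lemma RotatesTo.valid {F₀ F : Multiset (List V)} {v x : V} (h : RotatesTo G F₀ v x F)
    (h₀ : Valid G F₀) : Valid G F := by
  cases h with
  | refl => exact h₀
  | step _ hE => exact hE.valid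

lemma RotatesTo.ends_eq {F₀ F : Multiset (List V)} {v x : V} (h : RotatesTo G F₀ v x F) :
    v ::ₘ ends F = x ::ₘ ends F₀ := by
  induction h with
  | refl => rfl
  | @step x q w F F' _ hE ih =>
    rw [← Multiset.cons_inj_right x, Multiset.cons_swap, hE.ends_eq, Multiset.cons_swap, ih,
      Multiset.cons_swap]

lemma RotatesTo.mem_ends {F₀ F : Multiset (List V)} {v x : V} (h : RotatesTo G F₀ v x F)
    (hv : v ∈ ends F₀) : x ∈ ends F := by
  obtain ⟨E, hE⟩ := Multiset.exists_cons_of_mem hv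
  have hends := h.ends_eq
  rw [hE, Multiset.cons_swap, Multiset.cons_inj_right] at hends
  exact hends ▸ Multiset.mem_cons_self _ _

lemma RotatesTo.card_eq {F₀ F : Multiset (List V)} {v x : V} (h : RotatesTo G F₀ v x F)
    (h₀ : Valid G F₀) : F.card = F₀.card := by
  have hcard := congrArg Multiset.card h.ends_eq
  rw [Multiset.card_cons, Multiset.card_cons, h₀.card_ends, (h.valid h₀).card_ends] at hcard
  omega

lemma mem_verts_of_mem_rotationEnds {F : Multiset (List V)} {v x : V} (hv : v ∈ ends F)
    (h : x ∈ rotationEnds G F v) : x ∈ verts F := by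
  obtain ⟨F', h⟩ := h
  exact h.verts_eq ▸ mem_verts_of_mem_ends (h.mem_ends hv)

lemma Exchange.add {F F' : Multiset (List V)} {x q w : V} (h : Exchange G F x q w F')
    {E : Multiset (List V)} (hE : Valid G (F + E)) : Exchange G (F + E) x q w (F' + E) where
  valid := by
    rw [valid_add] at hE ⊢
    rw [h.verts_eq]
    exact ⟨h.valid, hE.2⟩
  verts_eq := by simp [h.verts_eq]
  ends_eq := by
    rw [ends_add, ends_add, ← Multiset.cons_add, h.ends_eq, Multiset.cons_add]
  adj := (familyAdj_add _ _ _ _).2 (Or.inl h.adj)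
  stable a hx hq hw b := by rw [familyAdj_add, familyAdj_add, h.stable a hx hq hw]

lemma RotatesTo.valid_add {F₀ F E : Multiset (List V)} {v x : V} (h : RotatesTo G F₀ v x F)
    (hE : Valid G (F₀ + E)) : Valid G (F + E) := by
  rw [ExpanderHamilton.valid_add] at hE ⊢
  rw [h.verts_eq]
  exact ⟨h.valid hE.1, hE.2⟩

lemma RotatesTo.add {F₀ F E : Multiset (List V)} {v x : V} (h : RotatesTo G F₀ v x F)
    (hE : Valid G (F₀ + E)) : RotatesTo G (F₀ + E) v x (F + E) := by
  induction h with
  | refl => exact .refl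
  | step h hX ih => exact ih.step (hX.add (h.valid_add hE))

lemma rotationEnds_mono {E F : Multiset (List V)} (hF : Valid G F) (h : E ≤ F) (v : V) :
    rotationEnds G E v ⊆ rotationEnds G F v := by
  obtain ⟨D, rfl⟩ := Multiset.le_iff_exists_add.1 h
  rintro x ⟨F', hx⟩
  exact ⟨_, hx.add hF⟩

lemma RotatesTo.stable {F₀ F : Multiset (List V)} {v x q : V} (h : RotatesTo G F₀ v x F)
    (hq : q ∉ rotationEnds G F₀ v) (hn : ∀ w ∈ rotationEnds G F₀ v, ¬ FamilyAdj F₀ q w) (b : V) :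
    FamilyAdj F q b ↔ FamilyAdj F₀ q b := by
  induction h generalizing b with
  | refl => rfl
  | @step x p w F F' h hE ih =>
    have hw : w ∈ rotationEnds G F₀ v := ⟨_, h.step hE⟩
    have hx : x ∈ rotationEnds G F₀ v := ⟨_, h⟩
    rw [hE.stable q (by rintro rfl; exact hq hx) ?_ (by rintro rfl; exact hq hw), ih]
    rintro rfl
    exact hn w hw ((ih w).1 hE.adj)

lemma RotatesTo.mergeable_singleton {F₀ F : Multiset (List V)} {v x q : V}
    (h : RotatesTo G F₀ v x F) (h₀ : Valid G F₀) (hv : v ∈ ends F₀) (hq : [q] ∈ F)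
    (hxq : G.Adj x q) : Mergeable G F₀ v q := by
  obtain ⟨D, rfl⟩ := Multiset.exists_cons_of_mem hq
  rw [← Multiset.singleton_add, add_comm] at h
  have hxD : x ∈ ends D := by
    have hx := h.mem_ends hv
    rw [ends_add, ends_singleton, Multiset.mem_add] at hx
    exact hx.resolve_right fun hxq' => hxq.ne (by simpa [listEnds] using hxq')
  obtain ⟨C, hC, hCv, hCe⟩ := Mergeable.of_adj (h.valid h₀) hxD (by simp [listEnds]) hxq
  refine ⟨C, hC, hCv.trans h.verts_eq, (Multiset.cons_inj_right x).1 ?_⟩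
  rw [← h.ends_eq, ← hCe, Multiset.cons_swap]

/-- A rotation about `q` is impossible only if `q` is a one-vertex path, and it changes the path
neighbours of `q` only if one of them is a rotation end. -/
lemma adj_rotationEnds {F : Multiset (List V)} (hF : Valid G F) {v x q : V} (hv : v ∈ ends F)
    (hx : x ∈ rotationEnds G F v) (hq : q ∈ verts F) (hxq : G.Adj x q) :
    q ∈ rotationEnds G F v ∨ (∃ w ∈ rotationEnds G F v, FamilyAdj F q w) ∨
      ([q] ∈ F ∧ q ≠ v ∧ Mergeable G F v q) := by
  by_contra! ⟨hqR, hqN, hmerge⟩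
  obtain ⟨F', hF'⟩ := hx
  have hval := hF'.valid hF
  by_cases hsing : [q] ∈ F'
  · have hqF : [q] ∈ F := by
      by_contra h
      obtain ⟨w, hw⟩ := exists_familyAdj hq h
      exact hval.not_familyAdj_of_singleton hsing w ((hF'.stable hqR hqN w).2 hw)
    refine hmerge hqF ?_ (hF'.mergeable_singleton hF hv hsing hxq)
    rintro rfl
    exact hqR (self_mem_rotationEnds _ _)
  · obtain ⟨w, F'', hE⟩ :=
      exists_exchange hval (hF'.mem_ends hv) (hF'.verts_eq.symm ▸ hq) hsing hxq
    exact hqN w ⟨_, hF'.step hE⟩ ((hF'.stable hqR hqN w).1 hE.adj)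

lemma Mergeable.of_adj_rotationEnds {A B : Multiset (List V)} (h : Valid G (A + B)) {u v x y : V}
    (hv : v ∈ ends A) (hu : u ∈ ends B) (hx : x ∈ rotationEnds G A v)
    (hy : y ∈ rotationEnds G B u) (hxy : G.Adj x y) : Mergeable G (A + B) v u := by
  obtain ⟨A', hA⟩ := hx
  obtain ⟨B', hB⟩ := hy
  have h' : Valid G (A' + B') := by
    rw [add_comm]
    exact hB.valid_add (add_comm A' B ▸ hA.valid_add h)
  obtain ⟨C, hC, hCv, hCe⟩ := Mergeable.of_adj h' (hA.mem_ends hv) (hB.mem_ends hu) hxy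
  refine ⟨C, hC, by rw [hCv, verts_add, verts_add, hA.verts_eq, hB.verts_eq], ?_⟩
  refine (Multiset.cons_inj_right y).1 ((Multiset.cons_inj_right x).1 ?_)
  have hAe := hA.ends_eq
  have hBe := hB.ends_eq
  simp only [ends_add, ← Multiset.singleton_add] at hCe hAe hBe ⊢
  calc _ = {v} + ({u} + ({x} + ({y} + ends C))) := by abel
    _ = ({v} + ends A') + ({u} + ends B') := by rw [hCe]; abel
    _ = _ := by rw [hAe, hBe]; abel

end Families

/-! ### Neighbourhoods in joined graphs -/

section Expansion

variable {V : Type*} {G : SimpleGraph V}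

lemma exists_adj_of_isJoined {m : ℕ} (hJ : IsJoined G m) {A B : Finset V} (hAB : Disjoint A B)
    (hA : m ≤ A.card) (hB : m ≤ B.card) : ∃ a ∈ A, ∃ b ∈ B, G.Adj a b := by
  obtain ⟨A', hA', hcA⟩ := Finset.exists_subset_card_eq hA
  obtain ⟨B', hB', hcB⟩ := Finset.exists_subset_card_eq hB
  obtain ⟨a, ha, b, hb, h⟩ := hJ A' B' (Finset.disjoint_of_subset_left hA'
    (Finset.disjoint_of_subset_right hB' hAB)) hcA hcB
  exact ⟨a, hA' ha, b, hB' hb, h⟩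

lemma exists_card_le_two_of_familyAdj {F : Multiset (List V)} (hF : Valid G F) (w : V) :
    ∃ S : Finset V, S.card ≤ 2 ∧ ∀ q, FamilyAdj F q w → q ∈ S := by
  classical
  by_cases hw : w ∈ verts F
  · obtain ⟨l, hl, hwl⟩ := mem_verts.1 hw
    obtain ⟨F, rfl⟩ := Multiset.exists_cons_of_mem hl
    obtain ⟨A, B, rfl⟩ := List.append_of_mem hwl
    obtain ⟨⟨-, -, hnodup⟩, -, hdisj⟩ := valid_cons.1 hF
    obtain ⟨hwA, hwB⟩ : w ∉ A ∧ w ∉ B := by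
      rw [List.nodup_middle, List.nodup_cons, List.mem_append, not_or] at hnodup
      exact hnodup.1
    refine ⟨(A.getLast?.toList ++ B.head?.toList).toFinset, ?_, fun q hq => ?_⟩
    · refine (List.toFinset_card_le _).trans ?_
      cases A.getLast? <;> cases B.head? <;> simp
    · replace hq : ListAdj (A ++ ([w] ++ B)) q w := ((familyAdj_cons _ _ _ _).1 hq).resolve_right
        fun ⟨l, hl, h⟩ => hdisj w hwl (mem_verts.2 ⟨l, hl, h.right_mem⟩)
      rw [listAdj_append, listAdj_append] at hq
      have hA : ¬ ListAdj A q w := fun h => hwA h.right_mem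
      have hB : ¬ ListAdj B q w := fun h => hwB h.right_mem
      have hA' : A.getLast? ≠ some w := fun h => hwA (List.mem_of_mem_getLast? h)
      have hB' : B.head? ≠ some w := fun h => hwB (List.mem_of_mem_head? h)
      simpa [hA, hB, hA', hB', not_listAdj_singleton, or_comm] using hq
  · refine ⟨∅, by simp, ?_⟩
    rintro q ⟨l, hl, h⟩
    exact absurd (mem_verts.2 ⟨l, hl, h.right_mem⟩) hw

variable [Fintype V]

open scoped Classical in
/-- The vertices having a neighbour in `U`. Unlike `extNbhd`, this may contain vertices of `U`, and
is therefore monotone and additive in `U`. -/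
noncomputable def nbhd (G : SimpleGraph V) (U : Finset V) : Finset V :=
  Finset.univ.filter fun v => ∃ u ∈ U, G.Adj u v

@[simp] lemma mem_nbhd {U : Finset V} {v : V} : v ∈ nbhd G U ↔ ∃ u ∈ U, G.Adj u v := by
  simp [nbhd]

@[simp] lemma nbhd_empty : nbhd G ∅ = ∅ := by ext; simp

lemma nbhd_mono {U W : Finset V} (h : U ⊆ W) : nbhd G U ⊆ nbhd G W := fun v hv => by
  obtain ⟨u, hu, huv⟩ := mem_nbhd.1 hv
  exact mem_nbhd.2 ⟨u, h hu, huv⟩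

lemma nbhd_union [DecidableEq V] (U W : Finset V) : nbhd G (U ∪ W) = nbhd G U ∪ nbhd G W := by
  ext v
  simp only [mem_nbhd, Finset.mem_union, or_and_right, exists_or]

lemma card_sdiff_nbhd_lt [DecidableEq V] {m : ℕ} (hJ : IsJoined G m) {U : Finset V}
    (hU : m ≤ U.card) (Y : Finset V) : (Y \ (U ∪ nbhd G U)).card < m := by
  by_contra! h
  have hdisj : Disjoint U (Y \ (U ∪ nbhd G U)) :=
    (Finset.disjoint_sdiff (s := U ∪ nbhd G U)).mono_left Finset.subset_union_left
  obtain ⟨a, ha, b, hb, hab⟩ := exists_adj_of_isJoined hJ hdisj hU h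
  exact (Finset.mem_sdiff.1 hb).2 (Finset.mem_union_right _ (mem_nbhd.2 ⟨a, ha, hab⟩))

open scoped Classical in
/-- The set `X` together with the neighbours of its vertices along the paths of `F`. -/
noncomputable def near (F : Multiset (List V)) (X : Finset V) : Finset V :=
  Finset.univ.filter fun q => q ∈ X ∨ ∃ w ∈ X, FamilyAdj F q w

lemma mem_near {F : Multiset (List V)} {X : Finset V} {q : V} :
    q ∈ near F X ↔ q ∈ X ∨ ∃ w ∈ X, FamilyAdj F q w := by simp [near]

lemma subset_near (F : Multiset (List V)) (X : Finset V) : X ⊆ near F X :=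
  fun _ h => mem_near.2 (Or.inl h)

lemma near_mono {E F : Multiset (List V)} (hEF : E ≤ F) {X Y : Finset V} (hXY : X ⊆ Y) :
    near E X ⊆ near F Y := fun _ hq => mem_near.2 <|
  (mem_near.1 hq).imp (@hXY _) fun ⟨w, hw, h⟩ => ⟨w, hXY hw, h.mono hEF⟩

lemma near_union [DecidableEq V] (F : Multiset (List V)) (X Y : Finset V) :
    near F (X ∪ Y) = near F X ∪ near F Y := by
  ext q
  simp only [mem_near, Finset.mem_union, or_and_right, exists_or]
  exact or_or_or_comm

lemma card_near_le {F : Multiset (List V)} (hF : Valid G F) (X : Finset V) :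
    (near F X).card ≤ 3 * X.card := by
  classical
  choose S hS hS' using exists_card_le_two_of_familyAdj hF
  calc (near F X).card ≤ (X ∪ X.biUnion S).card := by
        refine Finset.card_le_card fun q hq => ?_
        rw [Finset.mem_union, Finset.mem_biUnion]
        exact (mem_near.1 hq).imp_right fun ⟨w, hw, h⟩ => ⟨w, hw, hS' w q h⟩
    _ ≤ X.card + X.card * 2 :=
        (Finset.card_union_le _ _).trans
          (Nat.add_le_add_left (Finset.card_biUnion_le_card_mul _ _ _ fun w _ => hS w) _)
    _ = 3 * X.card := by ring

lemma near_mono_of_notMem_near [DecidableEq V] {E F W : Multiset (List V)} (hF : Valid G F)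
    (hEF : E ≤ F) (hEW : E ≤ W) {X B : Finset V} {q : V} (hq : q ∈ verts E) (hqB : q ∉ near W B)
    (hqX : q ∈ near F X) : q ∈ near W (X \ B) := by
  obtain ⟨D, rfl⟩ := Multiset.le_iff_exists_add.1 hEF
  rw [mem_near] at hqB hqX ⊢
  push Not at hqB
  refine hqX.imp (fun h => Finset.mem_sdiff.2 ⟨h, hqB.1⟩) fun ⟨w, hw, h⟩ => ?_
  have hWadj : FamilyAdj W q w := by
    refine (((familyAdj_add _ _ _ _).1 h).resolve_right fun ⟨l, hl, h⟩ => ?_).mono hEW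
    exact (valid_add.1 hF).2.2 q hq (mem_verts.2 ⟨l, hl, h.left_mem⟩)
  exact ⟨w, Finset.mem_sdiff.2 ⟨hw, fun hwB => hqB.2 w hwB hWadj⟩, hWadj⟩

/-! ### Expansion outside a small set -/

/-- The neighbours of `Z` on the paths of `W` that are not near `B`. -/
noncomputable def freshNbhd [DecidableEq V] (G : SimpleGraph V) (W : Multiset (List V))
    (B Z : Finset V) : Finset V :=
  (nbhd G Z ∩ (verts W).toFinset) \ near W B

/-- Vertex sets of size at most `m` avoiding `B` expand by a factor `K` into the vertices of the
path family `W` that are not near `B`. -/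
def ExpandsOutside [DecidableEq V] (G : SimpleGraph V) (W : Multiset (List V)) (B : Finset V)
    (K m : ℕ) : Prop :=
  ∀ Z : Finset V, Disjoint Z B → Z.card ≤ m → K * Z.card ≤ (freshNbhd G W B Z).card

lemma mem_freshNbhd [DecidableEq V] {W : Multiset (List V)} {B Z : Finset V} {q : V} :
    q ∈ freshNbhd G W B Z ↔ (∃ z ∈ Z, G.Adj z q) ∧ q ∈ verts W ∧ q ∉ near W B := by
  simp [freshNbhd, and_assoc]

lemma freshNbhd_union_subset [DecidableEq V] (W : Multiset (List V)) (B Z : Finset V) :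
    freshNbhd G W (B ∪ Z) (B ∪ Z) ⊆ freshNbhd G W B B ∪ freshNbhd G W B Z := by
  intro q
  simp only [freshNbhd, nbhd_union, near_union, Finset.mem_union, Finset.mem_sdiff,
    Finset.mem_inter]
  tauto

lemma card_lt_of_card_freshNbhd_le [DecidableEq V] {m K : ℕ} (hJ : IsJoined G m)
    {W : Multiset (List V)} (hW : Valid G W) (hcard : (2 * K + 8) * m < (verts W).card)
    {B : Finset V} (hB : B.card ≤ 2 * m) (hfresh : (freshNbhd G W B B).card ≤ K * B.card) :
    B.card < m := by
  by_contra! hmB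
  set Y := (verts W).toFinset with hY
  have hYcard : Y.card = (verts W).card := Multiset.toFinset_card_of_nodup hW.2
  have hcover : Y ⊆ freshNbhd G W B B ∪ near W B ∪ (Y \ (B ∪ nbhd G B)) := by
    intro y hy
    have hsub := @subset_near V _ W B y
    simp only [freshNbhd, Finset.mem_union, Finset.mem_sdiff, Finset.mem_inter, ← hY]
    tauto
  have hle := (Finset.card_le_card hcover).trans ((Finset.card_union_le _ _).trans
    (Nat.add_le_add_right (Finset.card_union_le _ _) _))
  have hrest := card_sdiff_nbhd_lt hJ hmB Y
  have hnear := card_near_le hW B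
  have hK : K * B.card ≤ K * (2 * m) := Nat.mul_le_mul_left _ hB
  linarith

/-- The exceptional set is a largest set of size at most `2 m` that fails to expand. -/
lemma exists_expandsOutside [DecidableEq V] {m K : ℕ} (hJ : IsJoined G m)
    {W : Multiset (List V)} (hW : Valid G W) (hcard : (2 * K + 8) * m < (verts W).card) :
    ∃ B : Finset V, B.card < m ∧ ExpandsOutside G W B K m := by
  classical
  obtain ⟨B, hB, hmax⟩ := Finset.exists_max_image
    (Finset.univ.filter fun B => B.card ≤ 2 * m ∧ (freshNbhd G W B B).card ≤ K * B.card)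
    Finset.card ⟨∅, Finset.mem_filter.2 (by simp [freshNbhd])⟩
  obtain ⟨hB2m, hfresh⟩ := (Finset.mem_filter.1 hB).2
  have hBm := card_lt_of_card_freshNbhd_le hJ hW hcard hB2m hfresh
  refine ⟨B, hBm, fun Z hZB hZ => ?_⟩
  by_contra! hZfresh
  have hZpos : 0 < Z.card := Nat.pos_of_ne_zero fun h => by simp [h] at hZfresh
  have hunion : (B ∪ Z).card = B.card + Z.card := Finset.card_union_of_disjoint hZB.symm
  have hle := (Finset.card_le_card (freshNbhd_union_subset (G := G) W B Z)).trans
    (Finset.card_union_le _ _)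
  have hmaxZ := hmax (B ∪ Z) (Finset.mem_filter.2 ⟨Finset.mem_univ _, by omega, by
    rw [hunion, Nat.mul_add]; omega⟩)
  omega

/-! ### Many rotation ends -/

open scoped Classical in
/-- The set `rotationEnds G F v` as a `Finset`. -/
noncomputable def rotationFinset (G : SimpleGraph V) (F : Multiset (List V)) (v : V) : Finset V :=
  (rotationEnds G F v).toFinset

@[simp] lemma mem_rotationFinset {F : Multiset (List V)} {v x : V} :
    x ∈ rotationFinset G F v ↔ x ∈ rotationEnds G F v := by
  simp [rotationFinset]

lemma mem_near_rotationFinset {F : Multiset (List V)} (hF : Valid G F) {v x q : V}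
    (hv : v ∈ ends F) (hmerge : [q] ∈ F → q ≠ v → ¬ Mergeable G F v q)
    (hx : x ∈ rotationEnds G F v) (hq : q ∈ verts F) (hxq : G.Adj x q) :
    q ∈ near F (rotationFinset G F v) := by
  simp only [mem_near, mem_rotationFinset]
  rcases adj_rotationEnds hF hv hx hq hxq with h | h | ⟨h, hqv, hC⟩
  · exact Or.inl h
  · exact Or.inr h
  · exact absurd hC (hmerge h hqv)

lemma le_card_rotationFinset_or_mergeable [DecidableEq V] {F : Multiset (List V)} {Y : Finset V}
    {m : ℕ} (hF : Valid G F)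
    (hexp : ∀ U : Finset V, U.card ≤ m → 4 * U.card ≤ (nbhd G U ∩ Y).card)
    (hY : ∀ v ∈ Y, v ∈ verts F) {e : V} (he : e ∈ ends F) :
    m ≤ (rotationFinset G F e).card ∨ ∃ q, [q] ∈ F ∧ q ≠ e ∧ Mergeable G F e q := by
  by_contra! ⟨hlt, hmerge⟩
  have hsub : nbhd G (rotationFinset G F e) ∩ Y ⊆ near F (rotationFinset G F e) := by
    intro q hq
    obtain ⟨hqN, hqY⟩ := Finset.mem_inter.1 hq
    obtain ⟨x, hx, hxq⟩ := mem_nbhd.1 hqN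
    exact mem_near_rotationFinset hF he (hmerge q) (mem_rotationFinset.1 hx) (hY q hqY) hxq
  have hnear := (Finset.card_le_card hsub).trans (card_near_le hF _)
  have hpos : 0 < (rotationFinset G F e).card :=
    Finset.card_pos.2 ⟨e, mem_rotationFinset.2 (self_mem_rotationEnds _ _)⟩
  have := hexp _ hlt.le
  omega

/-- Once the rotation ends outside `B` outnumber the vertices of `W` missing from `F`, the
expansion of `W` makes them grow until there are at least `m` of them. -/
lemma le_card_rotationFinset_sdiff [DecidableEq V] {m : ℕ} {W E F : Multiset (List V)}
    {B : Finset V} (hB : ExpandsOutside G W B 5 m) (hF : Valid G F) (hW : Valid G W)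
    (hEF : E ≤ F) (hEW : E ≤ W) {v : V} (hv : v ∈ ends F) (hmerge : ∀ q, ¬ Mergeable G F v q)
    (hmissing : (verts W).card ≤ (verts E).card + (rotationFinset G F v \ B).card)
    (hpos : 0 < (rotationFinset G F v \ B).card) : m ≤ (rotationFinset G F v \ B).card := by
  by_contra! hlt
  set X := rotationFinset G F v \ B
  have hle := verts_mono hEW
  have hsub : freshNbhd G W B X ⊆ near W X ∪ ((verts W).toFinset \ (verts E).toFinset) := by
    intro q hq
    obtain ⟨⟨x, hx, hxq⟩, hqW, hqB⟩ := mem_freshNbhd.1 hq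
    simp only [Finset.mem_union, Finset.mem_sdiff, Multiset.mem_toFinset]
    refine or_iff_not_imp_right.2 fun h => ?_
    have hqE : q ∈ verts E := not_not.1 fun hqE => h ⟨hqW, hqE⟩
    exact near_mono_of_notMem_near hF hEF hEW hqE hqB <|
      mem_near_rotationFinset hF hv (fun _ _ => hmerge q)
        (mem_rotationFinset.1 (Finset.mem_sdiff.1 hx).1)
        (Multiset.mem_of_le (verts_mono hEF) hqE) hxq
  have hcard := (Finset.card_le_card hsub).trans (Finset.card_union_le _ _)
  rw [Finset.card_sdiff_of_subset (Multiset.toFinset_subset.2 (Multiset.subset_of_le hle)),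
    Multiset.toFinset_card_of_nodup hW.2,
    Multiset.toFinset_card_of_nodup (Multiset.nodup_of_le hle hW.2)] at hcard
  have hnear := card_near_le hW X
  have hexp := hB X Finset.sdiff_disjoint hlt.le
  omega

/-- The vertices outside `B` to which the end `v` of `Q` can be moved by rotations using at most
`j` members of `W`. -/
def fewRotationEnds (G : SimpleGraph V) (W : Multiset (List V)) (Q : List V) (B : Finset V) (v : V)
    (j : ℕ) : Set V :=
  {x | x ∉ B ∧ ∃ R ≤ W, R.card ≤ j ∧ x ∈ rotationEnds G (Q ::ₘ R) v}

lemma mem_near_fewRotationEnds {W : Multiset (List V)} {B : Finset V} {Q : List V}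
    (hF : Valid G (Q ::ₘ W)) (hlen : ∀ l ∈ W, 2 ≤ l.length) {v x q : V} (hv : v ∈ listEnds Q)
    {j : ℕ} (hx : x ∈ fewRotationEnds G W Q B v j) (hxq : G.Adj x q) (hqW : q ∈ verts W)
    (hqB : q ∉ near W B) {X : Finset V} (hX : fewRotationEnds G W Q B v (j + 1) ⊆ X) :
    q ∈ near W X := by
  classical
  obtain ⟨-, R, hRW, hRcard, hxR⟩ := hx
  obtain ⟨l, hl, hql⟩ := mem_verts.1 hqW
  obtain ⟨R', hRR', hR'W, hlR', hR'card⟩ :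
      ∃ R', R ≤ R' ∧ R' ≤ W ∧ l ∈ R' ∧ R'.card ≤ j + 1 := by
    by_cases h : l ∈ R
    · exact ⟨R, le_rfl, hRW, h, by omega⟩
    · exact ⟨l ::ₘ R, Multiset.le_cons_self _ _, (Multiset.cons_le_of_notMem h).2 ⟨hl, hRW⟩,
        Multiset.mem_cons_self _ _, by rw [Multiset.card_cons]; omega⟩
  have hvalid : Valid G (Q ::ₘ R') := hF.mono ((Multiset.cons_le_cons_iff _).2 hR'W)
  have hqR' : q ∈ verts R' := mem_verts.2 ⟨l, hlR', hql⟩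
  have hsing : [q] ∉ Q ::ₘ R' := by
    rw [Multiset.mem_cons, not_or]
    refine ⟨?_, fun h => by simpa using hlen _ (Multiset.mem_of_le hR'W h)⟩
    rintro rfl
    exact (valid_cons.1 hvalid).2.2 q (List.mem_singleton_self q) hqR'
  have hnear := mem_near_rotationFinset hvalid (by simp [hv]) (fun h => absurd h hsing)
    (rotationEnds_mono hvalid ((Multiset.cons_le_cons_iff _).2 hRR') v hxR) (by simp [hqR']) hxq
  refine near_mono le_rfl (fun y hy => hX ?_) <|
    near_mono_of_notMem_near hvalid (Multiset.le_cons_self _ _) hR'W hqR' hqB hnear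
  rw [Finset.mem_sdiff, mem_rotationFinset] at hy
  exact ⟨hy.2, R', hR'W, hR'card, hy.1⟩

lemma exists_le_card_fewRotationEnds [DecidableEq V] {m : ℕ} {W : Multiset (List V)}
    {B : Finset V} (hB : ExpandsOutside G W B 6 m) {Q : List V} (hF : Valid G (Q ::ₘ W))
    (hlen : ∀ l ∈ W, 2 ≤ l.length) {v : V} (hv : v ∈ listEnds Q) (hvB : v ∉ B) (j : ℕ) :
    ∃ X : Finset V, min m (2 ^ j) ≤ X.card ∧ ↑X ⊆ fewRotationEnds G W Q B v j := by
  classical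
  induction j with
  | zero =>
    refine ⟨{v}, by simp, ?_⟩
    rw [Finset.coe_singleton, Set.singleton_subset_iff]
    exact ⟨hvB, 0, Multiset.zero_le _, by simp, self_mem_rotationEnds _ _⟩
  | succ j ih =>
    obtain ⟨X, hXcard, hX⟩ := ih
    obtain ⟨Z, hZX, hZcard⟩ := Finset.exists_subset_card_eq hXcard
    refine ⟨(fewRotationEnds G W Q B v (j + 1)).toFinset, ?_, by simp⟩
    set X' := (fewRotationEnds G W Q B v (j + 1)).toFinset
    have hexp := hB Z (Finset.disjoint_left.2 fun z hz => (hX (hZX hz)).1)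
      (hZcard ▸ min_le_left _ _)
    have hsub : freshNbhd G W B Z ⊆ near W X' := by
      intro q hq
      obtain ⟨⟨x, hx, hxq⟩, hqW, hqB⟩ := mem_freshNbhd.1 hq
      exact mem_near_fewRotationEnds hF hlen hv (hX (hZX hx)) hxq hqW hqB (by simp [X'])
    have hcard := (Finset.card_le_card hsub).trans
      (card_near_le (hF.mono (Multiset.le_cons_self _ _)) X')
    rw [pow_succ]
    omega

end Expansion

/-! ### Path families of minimal potential -/

section Minimal

variable {V : Type*} {G : SimpleGraph V}

lemma exists_subset_sum_between {ι : Type*} {S : Finset ι} {f : ι → ℕ} {M a : ℕ}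
    (hM : ∀ i ∈ S, f i ≤ M) (ha : a ≤ ∑ i ∈ S, f i) :
    ∃ T ⊆ S, a ≤ ∑ i ∈ T, f i ∧ ∑ i ∈ T, f i ≤ a + M := by
  classical
  induction S using Finset.induction_on with
  | empty => exact ⟨∅, subset_rfl, ha, by simp⟩
  | insert i S hi ih =>
    by_cases h : a ≤ ∑ i ∈ S, f i
    · obtain ⟨T, hT, hlow, hupp⟩ := ih (fun i hi => hM i (Finset.mem_insert_of_mem hi)) h
      exact ⟨T, hT.trans (Finset.subset_insert _ _), hlow, hupp⟩
    · refine ⟨_, subset_rfl, ha, ?_⟩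
      have := hM i (Finset.mem_insert_self _ _)
      rw [Finset.sum_insert hi]
      omega

lemma card_verts (F : Multiset (List V)) : (verts F).card = (F.map List.length).sum := by
  simp [verts, Multiset.card_bind, Function.comp_def]

lemma length_le_card_verts {F : Multiset (List V)} {l : List V} (hl : l ∈ F) :
    l.length ≤ (verts F).card := by
  obtain ⟨F, rfl⟩ := Multiset.exists_cons_of_mem hl
  simp

lemma Valid.card_le_card_verts {F : Multiset (List V)} (hF : Valid G F) :
    F.card ≤ (verts F).card := by
  rw [card_verts, ← Multiset.card_map List.length, ← mul_one (Multiset.card _), ← smul_eq_mul]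
  refine Multiset.card_nsmul_le_sum fun n hn => ?_
  obtain ⟨l, hl, rfl⟩ := Multiset.mem_map.1 hn
  exact List.length_pos_iff.2 (hF.1 l hl).1

lemma exists_append_cons_or_reverse {R : List V} {q : V} (hq : q ∈ R) (hR : 2 ≤ R.length) :
    ∃ A B, (R = A ++ q :: B ∨ R.reverse = A ++ q :: B) ∧ A ≠ [] ∧
      2 * (B.length + 1) ≤ R.length + 1 := by
  obtain ⟨A, B, rfl⟩ := List.append_of_mem hq
  simp only [List.length_append, List.length_cons] at hR ⊢
  by_cases h : B.length ≤ A.length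
  · exact ⟨A, B, Or.inl rfl, List.length_pos_iff.1 (by omega), by omega⟩
  · exact ⟨B.reverse, A.reverse, Or.inr (by simp), by simpa using List.length_pos_iff.1 (by omega),
      by simp only [List.length_reverse]; omega⟩

/-- Rotate to `x`, then move the shorter part of `R` beyond `q` over to the path ending in `x`. -/
lemma exists_recut {E : Multiset (List V)} {R : List V} {v x q : V} (hR : Valid G (R ::ₘ E))
    (hv : v ∈ ends E) (hx : x ∈ rotationEnds G E v) (hq : q ∈ R) (hxq : G.Adj x q)
    (hlen : 4 * (verts E).card < R.length) :
    ∃ C, Valid G C ∧ verts C = verts (R ::ₘ E) ∧ C.card = E.card + 1 ∧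
      ∀ l ∈ C, l.length < R.length := by
  obtain ⟨E', hE'⟩ := hx
  have hE := (valid_cons.1 hR).2.1
  obtain ⟨l, E₀, hre⟩ := exists_reorient_cons (hE'.mem_ends hv)
  have hE₀ : Valid G ((x :: l) ::ₘ E₀) := hre.valid G (hE'.valid hE)
  have hvE₀ : verts ((x :: l) ::ₘ E₀) = verts E := hre.verts_eq.trans hE'.verts_eq
  have hcard : ((x :: l) ::ₘ E₀).card = E.card := by
    have h := hE₀.card_ends
    rw [hre.ends_eq, (hE'.valid hE).card_ends, hE'.card_eq hE] at h
    omega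
  have hsize : (x :: l).length + (verts E₀).card = (verts E).card := by
    rw [← hvE₀, verts_cons, Multiset.card_add, Multiset.coe_card]
  rw [Multiset.card_cons] at hcard
  rw [List.length_cons] at hsize
  obtain ⟨A, B, hAB, hA, hB⟩ := exists_append_cons_or_reverse hq (by omega)
  have hperm : (A ++ q :: B : List V).Perm R := by
    rcases hAB with h | h <;> rw [← h]
    exact R.reverse_perm
  have hsplit : Valid G ((x :: l) ::ₘ (A ++ q :: B) ::ₘ E₀) := by
    have h : Valid G (R ::ₘ (x :: l) ::ₘ E₀) :=
      valid_cons.2 ⟨(valid_cons.1 hR).1, hE₀, hvE₀ ▸ (valid_cons.1 hR).2.2⟩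
    rw [Multiset.cons_swap]
    rcases hAB with hAB | hAB <;> rw [← hAB]
    · exact h
    · exact valid_reverse_cons.2 h
  have hX := exchange_other_path hsplit rfl (List.getLast?_eq_some_getLast hA) hxq
  refine ⟨_, hX.valid, ?_, by simp [← hcard], ?_⟩
  · rw [hX.verts_eq, verts_cons R, ← hvE₀, verts_cons, verts_cons, verts_cons,
      Multiset.coe_eq_coe.2 hperm]
    abel
  · have hRlen := hperm.length_eq
    rw [List.length_append, List.length_cons] at hRlen
    simp only [Multiset.forall_mem_cons, List.length_append, List.length_reverse, List.length_cons]
    refine ⟨by omega, by omega, fun r hr => ?_⟩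
    have := length_le_card_verts hr
    omega

/-- The potential minimised among all families with the fewest paths. The base exceeds the number
`N` of paths, so that minimisation shortens the longest paths first. -/
def potential (N : ℕ) (F : Multiset (List V)) : ℕ := (F.map fun l => (N + 1) ^ l.length).sum

lemma potential_add (N : ℕ) (E F : Multiset (List V)) :
    potential N (E + F) = potential N E + potential N F := by
  simp [potential]

lemma potential_cons (N : ℕ) (l : List V) (F : Multiset (List V)) :
    potential N (l ::ₘ F) = (N + 1) ^ l.length + potential N F := by
  simp [potential]

lemma potential_lt_pow {N k : ℕ} {F : Multiset (List V)} (hF : ∀ l ∈ F, l.length < k)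
    (hcard : F.card ≤ N) : potential N F < (N + 1) ^ k := by
  rcases k with _ | k
  · rw [Multiset.eq_zero_of_forall_notMem fun l hl => Nat.not_lt_zero _ (hF l hl)]
    simp [potential]
  calc potential N F ≤ F.card • (N + 1) ^ k := by
        rw [potential, ← Multiset.card_map (fun l : List V => (N + 1) ^ l.length)]
        refine Multiset.sum_le_card_nsmul _ _ fun y hy => ?_
        obtain ⟨l, hl, rfl⟩ := Multiset.mem_map.1 hy
        exact Nat.pow_le_pow_right N.succ_pos (Nat.lt_succ_iff.1 (hF l hl))
    _ < (N + 1) * (N + 1) ^ k :=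
        Nat.mul_lt_mul_of_pos_right (Nat.lt_succ_of_le hcard) (by positivity)
    _ = (N + 1) ^ (k + 1) := (pow_succ' _ _).symm

lemma length_le_of_potential_min {F E : Multiset (List V)} {N : ℕ} (hF : Valid G F)
    (hN : F.card ≤ N)
    (hmin : ∀ C, Valid G C → verts C = verts F → C.card = F.card → potential N F ≤ potential N C)
    {R : List V} (hRE : R ::ₘ E ≤ F) {v x q : V} (hv : v ∈ ends E)
    (hx : x ∈ rotationEnds G E v) (hq : q ∈ R) (hxq : G.Adj x q) :
    R.length ≤ 4 * (verts E).card := by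
  by_contra! hlen
  obtain ⟨C, hC, hCv, hCc, hCl⟩ := exists_recut (hF.mono hRE) hv hx hq hxq hlen
  obtain ⟨D, rfl⟩ := Multiset.le_iff_exists_add.1 hRE
  rw [Multiset.card_add, Multiset.card_cons] at hN
  have hle := hmin (C + D) (by rw [valid_add, hCv]; exact ⟨hC, (valid_add.1 hF).2⟩)
    (by rw [verts_add, verts_add, hCv])
    (by rw [Multiset.card_add, Multiset.card_add, hCc, Multiset.card_cons])
  have hlt : potential N C < (N + 1) ^ R.length := potential_lt_pow hCl (by omega)
  rw [potential_add, potential_add, potential_cons] at hle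
  omega

lemma exists_valid_verts_eq (G : SimpleGraph V) (W : Finset V) :
    ∃ F, Valid G F ∧ verts F = W.val := by
  have hverts : verts (W.val.map fun v => [v]) = W.val := by
    simpa [verts, Multiset.bind_map] using Multiset.bind_singleton W.val id
  refine ⟨_, ⟨?_, by rw [hverts]; exact W.nodup⟩, hverts⟩
  simp

/-- The number of vertices covered by a set of pairwise disjoint paths. -/
def mass (S : Finset (List V)) : ℕ := ∑ l ∈ S, l.length

/-- `F` cannot be improved locally: no subfamily can be covered by fewer paths, and a path that is
adjacent to a rotation end of a subfamily `S` is not much longer than `S`. -/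
structure IsMinimal (G : SimpleGraph V) (F : Finset (List V)) : Prop where
  valid : Valid G F.val
  card_le : ∀ S ⊆ F, ∀ C, Valid G C → verts C = verts S.val → S.card ≤ C.card
  length_le : ∀ S ⊆ F, ∀ R ∈ F, R ∉ S → ∀ v ∈ ends S.val, ∀ x ∈ rotationEnds G S.val v, ∀ q ∈ R,
    G.Adj x q → R.length ≤ 4 * mass S

lemma mass_eq_card_verts (S : Finset (List V)) : mass S = (verts S.val).card :=
  (card_verts S.val).symm

lemma exists_isMinimal (G : SimpleGraph V) (W : Finset V) :
    ∃ F, IsMinimal G F ∧ verts F.val = W.val := by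
  obtain ⟨F, ⟨hF, hFW⟩, hmin⟩ := exists_minimalFor_of_wellFoundedLT
    (fun F => Valid G F ∧ verts F = W.val)
    (fun F => toLex (F.card, potential W.card F)) (exists_valid_verts_eq G W)
  replace hmin C (hC : Valid G C) (hCW : verts C = W.val) :
      F.card < C.card ∨ F.card = C.card ∧ potential W.card F ≤ potential W.card C :=
    Prod.Lex.toLex_le_toLex.1 ((le_total _ _).elim id (hmin ⟨hC, hCW⟩))
  lift F to Finset (List V) using hF.nodup
  refine ⟨F, ⟨hF, fun S hS C hC hCS => ?_, fun S hS R hR hRS v hv x hx q hq hxq => ?_⟩, hFW⟩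
  · obtain ⟨D, hD⟩ := Multiset.le_iff_exists_add.1 (Finset.val_le_iff.2 hS)
    have hle := hmin (C + D) (by rw [hD] at hF; rw [valid_add, hCS]; exact ⟨hC, (valid_add.1 hF).2⟩)
      (by rw [verts_add, hCS, ← verts_add, ← hD, hFW])
    rw [hD, Multiset.card_add, Multiset.card_add, Finset.card_val] at hle
    omega
  · rw [mass_eq_card_verts]
    refine length_le_of_potential_min hF (N := W.card)
      (hF.card_le_card_verts.trans_eq (by rw [hFW, Finset.card_val])) (fun C hC hCF hcard => ?_)
      ((Multiset.cons_le_of_notMem hRS).2 ⟨hR, Finset.val_le_iff.2 hS⟩) hv hx hq hxq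
    exact ((hmin C hC (hCF.trans hFW)).resolve_left hcard.not_gt).2

lemma mass_mono {S T : Finset (List V)} (h : S ⊆ T) : mass S ≤ mass T :=
  Finset.sum_le_sum_of_subset h

lemma length_le_mass {l : List V} {S : Finset (List V)} (h : l ∈ S) : l.length ≤ mass S :=
  Finset.single_le_sum (f := List.length) (fun _ _ => Nat.zero_le _) h

lemma mass_union_le [DecidableEq V] (S T : Finset (List V)) : mass (S ∪ T) ≤ mass S + mass T := by
  rw [mass, mass, mass, ← Finset.sum_union_inter]
  exact Nat.le_add_right _ _

lemma mass_insert_le [DecidableEq V] (l : List V) (S : Finset (List V)) :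
    mass (insert l S) ≤ l.length + mass S := by
  simpa [mass] using mass_union_le {l} S

lemma mass_le_mass_sdiff_add [DecidableEq V] (S T : Finset (List V)) :
    mass S ≤ mass (S \ T) + mass T := by
  calc mass S ≤ mass (S \ T ∪ T) := mass_mono (by simp)
    _ = mass (S \ T) + mass T := Finset.sum_union Finset.sdiff_disjoint

lemma Valid.card_toFinset_verts [DecidableEq V] {S : Finset (List V)} (hS : Valid G S.val) :
    (verts S.val).toFinset.card = mass S := by
  rw [mass_eq_card_verts, Multiset.toFinset_card_of_nodup hS.2]

lemma toFinset_verts_subset [DecidableEq V] (F F' : Finset (List V)) :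
    (verts F.val).toFinset ⊆ (verts F'.val).toFinset ∪ (verts (F \ F').val).toFinset := by
  intro a ha
  simp only [Multiset.mem_toFinset, Finset.mem_union, mem_verts] at ha ⊢
  obtain ⟨l, hl, hal⟩ := ha
  by_cases h : l ∈ F'
  · exact Or.inl ⟨l, h, hal⟩
  · exact Or.inr ⟨l, Finset.mem_sdiff.2 ⟨hl, h⟩, hal⟩

lemma ends_mono {E F : Multiset (List V)} (h : E ≤ F) : ends E ≤ ends F := by
  obtain ⟨D, rfl⟩ := Multiset.le_iff_exists_add.1 h
  simp

lemma mem_ends_of_head? {S : Multiset (List V)} {Q : List V} {v : V} (hQ : Q ∈ S)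
    (hv : Q.head? = some v) : v ∈ ends S :=
  mem_ends.2 ⟨Q, hQ, mem_listEnds.2 (Or.inl hv)⟩

lemma mem_ends_of_subset {S T : Finset (List V)} (h : S ⊆ T) {v : V} (hv : v ∈ ends S.val) :
    v ∈ ends T.val :=
  Multiset.mem_of_le (ends_mono (Finset.val_le_iff.2 h)) hv

namespace IsMinimal

variable {F : Finset (List V)}

lemma valid_of_subset (hF : IsMinimal G F) {S : Finset (List V)} (hS : S ⊆ F) :
    Valid G S.val :=
  hF.valid.mono (Finset.val_le_iff.2 hS)

lemma not_mergeable (hF : IsMinimal G F) {S : Finset (List V)} (hS : S ⊆ F) (v q : V) :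
    ¬ Mergeable G S.val v q := by
  rintro ⟨C, hC, hCv, hCe⟩
  have hle := hF.card_le S hS C hC hCv
  have hcard := congrArg Multiset.card hCe
  rw [(hF.valid_of_subset hS).card_ends, Multiset.card_cons, Multiset.card_cons,
    hC.card_ends, Finset.card_val] at hcard
  omega

end IsMinimal

/-! ### Reachable vertices -/

variable [Fintype V]

open scoped Classical in
/-- The vertices that rotations can reach from the heads of paths of length at most `ℓ` inside
subfamilies of `F` of mass at most `r`. -/
noncomputable def reach (G : SimpleGraph V) (F : Finset (List V)) (ℓ r : ℕ) : Finset V :=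
  Finset.univ.filter fun x => ∃ S ⊆ F, mass S ≤ r ∧ ∃ Q ∈ S, Q.length ≤ ℓ ∧
    ∃ v, Q.head? = some v ∧ x ∈ rotationEnds G S.val v

lemma mem_reach {F : Finset (List V)} {ℓ r : ℕ} {x : V} :
    x ∈ reach G F ℓ r ↔ ∃ S ⊆ F, mass S ≤ r ∧ ∃ Q ∈ S, Q.length ≤ ℓ ∧
      ∃ v, Q.head? = some v ∧ x ∈ rotationEnds G S.val v := by
  simp [reach]

lemma exists_of_mem_reach {F : Finset (List V)} {ℓ r : ℕ} {x : V} (hx : x ∈ reach G F ℓ r) :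
    ∃ S ⊆ F, mass S ≤ r ∧ ∃ v ∈ ends S.val, x ∈ rotationEnds G S.val v := by
  obtain ⟨S, hS, hmass, Q, hQ, -, v, hv, hxv⟩ := mem_reach.1 hx
  exact ⟨S, hS, hmass, v, mem_ends_of_head? hQ hv, hxv⟩

lemma reach_mono (F : Finset (List V)) (ℓ : ℕ) {r s : ℕ} (h : r ≤ s) :
    reach G F ℓ r ⊆ reach G F ℓ s := by
  intro x hx
  rw [mem_reach] at hx ⊢
  exact hx.imp fun S hS => ⟨hS.1, hS.2.1.trans h, hS.2.2⟩

lemma rotationFinset_mono {E F : Multiset (List V)} (hF : Valid G F) (h : E ≤ F) (v : V) :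
    rotationFinset G E v ⊆ rotationFinset G F v := fun _ hx =>
  mem_rotationFinset.2 (rotationEnds_mono hF h v (mem_rotationFinset.1 hx))

lemma card_short_le_card_reach {F : Finset (List V)} (hF : Valid G F.val) (ℓ : ℕ) :
    (F.filter fun l => l.length ≤ ℓ).card ≤ (reach G F ℓ ℓ).card := by
  rw [← Finset.card_map (Function.Embedding.some (α := V))]
  refine Finset.card_le_card_of_injOn List.head? (fun l hl => ?_) fun l hl r hr h => ?_
  · obtain ⟨hl, hlen⟩ := Finset.mem_filter.1 hl
    obtain ⟨a, r, rfl⟩ := List.exists_cons_of_ne_nil (hF.1 l hl).1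
    simp only [List.head?_cons, Finset.coe_map, Set.mem_image, Function.Embedding.some_apply,
      Option.some.injEq, exists_eq_right, Finset.mem_coe]
    exact mem_reach.2 ⟨{a :: r}, by simpa using hl, by simpa [mass] using hlen, _,
      Finset.mem_singleton_self _, hlen, a, rfl, self_mem_rotationEnds _ _⟩
  · have hl := (Finset.mem_filter.1 hl).1
    have hr := (Finset.mem_filter.1 hr).1
    obtain ⟨a, l', rfl⟩ := List.exists_cons_of_ne_nil (hF.1 l hl).1
    exact hF.eq_of_mem hl hr List.mem_cons_self (List.mem_of_mem_head? h.symm)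

namespace IsMinimal

variable {F : Finset (List V)}

lemma nbhd_reach_subset [DecidableEq V] {F' : Finset (List V)} (hF : IsMinimal G F) (hF' : F' ⊆ F)
    (ℓ r : ℕ) : nbhd G (reach G F' ℓ r) ∩ (verts F'.val).toFinset ⊆
      near F.val (reach G F' ℓ (8 * r)) := by
  intro q hq
  rw [Finset.mem_inter, Multiset.mem_toFinset, mem_nbhd] at hq
  obtain ⟨⟨x, hx, hxq⟩, hq⟩ := hq
  obtain ⟨S, hS, hmass, Q, hQS, hQ, v, hv, hxv⟩ := mem_reach.1 hx
  obtain ⟨R, hR, hqR⟩ := mem_verts.1 hq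
  have hmass' : mass (insert R S) ≤ 8 * r := by
    by_cases h : R ∈ S
    · rw [Finset.insert_eq_of_mem h]; omega
    · have hlen := hF.length_le S (hS.trans hF') R (hF' hR) h v (mem_ends_of_head? hQS hv) x hxv q
        hqR hxq
      have := mass_insert_le R S
      omega
  have hsub : insert R S ⊆ F' := Finset.insert_subset hR hS
  have hvalid := hF.valid_of_subset (hsub.trans hF')
  refine near_mono (Finset.val_le_iff.2 (hsub.trans hF')) (fun w hw => ?_)
    (mem_near_rotationFinset hvalid (mem_ends_of_head? (Finset.mem_insert_of_mem hQS) hv)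
      (fun _ _ => hF.not_mergeable (hsub.trans hF') v q)
      (rotationEnds_mono hvalid (Finset.val_le_iff.2 (Finset.subset_insert R S)) v hxv)
      (mem_verts.2 ⟨R, Finset.mem_insert_self R S, hqR⟩) hxq)
  exact mem_reach.2 ⟨_, hsub, hmass', Q, Finset.mem_insert_of_mem hQS, hQ, v, hv,
    mem_rotationFinset.1 hw⟩

/-- One round of rotations multiplies the reachable set by `a`, at the cost of a factor `8` in
the mass used; the paths outside `F'` do not matter once the reachable set outweighs them. -/
lemma mul_card_reach_le [DecidableEq V] {F' : Finset (List V)} (hF : IsMinimal G F) (hF' : F' ⊆ F)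
    {a ℓ r : ℕ}
    (hexp : (3 * a + 1) * (reach G F' ℓ r).card ≤
      (nbhd G (reach G F' ℓ r) ∩ (verts F.val).toFinset).card)
    (hmass : mass (F \ F') ≤ (reach G F' ℓ r).card) :
    a * (reach G F' ℓ r).card ≤ (reach G F' ℓ (8 * r)).card := by
  set X := reach G F' ℓ r
  set X' := reach G F' ℓ (8 * r)
  have hsub : nbhd G X ∩ (verts F.val).toFinset ⊆
      near F.val X' ∪ (verts (F \ F').val).toFinset := by
    intro q hq
    rw [Finset.mem_inter] at hq
    exact Finset.mem_union.2 <| (Finset.mem_union.1 (toFinset_verts_subset F F' hq.2)).imp_left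
      fun h => hF.nbhd_reach_subset hF' ℓ r (Finset.mem_inter.2 ⟨hq.1, h⟩)
  have hcard := (Finset.card_le_card hsub).trans (Finset.card_union_le _ _)
  rw [(hF.valid_of_subset Finset.sdiff_subset).card_toFinset_verts] at hcard
  have hnear := card_near_le hF.valid X'
  linarith

lemma le_card_reach_pow [DecidableEq V] {F' : Finset (List V)} (hF : IsMinimal G F) (hF' : F' ⊆ F)
    {m a ℓ D : ℕ}
    (hexp : ∀ U : Finset V, U.card ≤ m →
      (3 * a + 1) * U.card ≤ (nbhd G U ∩ (verts F.val).toFinset).card)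
    (hmass : mass (F \ F') ≤ D) (hD : 1 ≤ D) (hreach : D ≤ (reach G F' ℓ ℓ).card) (t : ℕ) :
    m ≤ (reach G F' ℓ (8 ^ t * ℓ)).card ∨
      D ≤ (reach G F' ℓ (8 ^ t * ℓ)).card ∧ a ^ t ≤ (reach G F' ℓ (8 ^ t * ℓ)).card := by
  induction t with
  | zero =>
    right
    simp only [pow_zero, one_mul]
    exact ⟨hreach, hD.trans hreach⟩
  | succ t ih =>
    have hr : 8 ^ (t + 1) * ℓ = 8 * (8 ^ t * ℓ) := by ring
    rw [hr]
    have hmono := Finset.card_le_card (reach_mono (G := G) F' ℓ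
      (Nat.le_mul_of_pos_left (8 ^ t * ℓ) (by norm_num : 0 < 8)))
    by_cases hm : m ≤ (reach G F' ℓ (8 ^ t * ℓ)).card
    · exact Or.inl (hm.trans hmono)
    obtain ⟨hDt, hat⟩ := ih.resolve_left hm
    refine Or.inr ⟨hDt.trans hmono, ?_⟩
    rw [pow_succ']
    exact (Nat.mul_le_mul_left a hat).trans
      (hF.mul_card_reach_le hF' (hexp _ (not_le.1 hm).le) (hmass.trans hDt))

lemma le_card_reach [DecidableEq V] {F' : Finset (List V)} (hF : IsMinimal G F) (hF' : F' ⊆ F)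
    {m a t ℓ r D : ℕ}
    (hexp : ∀ U : Finset V, U.card ≤ m →
      (3 * a + 1) * U.card ≤ (nbhd G U ∩ (verts F.val).toFinset).card)
    (hat : m ≤ a ^ t) (hr : 8 ^ t * ℓ ≤ r) (hmass : mass (F \ F') ≤ D) (hD : 1 ≤ D)
    (hshort : D ≤ (F'.filter fun l => l.length ≤ ℓ).card) : m ≤ (reach G F' ℓ r).card := by
  have hreach := hshort.trans (card_short_le_card_reach (hF.valid_of_subset hF') ℓ)
  exact ((hF.le_card_reach_pow hF' hexp hmass hD hreach t).elim id fun h => hat.trans h.2).trans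
    (Finset.card_le_card (reach_mono F' ℓ hr))

lemma length_le_of_mem_reach (hF : IsMinimal G F) {ℓ r : ℕ} {R : List V} {q : V} (hR : R ∈ F)
    (hqR : q ∈ R) (hq : q ∈ reach G F ℓ r) : R.length ≤ r := by
  obtain ⟨S, hS, hmass, v, hv, hqv⟩ := exists_of_mem_reach hq
  obtain ⟨R', hR', hqR'⟩ := mem_verts.1 (mem_verts_of_mem_rotationEnds hv hqv)
  rw [hF.valid.eq_of_mem hR (hS hR') hqR hqR']
  exact (length_le_mass hR').trans hmass

lemma length_le_of_mem_nbhd_reach (hF : IsMinimal G F) {ℓ r : ℕ} {R : List V} {q : V} (hR : R ∈ F)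
    (hqR : q ∈ R) (hq : q ∈ nbhd G (reach G F ℓ r)) : R.length ≤ 4 * r := by
  obtain ⟨x, hx, hxq⟩ := mem_nbhd.1 hq
  obtain ⟨S, hS, hmass, v, hv, hxv⟩ := exists_of_mem_reach hx
  by_cases hRS : R ∈ S
  · have := length_le_mass hRS
    omega
  · have := hF.length_le S hS R hR hRS v hv x hxv q hqR hxq
    omega

lemma mass_lt_mass_filter_add (hF : IsMinimal G F) {m ℓ r : ℕ}
    (hJ : IsJoined G m) (hr : m ≤ (reach G F ℓ r).card) :
    mass F < mass (F.filter fun l => l.length ≤ 4 * r) + m := by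
  classical
  set X := reach G F ℓ r
  have hsub : (verts F.val).toFinset ⊆
      (verts (F.filter fun l => l.length ≤ 4 * r).val).toFinset ∪
        ((verts F.val).toFinset \ (X ∪ nbhd G X)) := by
    intro q hq
    by_cases hq' : q ∈ X ∪ nbhd G X
    · refine Finset.mem_union_left _ ?_
      rw [Multiset.mem_toFinset, mem_verts] at hq ⊢
      obtain ⟨R, hR, hqR⟩ := hq
      refine ⟨R, Finset.mem_filter.2 ⟨hR, ?_⟩, hqR⟩
      rcases Finset.mem_union.1 hq' with h | h
      · exact (hF.length_le_of_mem_reach hR hqR h).trans (by omega)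
      · exact hF.length_le_of_mem_nbhd_reach hR hqR h
    · exact Finset.mem_union_right _ (Finset.mem_sdiff.2 ⟨hq, hq'⟩)
  have hcard := (Finset.card_le_card hsub).trans (Finset.card_union_le _ _)
  rw [hF.valid.card_toFinset_verts,
    (hF.valid_of_subset (Finset.filter_subset _ _)).card_toFinset_verts] at hcard
  have := card_sdiff_nbhd_lt hJ hr (verts F.val).toFinset
  omega

end IsMinimal

end Minimal

/-! ### Covering by few paths -/

section Covering

variable {V : Type*} {G : SimpleGraph V} {F : Finset (List V)}

lemma Valid.card_le_mass {S : Finset (List V)} (hS : Valid G S.val) : S.card ≤ mass S := by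
  rw [mass_eq_card_verts, ← Finset.card_val]
  exact hS.card_le_card_verts

variable [Fintype V]

namespace IsMinimal

lemma exists_card_rotationFinset_sdiff_lt [DecidableEq V] {P A : Finset (List V)}
    (hF : IsMinimal G F) (hP : P ⊆ F) (hA : A ⊆ F) {m : ℕ} {B : Finset V} {u : V}
    (hB : ExpandsOutside G A.val B 5 m) (hu : u ∈ ends P.val)
    (hpos : 0 < (rotationFinset G P.val u \ B).card)
    (hcard : (rotationFinset G P.val u \ B).card ≤ m) :
    ∃ R ∈ A, (rotationFinset G P.val u \ B).card <
      (rotationFinset G (insert R P).val u \ B).card := by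
  set X := rotationFinset G P.val u \ B
  have hAvalid := hF.valid_of_subset hA
  obtain ⟨q, hq, hqX⟩ : ∃ q ∈ freshNbhd G A.val B X, q ∉ near A.val X := by
    refine Finset.exists_mem_notMem_of_card_lt_card ?_
    have := card_near_le hAvalid X
    have := hB X Finset.sdiff_disjoint hcard
    omega
  obtain ⟨⟨x, hx, hxq⟩, hqA, hqB⟩ := mem_freshNbhd.1 hq
  obtain ⟨R, hR, hqR⟩ := mem_verts.1 hqA
  have hsub : insert R P ⊆ F := Finset.insert_subset (hA hR) hP
  have hvalid := hF.valid_of_subset hsub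
  have hmono := rotationFinset_mono hvalid (Finset.val_le_iff.2 (Finset.subset_insert R P)) u
  refine ⟨R, hR, Finset.card_lt_card ⟨Finset.sdiff_subset_sdiff hmono subset_rfl, fun hcon => ?_⟩⟩
  have hnear : q ∈ near (insert R P).val (rotationFinset G (insert R P).val u) :=
    mem_near_rotationFinset hvalid
      (mem_ends_of_subset (Finset.subset_insert R P) hu)
      (fun _ _ => hF.not_mergeable hsub u q)
      (mem_rotationFinset.1 (hmono (Finset.mem_sdiff.1 hx).1))
      (mem_verts.2 ⟨R, Finset.mem_insert_self R P, hqR⟩) hxq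
  exact hqX <| near_mono le_rfl hcon <| near_mono_of_notMem_near hvalid
    (Multiset.singleton_le.2 (Finset.mem_insert_self R P)) (Multiset.singleton_le.2 hR)
    (mem_verts.2 ⟨R, Multiset.mem_singleton_self R, hqR⟩) hqB hnear

lemma exists_le_card_rotationFinset_sdiff [DecidableEq V] {P A : Finset (List V)}
    (hF : IsMinimal G F) (hP : P ⊆ F) (hA : A ⊆ F) {m M : ℕ} {B : Finset V} {u : V}
    (hB : ExpandsOutside G A.val B 5 m) (hM : ∀ l ∈ A, l.length ≤ M) (hu : u ∈ ends P.val)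
    (hpos : 0 < (rotationFinset G P.val u \ B).card) (k : ℕ) :
    ∃ P', P ⊆ P' ∧ P' ⊆ P ∪ A ∧ mass P' ≤ mass P + k * M ∧
      min m (k + 1) ≤ (rotationFinset G P'.val u \ B).card := by
  induction k with
  | zero => exact ⟨P, subset_rfl, Finset.subset_union_left, by simp, (min_le_right _ _).trans hpos⟩
  | succ k ih =>
    obtain ⟨P', hPP', hP', hmass, hcard⟩ := ih
    have hle := Finset.val_le_iff.2 hPP'
    have hP'F : P' ⊆ F := hP'.trans (Finset.union_subset hP hA)
    by_cases hbig : m ≤ (rotationFinset G P'.val u \ B).card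
    · exact ⟨P', hPP', hP', by rw [add_mul]; omega, (min_le_left _ _).trans hbig⟩
    obtain ⟨R, hR, hlt⟩ := hF.exists_card_rotationFinset_sdiff_lt hP'F hA hB
      (mem_ends_of_subset hPP' hu)
      (hpos.trans_le (Finset.card_le_card (Finset.sdiff_subset_sdiff
        (rotationFinset_mono (hF.valid_of_subset hP'F) hle u) subset_rfl))) (not_le.1 hbig).le
    refine ⟨insert R P', hPP'.trans (Finset.subset_insert _ _),
      Finset.insert_subset (Finset.mem_union_right _ hR) hP', ?_, by omega⟩
    have := mass_insert_le R P'
    have := hM R hR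
    rw [add_mul]
    omega

lemma le_card_rotationFinset_union [DecidableEq V] {R A T : Finset (List V)}
    (hF : IsMinimal G F) (hR : R ⊆ F) (hA : A ⊆ F) (hT : T ⊆ A) {m : ℕ} {B : Finset V} {v : V}
    (hB : ExpandsOutside G A.val B 5 m) (hv : v ∈ ends R.val)
    (hpos : 0 < (rotationFinset G R.val v \ B).card)
    (hmissing : min m (mass (A \ T)) ≤ (rotationFinset G R.val v \ B).card) :
    m ≤ (rotationFinset G (R ∪ T).val v).card := by
  have hsub : R ∪ T ⊆ F := Finset.union_subset hR (hT.trans hA)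
  have hvalid := hF.valid_of_subset hsub
  have hle : R.val ≤ (R ∪ T).val := Finset.val_le_iff.2 Finset.subset_union_left
  have hmono := Finset.card_le_card
    (Finset.sdiff_subset_sdiff (rotationFinset_mono hvalid hle v) (subset_refl B))
  refine le_trans ?_ (Finset.card_le_card (Finset.sdiff_subset (t := B)))
  by_contra! hlt
  refine hlt.not_ge (le_card_rotationFinset_sdiff hB hvalid (hF.valid_of_subset hA)
    (Finset.val_le_iff.2 Finset.subset_union_right) (Finset.val_le_iff.2 hT)
    (Multiset.mem_of_le (ends_mono hle) hv) (hF.not_mergeable hsub v) ?_ (hpos.trans_le hmono))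
  rw [← mass_eq_card_verts, ← mass_eq_card_verts]
  have := mass_le_mass_sdiff_add A T
  omega

/-- Two large sets of rotation ends are joined by an edge, which would merge two paths. -/
lemma card_rotationFinset_lt {S T : Finset (List V)} (hF : IsMinimal G F) {m : ℕ}
    (hJ : IsJoined G m) (hS : S ⊆ F) (hT : T ⊆ F) (hST : Disjoint S T) {u v : V}
    (hv : v ∈ ends S.val) (hu : u ∈ ends T.val) (hm : m ≤ (rotationFinset G S.val v).card) :
    (rotationFinset G T.val u).card < m := by
  classical
  by_contra! hm'
  have hsub : S.disjUnion T hST ⊆ F := by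
    rw [Finset.disjUnion_eq_union]
    exact Finset.union_subset hS hT
  have hvalid : Valid G (S.val + T.val) := hF.valid_of_subset hsub
  have hdisj : Disjoint (rotationFinset G S.val v) (rotationFinset G T.val u) :=
    Finset.disjoint_left.2 fun a ha hb => (valid_add.1 hvalid).2.2 a
      (mem_verts_of_mem_rotationEnds hv (mem_rotationFinset.1 ha))
      (mem_verts_of_mem_rotationEnds hu (mem_rotationFinset.1 hb))
  obtain ⟨x, hx, y, hy, hxy⟩ := exists_adj_of_isJoined hJ hdisj hm hm'
  exact hF.not_mergeable hsub v u (.of_adj_rotationEnds hvalid hv hu (mem_rotationFinset.1 hx)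
    (mem_rotationFinset.1 hy) hxy)

lemma exists_expandsOutside_of_le_card_reach [DecidableEq V] {F' A : Finset (List V)}
    (hF : IsMinimal G F) {m ℓ r : ℕ} (hJ : IsJoined G m) (hA : A ⊆ F) (hmass : 18 * m < mass A)
    (hr : m ≤ (reach G F' ℓ r).card) :
    ∃ B, ExpandsOutside G A.val B 5 m ∧ ∃ R ⊆ F', mass R ≤ r ∧ ∃ v ∈ ends R.val,
      0 < (rotationFinset G R.val v \ B).card := by
  obtain ⟨B, hBm, hB⟩ := exists_expandsOutside (K := 5) hJ (hF.valid_of_subset hA)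
    (by rwa [← mass_eq_card_verts])
  obtain ⟨x, hx, hxB⟩ := Finset.exists_mem_notMem_of_card_lt_card (hBm.trans_le hr)
  obtain ⟨R, hR, hRmass, v, hv, hxv⟩ := exists_of_mem_reach hx
  exact ⟨B, hB, R, hR, hRmass, v, hv,
    Finset.card_pos.2 ⟨x, Finset.mem_sdiff.2 ⟨mem_rotationFinset.2 hxv, hxB⟩⟩⟩

lemma le_card_reach_sdiff [DecidableEq V] {P : Finset (List V)} (hF : IsMinimal G F) (hP : P ⊆ F)
    {m a t ℓ r D : ℕ}
    (hexp : ∀ U : Finset V, U.card ≤ m →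
      (3 * a + 1) * U.card ≤ (nbhd G U ∩ (verts F.val).toFinset).card)
    (hat : m ≤ a ^ t) (hr : 8 ^ t * ℓ ≤ r) (hmass : mass P ≤ D) (hD : 1 ≤ D)
    (hshort : 2 * D ≤ (F.filter fun l => l.length ≤ ℓ).card) :
    m ≤ (reach G (F \ P) ℓ r).card := by
  refine hF.le_card_reach Finset.sdiff_subset hexp hat hr
    (by rwa [Finset.sdiff_sdiff_eq_self hP]) hD ?_
  have hcard : (F.filter fun l => l.length ≤ ℓ).card ≤
      ((F \ P).filter fun l => l.length ≤ ℓ).card + P.card := by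
    refine (Finset.card_le_card fun l hl => ?_).trans (Finset.card_union_le _ _)
    simp only [Finset.mem_union, Finset.mem_filter, Finset.mem_sdiff] at hl ⊢
    tauto
  have := (hF.valid_of_subset hP).card_le_mass
  omega

/-- Otherwise one could find two disjoint subfamilies, each of which has at least `m` rotation
ends: `P ∪ (B \ R)` and `R ∪ A` below. Each starts from short paths, found by `reach`, and then
feeds on a reservoir (`B` or `A`) of medium paths. The subfamily `R` may damage the reservoir `B`,
but its mass is at most `M`, and `P` has been grown to tolerate such a loss. -/
lemma card_short_le [DecidableEq V] (hF : IsMinimal G F) {m a t ℓ M : ℕ} (hJ : IsJoined G m)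
    (hexp : ∀ U : Finset V, U.card ≤ m →
      (3 * a + 1) * U.card ≤ (nbhd G U ∩ (verts F.val).toFinset).card)
    (hat : m ≤ a ^ t) (hM : 8 ^ t * ℓ ≤ M) (hMpos : 0 < M) (hmass : 37 * m + 5 * M + 2 ≤ mass F) :
    (F.filter fun l => l.length ≤ ℓ).card ≤ 2 * (M + M * (4 * M)) := by
  by_contra! hshort
  have hreach := hF.le_card_reach (r := M) subset_rfl hexp hat hM (by simp [mass]) le_rfl
    (by omega)
  have hmedium := hF.mass_lt_mass_filter_add hJ hreach
  set S := F.filter fun l => l.length ≤ 4 * M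
  have hSF : S ⊆ F := Finset.filter_subset _ _
  have hSM : ∀ l ∈ S, l.length ≤ 4 * M := fun l hl => (Finset.mem_filter.1 hl).2
  obtain ⟨B, hBS, hBlow, hBupp⟩ :
      ∃ B ⊆ S, 18 * m + 1 ≤ mass B ∧ mass B ≤ 18 * m + 1 + 4 * M :=
    exists_subset_sum_between hSM (by change _ ≤ mass S; omega)
  have hBF := hBS.trans hSF
  obtain ⟨X, hX, P₀, hP₀F, hP₀mass, u, hu, hP₀pos⟩ :=
    hF.exists_expandsOutside_of_le_card_reach hJ hBF hBlow hreach
  obtain ⟨P, hP₀P, hPsub, hPmass, hPcard⟩ := hF.exists_le_card_rotationFinset_sdiff hP₀F hBF hX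
    (fun l hl => hSM l (hBS hl)) hu hP₀pos M
  have hPF : P ⊆ F := hPsub.trans (Finset.union_subset hP₀F hBF)
  set A := S \ (P₀ ∪ B)
  have hAF : A ⊆ F := Finset.sdiff_subset.trans hSF
  have hAmass : 18 * m < mass A := by
    have : mass S ≤ mass A + mass (P₀ ∪ B) := mass_le_mass_sdiff_add S (P₀ ∪ B)
    have := mass_union_le P₀ B
    omega
  obtain ⟨Y, hY, R, hRsub, hRmass, v, hv, hRpos⟩ :=
    hF.exists_expandsOutside_of_le_card_reach hJ hAF hAmass (hF.le_card_reach_sdiff hPF hexp hat hM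
      (hPmass.trans (Nat.add_le_add_right hP₀mass _)) (by omega) hshort.le)
  have hRF : R ⊆ F := hRsub.trans Finset.sdiff_subset
  have hu' : u ∈ ends P.val := mem_ends_of_subset hP₀P hu
  have hlarge₁ : m ≤ (rotationFinset G (P ∪ (B \ R)).val u).card := by
    refine hF.le_card_rotationFinset_union hPF hBF Finset.sdiff_subset hX hu' ?_ ?_
    · exact hP₀pos.trans_le (Finset.card_le_card (Finset.sdiff_subset_sdiff
        (rotationFinset_mono (hF.valid_of_subset hPF) (Finset.val_le_iff.2 hP₀P) u) subset_rfl))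
    · have := mass_mono (Finset.inter_subset_right (s₁ := B) (s₂ := R))
      rw [sdiff_sdiff_right_self, Finset.inf_eq_inter]
      omega
  have hlarge₂ : m ≤ (rotationFinset G (R ∪ A).val v).card :=
    hF.le_card_rotationFinset_union hRF hAF subset_rfl hY hv hRpos (by simp [mass])
  have hdisj : Disjoint (R ∪ A) (P ∪ (B \ R)) := Finset.disjoint_union_left.2
    ⟨Finset.disjoint_union_right.2 ⟨Finset.sdiff_disjoint.mono_left hRsub, Finset.disjoint_sdiff⟩,
      Finset.sdiff_disjoint.mono_right
        (Finset.union_subset hPsub (Finset.sdiff_subset.trans Finset.subset_union_right))⟩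
  refine (hF.card_rotationFinset_lt hJ (Finset.union_subset hRF hAF)
    (Finset.union_subset hPF (Finset.sdiff_subset.trans hBF)) hdisj
    (mem_ends_of_subset Finset.subset_union_left hv)
    (mem_ends_of_subset Finset.subset_union_left hu') hlarge₂).not_ge hlarge₁

end IsMinimal

theorem exists_covering_family [DecidableEq V] {W : Finset V} {m a t ℓ M : ℕ} (hJ : IsJoined G m)
    (hexp : ∀ U : Finset V, U.card ≤ m → (3 * a + 1) * U.card ≤ (nbhd G U ∩ W).card)
    (hat : m ≤ a ^ t) (hM : 8 ^ t * ℓ ≤ M) (hMpos : 0 < M)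
    (hcard : 37 * m + 5 * M + 2 ≤ W.card) :
    ∃ F : Multiset (List V), Valid G F ∧ verts F = W.val ∧
      ℓ * F.card ≤ ℓ * (2 * (M + M * (4 * M))) + W.card := by
  obtain ⟨F, hF, hFW⟩ := exists_isMinimal G W
  have hmass : mass F = W.card := by rw [mass_eq_card_verts, hFW, Finset.card_val]
  refine ⟨F.val, hF.valid, hFW, ?_⟩
  have hshort := hF.card_short_le hJ (by simpa only [hFW, Finset.val_toFinset] using hexp) hat hM
    hMpos (hmass ▸ hcard)
  have hlong : ℓ * (F.filter fun l => ¬ l.length ≤ ℓ).card ≤ W.card := by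
    rw [← hmass, mul_comm, ← smul_eq_mul]
    exact (Finset.card_nsmul_le_sum _ _ _ fun l hl =>
      (not_le.1 (Finset.mem_filter.1 hl).2).le).trans (mass_mono (Finset.filter_subset _ F))
  calc ℓ * F.card = ℓ * (F.filter fun l => l.length ≤ ℓ).card +
        ℓ * (F.filter fun l => ¬ l.length ≤ ℓ).card := by
        rw [← mul_add, Finset.card_filter_add_card_filter_not]
    _ ≤ _ := Nat.add_le_add (Nat.mul_le_mul_left _ hshort) hlong

end Covering

/-! ### Inserting paths -/

section Insertion

variable {V : Type*} {G : SimpleGraph V}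

lemma exists_le_card_eq {α : Type*} {W : Multiset α} {k : ℕ} (h : k ≤ W.card) :
    ∃ U ≤ W, U.card = k := by
  have hpos : 0 < (W.powersetCard k).card := by
    rw [Multiset.card_powersetCard]
    exact Nat.choose_pos h
  obtain ⟨U, hU⟩ := Multiset.card_pos_iff_exists_mem.1 hpos
  exact ⟨U, Multiset.mem_powersetCard.1 hU⟩

lemma Valid.of_verts_eq {A C E : Multiset (List V)} (h : Valid G (A + E)) (hC : Valid G C)
    (hCA : verts C = verts A) : Valid G (C + E) := by
  rw [valid_add] at h ⊢
  rw [hCA]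
  exact ⟨hC, h.2⟩

lemma Valid.card_add_one_eq {C F : Multiset (List V)} (hF : Valid G F) (hC : Valid G C) {x y : V}
    (h : x ::ₘ y ::ₘ ends C = ends F) : C.card + 1 = F.card := by
  have hcard := congrArg Multiset.card h
  rw [Multiset.card_cons, Multiset.card_cons, hC.card_ends, hF.card_ends] at hcard
  omega

lemma Mergeable.add {A E : Multiset (List V)} {x y : V} (h : Mergeable G A x y)
    (hA : Valid G (A + E)) : Mergeable G (A + E) x y := by
  obtain ⟨C, hC, hCv, hCe⟩ := h
  refine ⟨C + E, hA.of_verts_eq hC hCv, by rw [verts_add, verts_add, hCv], ?_⟩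
  rw [ends_add, ends_add, ← hCe, Multiset.cons_add, Multiset.cons_add]

/-- `N'` arises from the family `N` by inserting the paths of `D`, which lowers the number of paths
by one; the ends `T` of `N` as well as the ends of `D` remain ends. -/
structure Insertion (G : SimpleGraph V) (T : Multiset V) (N D N' : Multiset (List V)) : Prop where
  valid : Valid G N'
  verts_eq : verts N' = verts N + verts D
  le_ends : T + ends D ≤ ends N'
  card_eq : N'.card + 1 = N.card + D.card

/-- The one-vertex path `q` contributes `q` twice to the ends, and merging removes `q` only once. -/
lemma Mergeable.exists_insertion_zero {N : Multiset (List V)} {T : Multiset V} {e q : V}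
    (h : Mergeable G N e q) (hN : Valid G N) (hq : [q] ∈ N) (hqe : q ≠ e) (hT : T.Nodup)
    (heT : e ::ₘ T ≤ ends N) : ∃ N', Insertion G T N 0 N' := by
  classical
  obtain ⟨C, hC, hCv, hCe⟩ := h
  refine ⟨C, hC, by simp [hCv], ?_, by simpa using hN.card_add_one_eq hC hCe⟩
  rw [ends_zero, add_zero, Multiset.le_iff_count]
  intro a
  have hle := Multiset.count_le_of_le a heT
  have hcount := congrArg (Multiset.count a) hCe
  simp only [Multiset.count_cons] at hle hcount
  by_cases haq : a = q
  · subst haq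
    obtain ⟨N, rfl⟩ := Multiset.exists_cons_of_mem hq
    have := Multiset.nodup_iff_count_le_one.1 hT a
    simp only [ends_cons, listEnds, List.head?_cons, List.getLast?_singleton, Option.toList_some,
      Multiset.coe_singleton, Multiset.count_add, Multiset.count_singleton_self, hqe, if_true,
      if_false] at hcount
    omega
  · simp only [haq, if_false] at hcount
    omega

lemma mem_verts_of_mem_fewRotationEnds {W : Multiset (List V)} {Q : List V} {B : Finset V}
    {v x : V} {j : ℕ} (hv : v ∈ listEnds Q) (hx : x ∈ fewRotationEnds G W Q B v j) :
    x ∈ verts (Q ::ₘ W) := by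
  obtain ⟨-, R, hR, -, hxR⟩ := hx
  exact Multiset.mem_of_le (verts_mono ((Multiset.cons_le_cons_iff _).2 hR))
    (mem_verts_of_mem_rotationEnds (by simp [hv]) hxR)

variable [Fintype V]

/-- Any end of a family that has at least `m` rotation ends can be merged with the end `c` of a
further path by means of at most `s` paths of `U`. -/
def Connector (G : SimpleGraph V) (U : Multiset (List V)) (c : V) (m s : ℕ) : Prop :=
  ∀ (N : Multiset (List V)) (Q : List V) (e : V), Valid G (N + (Q ::ₘ U)) → e ∈ ends N →
    c ∈ listEnds Q → m ≤ (rotationFinset G N e).card →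
    ∃ R ≤ U, R.card ≤ s ∧ Mergeable G (N + (Q ::ₘ R)) e c

lemma exists_mergeable_of_expandsOutside [DecidableEq V] {W₁ W₂ : Multiset (List V)}
    {S Q : List V} {m t : ℕ} (hJ : IsJoined G m) (ht : m ≤ 2 ^ t)
    (hval : Valid G ((S ::ₘ W₁) + (Q ::ₘ W₂))) {B₁ B₂ : Finset V}
    (hB₁ : ExpandsOutside G W₁ B₁ 6 m) (hB₂ : ExpandsOutside G W₂ B₂ 6 m)
    (hlen₁ : ∀ l ∈ W₁, 2 ≤ l.length) (hlen₂ : ∀ l ∈ W₂, 2 ≤ l.length) {s c : V}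
    (hs : s ∈ listEnds S) (hc : c ∈ listEnds Q) (hsB : s ∉ B₁) (hcB : c ∉ B₂) :
    ∃ R₁ ≤ W₁, ∃ R₂ ≤ W₂, R₁.card ≤ t ∧ R₂.card ≤ t ∧
      Mergeable G ((S ::ₘ R₁) + (Q ::ₘ R₂)) s c := by
  obtain ⟨hS, hQ, hdisj⟩ := valid_add.1 hval
  obtain ⟨X, hXcard, hX⟩ := exists_le_card_fewRotationEnds hB₁ hS hlen₁ hs hsB t
  obtain ⟨Z, hZcard, hZ⟩ := exists_le_card_fewRotationEnds hB₂ hQ hlen₂ hc hcB t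
  rw [min_eq_left ht] at hXcard hZcard
  have hXZ : Disjoint X Z := Finset.disjoint_left.2 fun a ha hb => hdisj a
    (mem_verts_of_mem_fewRotationEnds hs (hX ha)) (mem_verts_of_mem_fewRotationEnds hc (hZ hb))
  obtain ⟨x, hx, z, hz, hxz⟩ := exists_adj_of_isJoined hJ hXZ hXcard hZcard
  obtain ⟨-, R₁, hR₁, hR₁card, hxR⟩ := hX hx
  obtain ⟨-, R₂, hR₂, hR₂card, hzR⟩ := hZ hz
  refine ⟨R₁, hR₁, R₂, hR₂, hR₁card, hR₂card, .of_adj_rotationEnds (hval.mono ?_)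
    (by simp [hs]) (by simp [hc]) hxR hzR hxz⟩
  exact add_le_add ((Multiset.cons_le_cons_iff _).2 hR₁) ((Multiset.cons_le_cons_iff _).2 hR₂)

lemma connector_of_expandsOutside [DecidableEq V] {W₁ W₂ : Multiset (List V)} {m t : ℕ}
    (hJ : IsJoined G m) (ht : m ≤ 2 ^ t) {B₁ B₂ : Finset V} (hB₁m : B₁.card < m)
    (hB₁ : ExpandsOutside G W₁ B₁ 6 m) (hB₂ : ExpandsOutside G W₂ B₂ 6 m)
    (hlen₁ : ∀ l ∈ W₁, 2 ≤ l.length) (hlen₂ : ∀ l ∈ W₂, 2 ≤ l.length) {c : V} (hcB : c ∉ B₂) :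
    Connector G (W₁ + W₂) c m (2 * t) := by
  intro N Q e hval he hc hrot
  obtain ⟨s, hs, hsB⟩ := Finset.exists_mem_notMem_of_card_lt_card (hB₁m.trans_le hrot)
  obtain ⟨N', hN'⟩ := mem_rotationFinset.1 hs
  obtain ⟨S, hS, hsS⟩ := mem_ends.1 (hN'.mem_ends he)
  obtain ⟨N₀, rfl⟩ := Multiset.exists_cons_of_mem hS
  have hrearrange (A B : Multiset (List V)) :
      (S ::ₘ N₀) + (Q ::ₘ (A + B)) = (S ::ₘ A) + (Q ::ₘ B) + N₀ := by
    simp only [← Multiset.singleton_add]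
    abel
  have hval' := hN'.valid_add hval
  obtain ⟨R₁, hR₁, R₂, hR₂, hR₁card, hR₂card, hmerge⟩ := exists_mergeable_of_expandsOutside hJ ht
    (by rw [hrearrange] at hval'; exact hval'.mono (Multiset.le_add_right _ _)) hB₁ hB₂ hlen₁ hlen₂
    hsS hc hsB hcB
  have hle : R₁ + R₂ ≤ W₁ + W₂ := add_le_add hR₁ hR₂
  refine ⟨R₁ + R₂, hle, by rw [Multiset.card_add]; omega, ?_⟩
  obtain ⟨C, hC, hCv, hCe⟩ := hmerge.add (hrearrange R₁ R₂ ▸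
    hval'.mono (add_le_add le_rfl ((Multiset.cons_le_cons_iff _).2 hle)))
  rw [← hrearrange] at hCv hCe
  refine ⟨C, hC, by rw [hCv, verts_add, hN'.verts_eq, ← verts_add], ?_⟩
  refine (Multiset.cons_inj_right s).1 ?_
  have hN'e := hN'.ends_eq
  rw [ends_add, ← Multiset.singleton_add] at hCe ⊢
  simp only [← Multiset.singleton_add] at hCe hN'e ⊢
  calc _ = {e} + ({s} + ({c} + ends C)) := by abel
    _ = ({e} + ends ({S} + N₀)) + ends ({Q} + (R₁ + R₂)) := by rw [hCe, add_assoc]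
    _ = _ := by rw [hN'e, add_assoc]

lemma exists_connector {U : Multiset (List V)} {m t k r : ℕ} (hJ : IsJoined G m) (ht : m ≤ 2 ^ t)
    (hU : Valid G U) (hlen : ∀ l ∈ U, l.length = r) (hr : 2 ≤ r) (hk : 20 * m < k * r)
    (hcard : 2 * k ≤ U.card) :
    ∃ B : Finset V, B.card < m ∧ ∀ c ∉ B, Connector G U c m (2 * t) := by
  classical
  have hexpands : ∀ W ≤ U, k ≤ W.card → ∃ B, B.card < m ∧ ExpandsOutside G W B 6 m := by
    intro W hW hkW
    refine exists_expandsOutside hJ (hU.mono hW) (hk.trans_le ?_)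
    rw [card_verts, Multiset.map_congr rfl fun l hl => hlen l (Multiset.mem_of_le hW hl),
      Multiset.map_const', Multiset.sum_replicate, smul_eq_mul]
    exact Nat.mul_le_mul_right r hkW
  obtain ⟨W₁, hW₁, hcard₁⟩ := exists_le_card_eq (k := k) (W := U) (by omega)
  obtain ⟨W₂, rfl⟩ := Multiset.le_iff_exists_add.1 hW₁
  rw [Multiset.card_add] at hcard
  obtain ⟨B₁, hB₁m, hB₁⟩ := hexpands W₁ hW₁ hcard₁.ge
  obtain ⟨B₂, hB₂m, hB₂⟩ := hexpands W₂ (Multiset.le_add_left _ _) (by omega)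
  have hlen₂ : ∀ l ∈ W₁ + W₂, 2 ≤ l.length := fun l hl => hr.trans_eq (hlen l hl).symm
  exact ⟨B₂, hB₂m, fun c hc => connector_of_expandsOutside hJ ht hB₁m hB₁ hB₂
    (fun l hl => hlen₂ l (Multiset.mem_add.2 (Or.inl hl)))
    (fun l hl => hlen₂ l (Multiset.mem_add.2 (Or.inr hl))) hc⟩

lemma Connector.exists_insertion_zero_or_mergeable [DecidableEq V] {N U : Multiset (List V)}
    {Q : List V} {Y : Finset V} {m s : ℕ} {c e : V} {T : Multiset V} (hU : Connector G U c m s)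
    (hexp : ∀ Z : Finset V, Z.card ≤ m → 4 * Z.card ≤ (nbhd G Z ∩ Y).card)
    (hY : ∀ v ∈ Y, v ∈ verts N) (hval : Valid G (N + (Q ::ₘ U))) (hc : c ∈ listEnds Q)
    (hT : T.Nodup) (heT : e ::ₘ T ≤ ends N) :
    (∃ N', Insertion G T N 0 N') ∨ ∃ R ≤ U, R.card ≤ s ∧ Mergeable G (N + (Q ::ₘ R)) e c := by
  have hN := (valid_add.1 hval).1
  have he : e ∈ ends N := Multiset.mem_of_le heT (Multiset.mem_cons_self _ _)
  rcases le_card_rotationFinset_or_mergeable hN hexp hY he with hrot | ⟨q, hq, hqe, hmerge⟩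
  · exact Or.inr (hU N Q e hval he hc hrot)
  · exact Or.inl (hmerge.exists_insertion_zero hN hq hqe hT heT)

end Insertion

section Cutting

variable {α : Type*} {p q : α → Bool}

lemma length_le_countP_dropLast_add_countP_tail {l : List α}
    (h : ∀ A c d B, l = A ++ c :: d :: B → p c ∨ q d) :
    l.length ≤ l.dropLast.countP p + l.tail.countP q + 1 := by
  induction l with
  | nil => simp
  | cons c l ih =>
    have htail := ih fun A c' d B hl => h (c :: A) c' d B (by simp [hl])
    cases l with
    | nil => simp
    | cons d l =>
      have hhead := h [] c d l rfl
      simp only [List.length_cons, List.dropLast_cons_cons, List.tail_cons,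
        List.countP_cons] at htail ⊢
      rcases hhead with hhead | hhead <;> simp only [hhead, if_true] <;> omega

lemma length_le_two_mul_countP {l : List α} (hl : 2 ≤ l.length)
    (h : ∀ A c d B, l = A ++ c :: d :: B → p c ∨ q d) :
    l.length ≤ 2 * (l.countP p + l.countP q) := by
  have hlen := length_le_countP_dropLast_add_countP_tail h
  have hp := (List.dropLast_sublist l).countP_le (p := p)
  have hq := (List.tail_sublist l).countP_le (p := q)
  omega

lemma exists_cons_cons_le {T E : Multiset α} (h : T ≤ E) (hcard : T.card + 2 ≤ E.card) :
    ∃ e e', e ::ₘ e' ::ₘ T ≤ E := by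
  obtain ⟨D, rfl⟩ := Multiset.le_iff_exists_add.1 h
  rw [Multiset.card_add] at hcard
  obtain ⟨P, hP, hPcard⟩ := exists_le_card_eq (W := D) (k := 2) (by omega)
  obtain ⟨e, e', rfl⟩ := Multiset.card_eq_two.1 hPcard
  refine ⟨e, e', ?_⟩
  calc e ::ₘ e' ::ₘ T = T + {e, e'} := by
        rw [add_comm, Multiset.insert_eq_cons, Multiset.cons_add, Multiset.singleton_add]
    _ ≤ T + D := add_le_add le_rfl hP

end Cutting

section InsertionStep

variable {V : Type*} {G : SimpleGraph V} {N W : Multiset (List V)} {m s : ℕ}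

lemma countP_verts_le [DecidableEq V] (hW : (verts W).Nodup) (B : Finset V) :
    (verts W).countP (· ∈ B) ≤ B.card := by
  rw [Multiset.countP_eq_card_filter, ← Multiset.toFinset_card_of_nodup (hW.filter _)]
  exact Finset.card_le_card fun a ha => (Multiset.mem_filter.1 (Multiset.mem_toFinset.1 ha)).2

lemma exists_cut (hW : Valid G W) (hlen : ∀ l ∈ W, 2 ≤ l.length) (hm : 4 * m < (verts W).card)
    {B B' : Finset V} (hB : B.card < m) (hB' : B'.card < m) :
    ∃ P Q c d, P ++ Q ∈ W ∧ P.getLast? = some c ∧ Q.head? = some d ∧ c ∉ B ∧ d ∉ B' := by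
  classical
  by_contra! hcut
  have hlist : ∀ l ∈ W, l.length ≤ 2 * (l.countP (· ∈ B) + l.countP (· ∈ B')) := by
    refine fun l hl => length_le_two_mul_countP (hlen l hl) fun P c d Q hPQ => ?_
    by_cases hc : c ∈ B
    · simp [hc]
    · simp [hcut (P ++ [c]) (d :: Q) c d (by simpa [← hPQ] using hl) (by simp) (by simp) hc]
  have hverts : (verts W).card ≤ 2 * ((verts W).countP (· ∈ B) + (verts W).countP (· ∈ B')) := by
    clear hcut hm hW hlen
    induction W using Multiset.induction_on with
    | empty => simp
    | cons l W ih =>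
      obtain ⟨hl, hW⟩ := Multiset.forall_mem_cons.1 hlist
      have := ih hW
      simp only [verts_cons, Multiset.card_add, Multiset.countP_add, Multiset.coe_card,
        Multiset.coe_countP]
      omega
  have hcountB := countP_verts_le hW.2 B
  have hcountB' := countP_verts_le hW.2 B'
  omega

lemma Mergeable.exists_le_ends {R : Multiset (List V)} {Q : List V} {e c : V} {T p : Multiset V}
    (h : Mergeable G (N + (Q ::ₘ R)) e c) (hval : Valid G (N + (Q ::ₘ R)))
    (hQ : listEnds Q = c ::ₘ p) (heT : e ::ₘ T ≤ ends N) :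
    ∃ C, Valid G C ∧ verts C = verts N + verts (Q ::ₘ R) ∧ T + p + ends R ≤ ends C ∧
      C.card = N.card + R.card := by
  obtain ⟨C, hC, hCv, hCe⟩ := h
  have hcard := hval.card_add_one_eq hC hCe
  rw [Multiset.card_add, Multiset.card_cons] at hcard
  refine ⟨C, hC, by rw [hCv, verts_add], ?_, by omega⟩
  obtain ⟨E, hE⟩ := Multiset.le_iff_exists_add.1 heT
  rw [ends_add, ends_cons, hE, hQ] at hCe
  refine Multiset.le_iff_exists_add.2 ⟨E, add_left_cancel (a := {e} + {c}) ?_⟩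
  simp only [← Multiset.singleton_add] at hCe ⊢
  rw [add_assoc, hCe]
  abel

variable [Fintype V] [DecidableEq V] {Y : Finset V} {U U₁ U₂ R : Multiset (List V)}
  {P Q : List V} {c d e e' : V} {T p z : Multiset V}

lemma Connector.exists_insertion_of_half {C : Multiset (List V)} (hU : Connector G U d m s)
    (hexp : ∀ Z : Finset V, Z.card ≤ m → 4 * Z.card ≤ (nbhd G Z ∩ Y).card)
    (hY : ∀ v ∈ Y, v ∈ verts N) (hval : Valid G (C + (Q ::ₘ U)))
    (hCv : verts C = verts N + verts (P ::ₘ R)) (hCcard : C.card = N.card + R.card)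
    (hQ : listEnds Q = d ::ₘ z) (hPQ : listEnds (P ++ Q) = p + z) (hT : (T + p + ends R).Nodup)
    (heT : e ::ₘ (T + p + ends R) ≤ ends C) :
    ∃ R' ≤ U, R'.card ≤ s ∧ ∃ N', Insertion G T N ((P ++ Q) ::ₘ (R + R')) N' := by
  rcases hU.exists_insertion_zero_or_mergeable hexp (fun v hv => by simp [hCv, hY v hv]) hval
    (by simp [hQ]) hT heT with ⟨N', hN'⟩ | ⟨R', hR', hR'card, hmerge⟩
  · refine ⟨0, by simp, by simp, Q ::ₘ N', ?_, ?_, ?_, ?_⟩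
    · refine (hval.of_verts_eq hN'.valid (by simp [hN'.verts_eq])).mono ?_
      rw [Multiset.add_cons]
      exact (Multiset.cons_le_cons_iff Q).2 (Multiset.le_add_right _ _)
    · simp only [verts_cons, verts_add, verts_zero, hN'.verts_eq, hCv, ← Multiset.coe_add]
      abel
    · have hle := hN'.le_ends
      simp only [ends_cons, ends_zero, add_zero, hPQ, hQ] at hle ⊢
      calc T + (p + z + ends R) = z + (T + p + ends R) := by abel
        _ ≤ _ := add_le_add (Multiset.le_cons_self _ _) hle
    · have := hN'.card_eq
      simp only [Multiset.card_cons, Multiset.card_zero, add_zero] at this ⊢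
      omega
  · have hval' := hval.mono (add_le_add le_rfl ((Multiset.cons_le_cons_iff Q).2 hR'))
    obtain ⟨N', hN', hN'v, hN'e, hN'card⟩ := hmerge.exists_le_ends hval' hQ heT
    refine ⟨R', hR', hR'card, N', hN', ?_, le_trans (le_of_eq ?_) hN'e, ?_⟩
    · simp only [hN'v, hCv, verts_cons, verts_add, ← Multiset.coe_add]
      abel
    · simp only [ends_cons, ends_add, hPQ]
      abel
    · simp only [hN'card, hCcard, Multiset.card_cons, Multiset.card_add]
      omega

lemma Connector.exists_insertion_append (hU₁ : Connector G U₁ c m s) (hU₂ : Connector G U₂ d m s)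
    (hexp : ∀ Z : Finset V, Z.card ≤ m → 4 * Z.card ≤ (nbhd G Z ∩ Y).card)
    (hY : ∀ v ∈ Y, v ∈ verts N) (hval : Valid G (N + ((P ++ Q) ::ₘ (U₁ + U₂))))
    (hP : P.getLast? = some c) (hQ : Q.head? = some d)
    (hT : (T + ends ((P ++ Q) ::ₘ (U₁ + U₂))).Nodup) (heT : e ::ₘ e' ::ₘ T ≤ ends N) :
    ∃ D ≤ (P ++ Q) ::ₘ (U₁ + U₂), D.card ≤ 2 * s + 1 ∧ ∃ N', Insertion G T N D N' := by
  have hPne : P ≠ [] := by rintro rfl; simp at hP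
  have hQne : Q ≠ [] := by rintro rfl; simp at hQ
  obtain ⟨p, hp⟩ : ∃ p : Multiset V, p = P.head?.toList := ⟨_, rfl⟩
  obtain ⟨z, hz⟩ : ∃ z : Multiset V, z = Q.getLast?.toList := ⟨_, rfl⟩
  have hPe : listEnds P = c ::ₘ p := by rw [listEnds, hP, hp, add_comm]; rfl
  have hQe : listEnds Q = d ::ₘ z := by rw [listEnds, hQ, hz]; rfl
  have hPQ : listEnds (P ++ Q) = p + z := by rw [listEnds_append hPne hQne, hp, hz]
  have hcut : Valid G (N + (P ::ₘ U₁) + (Q ::ₘ U₂)) := by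
    have hval' : Valid G ((P ++ Q) ::ₘ (N + U₁ + U₂)) := by
      convert hval using 1
      simp only [← Multiset.singleton_add]
      abel
    convert ((valid_append_cons hPne hQne).1 hval').1 using 1
    simp only [← Multiset.singleton_add]
    abel
  have hTn : T.Nodup := (Multiset.nodup_add.1 hT).1
  rcases hU₁.exists_insertion_zero_or_mergeable hexp hY (hcut.mono (Multiset.le_add_right _ _))
    (by simp [hPe]) hTn (((Multiset.cons_le_cons_iff e).2 (Multiset.le_cons_self T e')).trans heT)
    with hzero | ⟨R, hR, hRcard, hmerge⟩
  · exact ⟨0, by simp, by simp, hzero⟩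
  · have hle : N + (P ::ₘ R) ≤ N + (P ::ₘ U₁) :=
      add_le_add le_rfl ((Multiset.cons_le_cons_iff P).2 hR)
    have hcutR : Valid G (N + (P ::ₘ R) + (Q ::ₘ U₂)) := hcut.mono (add_le_add hle le_rfl)
    obtain ⟨C, hC, hCv, hCe, hCcard⟩ := hmerge.exists_le_ends (valid_add.1 hcutR).1 hPe heT
    have hTR : (T + p + ends R).Nodup := by
      refine Multiset.nodup_of_le ?_ hT
      have := ends_mono hR
      simp only [ends_cons, ends_add, hPQ]
      calc T + p + ends R ≤ T + p + ends R + (z + ends U₂) := Multiset.le_add_right _ _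
        _ ≤ T + p + ends U₁ + (z + ends U₂) := by gcongr
        _ = _ := by abel
    obtain ⟨R', hR', hR'card, hins⟩ := hU₂.exists_insertion_of_half hexp hY
      (hcutR.of_verts_eq hC (by rw [hCv, verts_add])) hCv hCcard hQe hPQ hTR (by simpa using hCe)
    exact ⟨_, (Multiset.cons_le_cons_iff _).2 (add_le_add hR hR'), by
      rw [Multiset.card_cons, Multiset.card_add]; omega, hins⟩

lemma exists_insertion_step {t k r : ℕ} (hJ : IsJoined G m) (ht : m ≤ 2 ^ t)
    (hval : Valid G (N + W))
    (hexp : ∀ Z : Finset V, Z.card ≤ m → 4 * Z.card ≤ (nbhd G Z ∩ Y).card)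
    (hY : ∀ v ∈ Y, v ∈ verts N) (hlen : ∀ l ∈ W, l.length = r) (hr : 2 ≤ r) (hk : 20 * m < k * r)
    (hkW : 5 * k ≤ W.card) (hT : (T + ends W).Nodup) (hTN : T ≤ ends N)
    (hTcard : T.card + 2 ≤ (ends N).card) :
    ∃ D ≤ W, D.card ≤ 4 * t + 1 ∧ ∃ N', Insertion G T N D N' := by
  have hW := (valid_add.1 hval).2.1
  obtain ⟨e, e', heT⟩ := exists_cons_cons_le hTN hTcard
  obtain ⟨U₁, hU₁, hcard₁⟩ := exists_le_card_eq (k := 2 * k) (W := W) (by omega)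
  obtain ⟨X, rfl⟩ := Multiset.le_iff_exists_add.1 hU₁
  rw [Multiset.card_add] at hkW
  obtain ⟨U₂, hU₂, hcard₂⟩ := exists_le_card_eq (k := 2 * k) (W := X) (by omega)
  obtain ⟨W', rfl⟩ := Multiset.le_iff_exists_add.1 hU₂
  rw [Multiset.card_add] at hkW
  simp only [Multiset.mem_add, or_imp, forall_and] at hlen
  rw [valid_add, valid_add] at hW
  obtain ⟨B₁, hB₁, hconn₁⟩ := exists_connector hJ ht hW.1 hlen.1 hr hk hcard₁.ge
  obtain ⟨B₂, hB₂, hconn₂⟩ := exists_connector hJ ht hW.2.1.1 hlen.2.1 hr hk hcard₂.ge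
  have hmass : 4 * m < (verts W').card := by
    rw [card_verts, Multiset.map_congr rfl hlen.2.2, Multiset.map_const', Multiset.sum_replicate,
      smul_eq_mul]
    have : k * r ≤ W'.card * r := Nat.mul_le_mul_right r (by omega)
    omega
  obtain ⟨P, Q, c, d, hPQ, hc, hd, hcB, hdB⟩ := exists_cut hW.2.1.2.1
    (fun l hl => hr.trans_eq (hlen.2.2 l hl).symm) hmass hB₁ hB₂
  have hle : (P ++ Q) ::ₘ (U₁ + U₂) ≤ U₁ + (U₂ + W') := by
    rw [← Multiset.singleton_add, add_comm, add_assoc]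
    exact add_le_add le_rfl (add_le_add le_rfl (Multiset.singleton_le.2 hPQ))
  obtain ⟨D, hD, hDcard, hins⟩ := (hconn₁ c hcB).exists_insertion_append (hconn₂ d hdB) hexp hY
    (hval.mono (add_le_add le_rfl hle)) hc hd
    (Multiset.nodup_of_le (add_le_add le_rfl (ends_mono hle)) hT) heT
  exact ⟨D, hD.trans hle, by omega, hins⟩

theorem exists_insertion {t k r n : ℕ} (hJ : IsJoined G m) (ht : m ≤ 2 ^ t)
    (hval : Valid G (N + W))
    (hexp : ∀ Z : Finset V, Z.card ≤ m → 4 * Z.card ≤ (nbhd G Z ∩ Y).card)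
    (hY : ∀ v ∈ Y, v ∈ verts N) (hlen : ∀ l ∈ W, l.length = r) (hr : 2 ≤ r) (hk : 20 * m < k * r)
    (hkW : 5 * k + n * (4 * t + 1) ≤ W.card) (hT : (T + ends W).Nodup) (hTN : T ≤ ends N)
    (hTcard : T.card + 2 * n = (ends N).card) :
    ∃ F, Valid G F ∧ verts F = verts N + verts W ∧ ends F = T + ends W := by
  induction n generalizing N W T with
  | zero =>
    exact ⟨N + W, hval, verts_add N W, by
      rw [ends_add, Multiset.eq_of_le_of_card_le hTN (by omega)]⟩
  | succ n ih =>
    have hmul : (n + 1) * (4 * t + 1) = n * (4 * t + 1) + (4 * t + 1) := Nat.add_one_mul _ _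
    obtain ⟨D, hD, hDcard, N', hN'⟩ := exists_insertion_step hJ ht hval hexp hY hlen hr hk
      (by omega) hT hTN (by omega)
    obtain ⟨W, rfl⟩ := Multiset.le_iff_exists_add.1 hD
    obtain ⟨hN, hDW, -⟩ := valid_add.1 hval
    have hcard := hN'.card_eq
    rw [Multiset.card_add] at hkW
    rw [← add_assoc] at hval
    obtain ⟨F, hF, hFv, hFe⟩ := ih (hval.of_verts_eq hN'.valid (by rw [hN'.verts_eq, verts_add]))
      (fun v hv => by simp [hN'.verts_eq, hY v hv])
      (fun l hl => hlen l (Multiset.mem_add.2 (Or.inr hl))) (by omega)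
      (by rwa [ends_add, ← add_assoc] at hT) hN'.le_ends (by
        rw [hN.card_ends] at hTcard
        rw [Multiset.card_add, (valid_add.1 hDW).1.card_ends, hN'.valid.card_ends]
        omega)
    exact ⟨F, hF, by rw [hFv, hN'.verts_eq, verts_add, add_assoc],
      by rw [hFe, ends_add, add_assoc]⟩

end InsertionStep

/-! ### Extendable sets -/

section Extendable

variable {V : Type*} [Fintype V] [DecidableEq V] {G : SimpleGraph V} {m d : ℕ} {A U W : Finset V}
  {o o' : V → ℕ}

/-- The extendability of Friedman and Pippenger for a vertex set `A` of which `o` prescribes the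
out-degrees already used: every set `U` of at most `2 * m` vertices still has `d * |U| - ∑ o`
neighbours outside `A`. -/
def Extendable (G : SimpleGraph V) (m d : ℕ) (A : Finset V) (o : V → ℕ) : Prop :=
  ∀ U : Finset V, U.card ≤ 2 * m → d * U.card ≤ (nbhd G U \ A).card + ∑ u ∈ U, o u

/-- The sets `U` for which the inequality defining `Extendable` is tight. -/
def Critical (G : SimpleGraph V) (m d : ℕ) (A : Finset V) (o : V → ℕ) (U : Finset V) : Prop :=
  U.card ≤ 2 * m ∧ (nbhd G U \ A).card + ∑ u ∈ U, o u ≤ d * U.card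

lemma Extendable.mono (h : Extendable G m d A o) (ho : ∀ u, o u ≤ o' u) :
    Extendable G m d A o' :=
  fun U hU => (h U hU).trans (Nat.add_le_add_left (Finset.sum_le_sum fun u _ => ho u) _)

lemma critical_empty : Critical G m d A o ∅ := by simp [Critical]

lemma Critical.card_lt (hJ : IsJoined G m) (hA : A.card + (2 * d + 3) * m ≤ Fintype.card V)
    (hU : Critical G m d A o U) : U.card < m := by
  obtain ⟨hUm, hUle⟩ := hU
  by_contra! hmU
  have hrest := card_sdiff_nbhd_lt hJ hmU Finset.univ
  have hcover : Fintype.card V ≤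
      (nbhd G U \ A).card + A.card + U.card + (Finset.univ \ (U ∪ nbhd G U)).card := by
    have hsub : (Finset.univ : Finset V) ⊆
        (nbhd G U \ A) ∪ A ∪ U ∪ (Finset.univ \ (U ∪ nbhd G U)) := fun v _ => by
      simp only [Finset.mem_union, Finset.mem_sdiff, Finset.mem_univ, true_and]
      tauto
    rw [← Finset.card_univ]
    refine (Finset.card_le_card hsub).trans ((Finset.card_union_le _ _).trans ?_)
    gcongr
    refine (Finset.card_union_le _ _).trans ?_
    gcongr
    exact Finset.card_union_le _ _
  have hnbhd : (nbhd G U \ A).card ≤ d * (2 * m) :=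
    (Nat.le_add_right _ _).trans (hUle.trans (Nat.mul_le_mul_left d hUm))
  linarith

/-- Tightness is preserved because `U ↦ |N(U) \ A|` is submodular. -/
lemma Extendable.critical_union (h : Extendable G m d A o) (hU : Critical G m d A o U)
    (hW : Critical G m d A o W) (hcard : U.card + W.card ≤ 2 * m) :
    Critical G m d A o (U ∪ W) := by
  have hinter := h (U ∩ W) ((Finset.card_le_card Finset.inter_subset_left).trans hU.1)
  have hsum := Finset.sum_union_inter (s₁ := U) (s₂ := W) (f := o)
  have hsubmod : (nbhd G (U ∪ W) \ A).card + (nbhd G (U ∩ W) \ A).card ≤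
      (nbhd G U \ A).card + (nbhd G W \ A).card := by
    rw [← Finset.card_union_add_card_inter (nbhd G U \ A), nbhd_union,
      Finset.union_sdiff_distrib]
    gcongr
    exact Finset.subset_inter
      (Finset.sdiff_subset_sdiff (nbhd_mono Finset.inter_subset_left) subset_rfl)
      (Finset.sdiff_subset_sdiff (nbhd_mono Finset.inter_subset_right) subset_rfl)
  have hd : d * (U ∪ W).card + d * (U ∩ W).card = d * U.card + d * W.card := by
    rw [← mul_add, Finset.card_union_add_card_inter, mul_add]
  have hUle := hU.2
  have hWle := hW.2
  exact ⟨(Finset.card_union_le U W).trans hcard, by omega⟩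

lemma Extendable.exists_critical_of_not_extendable_insert {v w : V} (h : Extendable G m d A o)
    (hw : ¬Extendable G m d (insert w A) (fun u => o u + if u = v then 1 else 0)) :
    ∃ U, Critical G m d A o U ∧ v ∉ U ∧ w ∈ nbhd G U := by
  unfold Extendable at hw
  push Not at hw
  obtain ⟨U, hU, hlt⟩ := hw
  have hle := h U hU
  have herase : nbhd G U \ insert w A = (nbhd G U \ A).erase w := Finset.sdiff_insert _ _ _
  rw [Finset.sum_add_distrib, Finset.sum_ite_eq', herase] at hlt
  have hcard := Finset.pred_card_le_card_erase (s := nbhd G U \ A) (a := w)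
  refine ⟨U, ⟨hU, by split_ifs at hlt <;> omega⟩, fun hvU => ?_, by_contra fun hwU => ?_⟩
  · rw [if_pos hvU] at hlt
    omega
  · rw [Finset.erase_eq_of_notMem (by simp [hwU])] at hlt
    omega

/-- Otherwise every candidate `w` is blocked by a critical set; the union of these critical sets is
critical and contains all the neighbours of `v`, so adding `v` to it violates extendability. -/
theorem Extendable.exists_leaf {v : V} (hJ : IsJoined G m) (hm : 0 < m)
    (h : Extendable G m d A o) (hv : o v < d)
    (hA : A.card + (2 * d + 3) * m ≤ Fintype.card V) :
    ∃ w ∉ A, G.Adj v w ∧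
      Extendable G m d (insert w A) (fun u => o u + if u = v then 1 else 0) := by
  by_contra! hno
  have hblock : ∀ S ⊆ nbhd G {v} \ A, ∃ U, Critical G m d A o U ∧ v ∉ U ∧ S ⊆ nbhd G U := by
    intro S
    induction S using Finset.induction_on with
    | empty => exact fun _ => ⟨∅, critical_empty, by simp, by simp⟩
    | insert w S _ ih =>
      intro hS
      obtain ⟨U, hU, hvU, hSU⟩ := ih ((Finset.subset_insert _ _).trans hS)
      have hw := hS (Finset.mem_insert_self w S)
      simp only [Finset.mem_sdiff, mem_nbhd, Finset.mem_singleton, exists_eq_left] at hw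
      obtain ⟨W, hW, hvW, hwW⟩ := h.exists_critical_of_not_extendable_insert (hno w hw.2 hw.1)
      have hUm := hU.card_lt hJ hA
      have hWm := hW.card_lt hJ hA
      refine ⟨U ∪ W, h.critical_union hU hW (by omega), by simp [hvU, hvW], ?_⟩
      rw [nbhd_union]
      exact Finset.insert_subset (Finset.mem_union_right _ hwW)
        (hSU.trans Finset.subset_union_left)
  obtain ⟨U, hU, hvU, hS⟩ := hblock _ subset_rfl
  have hUm := hU.card_lt hJ hA
  have hle := h (insert v U) (by rw [Finset.card_insert_of_notMem hvU]; omega)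
  have hnbhd : nbhd G (insert v U) \ A ⊆ nbhd G U \ A := by
    rw [Finset.insert_eq, nbhd_union, Finset.union_sdiff_distrib]
    exact Finset.union_subset (Finset.subset_sdiff.2 ⟨hS, Finset.sdiff_disjoint⟩) subset_rfl
  have hcard := Finset.card_le_card hnbhd
  have hUle := hU.2
  rw [Finset.card_insert_of_notMem hvU, Finset.sum_insert hvU, mul_add, mul_one] at hle
  omega

end Extendable

section Arcs

variable {V : Type*} [DecidableEq V]

/-- The heads of a set of arcs. -/
def heads (E : Finset (V × V)) : Finset V := E.image Prod.snd

/-- The out-degree of a vertex in a set of arcs. -/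
def outdeg (E : Finset (V × V)) (u : V) : ℕ := (E.filter fun e => e.1 = u).card

/-- The arcs of the path that starts at `a` and runs through the vertices of a list. -/
def arcs (a : V) : List V → Finset (V × V)
  | [] => ∅
  | w :: p => insert (a, w) (arcs w p)

variable {E E' E'' : Finset (V × V)} {a u w : V} {p : List V}

@[simp] lemma heads_empty : heads (∅ : Finset (V × V)) = ∅ := rfl

@[simp] lemma outdeg_empty : outdeg ∅ u = 0 := rfl

lemma mem_heads : w ∈ heads E ↔ ∃ u, (u, w) ∈ E := by
  simp [heads]

lemma mem_heads_of_mem (h : (u, w) ∈ E) : w ∈ heads E := mem_heads.2 ⟨u, h⟩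

lemma heads_insert (E : Finset (V × V)) (u w : V) :
    heads (insert (u, w) E) = insert w (heads E) :=
  Finset.image_insert ..

lemma heads_union (E E' : Finset (V × V)) : heads (E ∪ E') = heads E ∪ heads E' :=
  Finset.image_union ..

lemma heads_mono (h : E ⊆ E') : heads E ⊆ heads E' :=
  Finset.image_subset_image h

lemma card_heads_le (E : Finset (V × V)) : (heads E).card ≤ E.card :=
  Finset.card_image_le

lemma outdeg_insert (h : (u, w) ∉ E) (x : V) :
    outdeg (insert (u, w) E) x = outdeg E x + if x = u then 1 else 0 := by
  unfold outdeg
  rw [Finset.filter_insert]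
  by_cases hx : u = x
  · subst hx
    simp [h]
  · simp [hx, Ne.symm hx]

lemma outdeg_insert_le (E : Finset (V × V)) (u w x : V) :
    outdeg (insert (u, w) E) x ≤ outdeg E x + if x = u then 1 else 0 := by
  by_cases h : (u, w) ∈ E
  · rw [Finset.insert_eq_of_mem h]
    exact Nat.le_add_right _ _
  · exact (outdeg_insert h x).le

lemma outdeg_union_le (E E' : Finset (V × V)) (x : V) :
    outdeg (E ∪ E') x ≤ outdeg E x + outdeg E' x := by
  rw [outdeg, Finset.filter_union]
  exact Finset.card_union_le _ _

lemma sum_outdeg (E : Finset (V × V)) (U : Finset V) :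
    ∑ u ∈ U, outdeg E u = (E.filter fun e => e.1 ∈ U).card := by
  rw [Finset.card_eq_sum_card_fiberwise (f := Prod.fst) (t := U)
    (s := E.filter fun e => e.1 ∈ U) (fun e he => (Finset.mem_filter.1 he).2)]
  refine Finset.sum_congr rfl fun u hu => congrArg Finset.card ?_
  rw [Finset.filter_filter]
  exact Finset.filter_congr fun e _ => ⟨fun he => ⟨he ▸ hu, he⟩, And.right⟩

lemma arcs_concat (a w : V) (p : List V) :
    arcs a (p ++ [w]) = insert ((a :: p).getLast (by simp), w) (arcs a p) := by
  induction p generalizing a with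
  | nil => simp [arcs]
  | cons x p ih =>
    simp only [List.cons_append, arcs, ih, List.getLast_cons_cons]
    rw [Finset.insert_comm]

lemma heads_arcs (a : V) (p : List V) : heads (arcs a p) = p.toFinset := by
  induction p generalizing a with
  | nil => rfl
  | cons w p ih => rw [arcs, heads_insert, ih, List.toFinset_cons]

lemma outdeg_arcs_le (a : V) (hp : p.Nodup) (x : V) :
    outdeg (arcs a p) x ≤ (if x = a then 1 else 0) + if x ∈ p then 1 else 0 := by
  induction p generalizing a with
  | nil => simp [arcs]
  | cons w p ih =>
    rw [List.nodup_cons] at hp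
    have htail := ih w hp.2
    have hhead := outdeg_insert_le (arcs w p) a w x
    rw [arcs]
    by_cases hxw : x = w
    · subst hxw
      simp only [if_true, hp.1, if_false, List.mem_cons, true_or] at htail ⊢
      omega
    · simp only [hxw, if_false, List.mem_cons, false_or] at htail ⊢
      omega

lemma isChain_of_arcs {G : SimpleGraph V} (h : ∀ e ∈ arcs a p, G.Adj e.1 e.2) :
    (a :: p).IsChain G.Adj := by
  induction p generalizing a with
  | nil => simp
  | cons w p ih =>
    rw [List.isChain_cons_cons]
    exact ⟨h (a, w) (by simp [arcs]), ih fun e he => h e (by simp [arcs, he])⟩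

/-- The list `p` runs from the root `a` to the vertex `w` along arcs of `E'`, and consists of
vertices that are not covered by the subforest `E`. -/
structure Branch (E E' : Finset (V × V)) (a w : V) (p : List V) : Prop where
  nodup : p.Nodup
  mem_heads : ∀ x ∈ p, x ∈ heads E'
  notMem_heads : ∀ x ∈ p, x ∉ heads E
  arcs_subset : arcs a p ⊆ E'
  getLast : (a :: p).getLast (by simp) = w

namespace Branch

lemma nil : Branch E E' a a [] where
  nodup := List.nodup_nil
  mem_heads := by simp
  notMem_heads := by simp
  arcs_subset := Finset.empty_subset _
  getLast := rfl

lemma mem_tail (h : Branch E E' a w p) (hw : w ≠ a) : w ∈ p := by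
  have hmem := List.getLast_mem (l := a :: p) (by simp)
  rw [h.getLast, List.mem_cons] at hmem
  exact hmem.resolve_left hw

lemma concat (h : Branch E E' a u p) (hE : E ⊆ E') (hE' : E' ⊆ E'')
    (hw : w ∉ heads E') (huw : (u, w) ∈ E'') : Branch E E'' a w (p ++ [w]) where
  nodup := by
    rw [← List.concat_eq_append, List.nodup_concat]
    exact ⟨fun hwp => hw (h.mem_heads w hwp), h.nodup⟩
  mem_heads := by
    simp only [List.mem_append, List.mem_singleton]
    rintro x (hx | rfl)
    · exact heads_mono hE' (h.mem_heads x hx)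
    · exact mem_heads_of_mem huw
  notMem_heads := by
    simp only [List.mem_append, List.mem_singleton]
    rintro x (hx | rfl)
    · exact h.notMem_heads x hx
    · exact fun hx => hw (heads_mono hE hx)
  arcs_subset := by
    rw [arcs_concat, h.getLast]
    exact Finset.insert_subset huw (h.arcs_subset.trans hE')
  getLast := by simp

end Branch

/-- The list `p` consists of the inner vertices of a path of `G` from `a` to `b`, and it avoids
`A`. -/
structure IsConnection (G : SimpleGraph V) (A : Finset V) (a b : V) (p : List V) : Prop where
  nodup : p.Nodup
  notMem : ∀ x ∈ p, x ∉ A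
  isChain : (a :: p ++ [b]).IsChain G.Adj

end Arcs

section Forest

variable {V : Type*} [Fintype V] [DecidableEq V] {G : SimpleGraph V} {m d i : ℕ} {A L : Finset V}
  {o : V → ℕ} {E E' : Finset (V × V)} {a b u v w : V} {p q : List V}

/-- A set `E` of arcs of `G` forming a forest which is rooted in `A`, and whose addition keeps `A`
extendable. -/
structure Forest (G : SimpleGraph V) (m d : ℕ) (A : Finset V) (o : V → ℕ)
    (E : Finset (V × V)) : Prop where
  adj : ∀ e ∈ E, G.Adj e.1 e.2
  head : ∀ e ∈ E, e.2 ∉ A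
  tail : ∀ e ∈ E, e.1 ∈ A ∪ heads E
  injOn : Set.InjOn Prod.snd (E : Set (V × V))
  extendable : Extendable G m d (A ∪ heads E) (fun u => o u + outdeg E u)

lemma Extendable.forest_empty (h : Extendable G m d A o) : Forest G m d A o ∅ where
  adj := by simp
  head := by simp
  tail := by simp
  injOn := by simp
  extendable := by simpa using h

namespace Forest

lemma notMem_of_mem_heads (h : Forest G m d A o E) (hw : w ∈ heads E) : w ∉ A := by
  obtain ⟨u, hu⟩ := mem_heads.1 hw
  exact h.head _ hu

lemma outdeg_eq_zero (h : Forest G m d A o E) (hw : w ∉ A ∪ heads E) : outdeg E w = 0 := by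
  rw [outdeg, Finset.card_eq_zero, Finset.filter_eq_empty_iff]
  rintro e he rfl
  exact hw (h.tail e he)

lemma card_nbhd_sdiff_add_le (h : Forest G m d A o E) (hE : E' ⊆ E) (U : Finset V) :
    (nbhd G U \ (A ∪ heads E)).card + ((E \ E').filter fun e => e.1 ∈ U).card ≤
      (nbhd G U \ (A ∪ heads E')).card := by
  set D := (E \ E').filter fun e => e.1 ∈ U with hD
  have hDE : D ⊆ E \ E' := Finset.filter_subset _ _
  have hinj : Set.InjOn Prod.snd (D : Set (V × V)) :=
    h.injOn.mono (Finset.coe_subset.2 (hDE.trans Finset.sdiff_subset))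
  have hdisj : Disjoint (nbhd G U \ (A ∪ heads E)) (D.image Prod.snd) := by
    refine Finset.sdiff_disjoint.mono_right ?_
    exact (heads_mono (hDE.trans Finset.sdiff_subset)).trans Finset.subset_union_right
  rw [← Finset.card_image_of_injOn hinj, ← Finset.card_union_of_disjoint hdisj]
  refine Finset.card_le_card (Finset.union_subset ?_ fun w hw => ?_)
  · exact Finset.sdiff_subset_sdiff subset_rfl
      (Finset.union_subset_union subset_rfl (heads_mono hE))
  · simp only [hD, Finset.mem_image, Finset.mem_filter, Finset.mem_sdiff] at hw
    obtain ⟨e, ⟨⟨he, heE'⟩, heU⟩, rfl⟩ := hw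
    simp only [Finset.mem_sdiff, Finset.mem_union, mem_heads, mem_nbhd, not_or]
    refine ⟨⟨e.1, heU, h.adj e he⟩, h.head e he, ?_⟩
    rintro ⟨u, hu⟩
    rw [h.injOn (hE hu) he rfl] at hu
    exact heE' hu

/-- Dropping an arc `(u, w)` costs one unit of out-degree at `u` but returns the neighbour `w`. -/
lemma extendable_of_subset (h : Forest G m d A o E) (hE : E' ⊆ E) :
    Extendable G m d (A ∪ heads E') (fun u => o u + outdeg E' u) := by
  intro U hU
  have hext := h.extendable U hU
  have hnbhd := h.card_nbhd_sdiff_add_le hE U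
  simp only [Finset.sum_add_distrib, sum_outdeg] at hext ⊢
  have hsplit : (E.filter fun e => e.1 ∈ U).card =
      (E'.filter fun e => e.1 ∈ U).card + ((E \ E').filter fun e => e.1 ∈ U).card := by
    rw [← Finset.card_union_of_disjoint (Finset.disjoint_filter_filter Finset.disjoint_sdiff),
      ← Finset.filter_union, Finset.union_sdiff_of_subset hE]
  omega

lemma exists_arc (hJ : IsJoined G m) (hm : 0 < m) (h : Forest G m d A o E)
    (hu : u ∈ A ∪ heads E) (hd : o u + outdeg E u < d)
    (hA : A.card + E.card + (2 * d + 3) * m ≤ Fintype.card V) :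
    ∃ w ∉ A ∪ heads E, (u, w) ∉ E ∧ Forest G m d A o (insert (u, w) E) := by
  have hcard := (Finset.card_union_le A (heads E)).trans
    (Nat.add_le_add_left (card_heads_le E) _)
  obtain ⟨w, hw, huw, hext⟩ := h.extendable.exists_leaf hJ hm hd (by omega)
  have hwE : ∀ x, (x, w) ∉ E := fun x hx => hw (Finset.mem_union_right _ (mem_heads_of_mem hx))
  refine ⟨w, hw, hwE u, ?_, ?_, ?_, ?_, ?_⟩
  · exact Finset.forall_mem_insert _ _ _ |>.2 ⟨huw, h.adj⟩
  · exact Finset.forall_mem_insert _ _ _ |>.2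
      ⟨fun hwA => hw (Finset.mem_union_left _ hwA), h.head⟩
  · rw [heads_insert, Finset.union_insert]
    exact Finset.forall_mem_insert _ _ _ |>.2
      ⟨Finset.mem_insert_of_mem hu, fun e he => Finset.mem_insert_of_mem (h.tail e he)⟩
  · rw [Finset.coe_insert, Set.injOn_insert (hwE u)]
    refine ⟨h.injOn, ?_⟩
    rintro ⟨e, he, rfl⟩
    exact hwE e.1 he
  · rw [heads_insert, Finset.union_insert]
    refine hext.mono fun x => ?_
    rw [outdeg_insert (hwE u), add_assoc]

end Forest

/-- `L` is a set of vertices that are not covered by `E`, but are leaves of `E'` attached to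
vertices of `K`. -/
def NewLeaves (A K : Finset V) (E E' : Finset (V × V)) (L : Finset V) : Prop :=
  ∀ w ∈ L, w ∉ A ∪ heads E ∧ outdeg E' w = 0 ∧ ∃ u ∈ K, (u, w) ∈ E'

namespace Forest

lemma exists_layer (hJ : IsJoined G m) (hm : 0 < m) (h : Forest G m d A o E)
    (hL : L ⊆ A ∪ heads E) (hd : ∀ u ∈ L, o u + outdeg E u < d)
    (hA : A.card + E.card + L.card + (2 * d + 3) * m ≤ Fintype.card V) :
    ∃ E' L', E ⊆ E' ∧ Forest G m d A o E' ∧ E'.card = E.card + L.card ∧ L'.card = L.card ∧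
      NewLeaves A L E E' L' ∧
      ∀ x ∈ A ∪ heads E, outdeg E' x = outdeg E x + if x ∈ L then 1 else 0 := by
  induction L using Finset.induction_on with
  | empty => exact ⟨E, ∅, subset_rfl, h, rfl, rfl, by simp [NewLeaves], by simp⟩
  | insert u L hu ih =>
    rw [Finset.card_insert_of_notMem hu] at hA ⊢
    obtain ⟨E', L', hEE', hF, hE'card, hL'card, hL', hout⟩ :=
      ih ((Finset.subset_insert _ _).trans hL) (fun x hx => hd x (Finset.mem_insert_of_mem hx))
        (by omega)
    have huE := hL (Finset.mem_insert_self u L)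
    have hsub : A ∪ heads E ⊆ A ∪ heads E' := Finset.union_subset_union subset_rfl (heads_mono hEE')
    have hlt : o u + outdeg E' u < d := by
      rw [hout u huE, if_neg hu]
      exact hd u (Finset.mem_insert_self u L)
    obtain ⟨w, hw, huw, hF'⟩ := hF.exists_arc hJ hm (hsub huE) hlt (by omega)
    have hwL' : w ∉ L' := fun hwL' => by
      obtain ⟨-, -, x, -, hx⟩ := hL' w hwL'
      exact hw (Finset.mem_union_right _ (mem_heads_of_mem hx))
    have hold : ∀ x ∉ A ∪ heads E, outdeg (insert (u, w) E') x = outdeg E' x := fun x hx => by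
      have hxu : x ≠ u := fun hxu => hx (hxu ▸ huE)
      rw [outdeg_insert huw, if_neg hxu, add_zero]
    refine ⟨insert (u, w) E', insert w L', hEE'.trans (Finset.subset_insert _ _), hF', ?_, ?_, ?_,
      fun x hx => ?_⟩
    · rw [Finset.card_insert_of_notMem huw, hE'card, add_assoc]
    · rw [Finset.card_insert_of_notMem hwL', hL'card]
    · refine Finset.forall_mem_insert _ _ _ |>.2 ⟨?_, fun x hx => ?_⟩
      · have hwE : w ∉ A ∪ heads E := fun hwE => hw (hsub hwE)
        exact ⟨hwE, (hold w hwE).trans (hF.outdeg_eq_zero hw), u, by simp, by simp⟩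
      · obtain ⟨hxE, hxout, v, hv, hvx⟩ := hL' x hx
        exact ⟨hxE, (hold x hxE).trans hxout, v, by simp [hv], by simp [hvx]⟩
    · rw [outdeg_insert huw, hout x hx]
      by_cases hxu : x = u
      · simp [hxu, hu]
      · simp [hxu]

lemma exists_double_layer (hJ : IsJoined G m) (hm : 0 < m) (h : Forest G m d A o E)
    (hL : L ⊆ A ∪ heads E) (hd : ∀ u ∈ L, o u + outdeg E u + 2 ≤ d)
    (hA : A.card + E.card + 2 * L.card + (2 * d + 3) * m ≤ Fintype.card V) :
    ∃ E' L', E ⊆ E' ∧ Forest G m d A o E' ∧ E'.card = E.card + 2 * L.card ∧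
      L'.card = 2 * L.card ∧ NewLeaves A L E E' L' ∧
      ∀ x ∈ A ∪ heads E, x ∉ L → outdeg E' x = outdeg E x := by
  obtain ⟨E₁, L₁, hE₁, hF₁, hE₁card, hL₁card, hL₁, hout₁⟩ := h.exists_layer hJ hm hL
    (fun u hu => by have := hd u hu; omega) (by omega)
  have hsub : A ∪ heads E ⊆ A ∪ heads E₁ := Finset.union_subset_union subset_rfl (heads_mono hE₁)
  obtain ⟨E₂, L₂, hE₂, hF₂, hE₂card, hL₂card, hL₂, hout₂⟩ := hF₁.exists_layer hJ hm (hL.trans hsub)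
    (fun u hu => by have := hd u hu; rw [hout₁ u (hL hu), if_pos hu]; omega) (by omega)
  have hL₁E₁ : ∀ w ∈ L₁, w ∈ A ∪ heads E₁ := fun w hw => by
    obtain ⟨-, -, u, -, hu⟩ := hL₁ w hw
    exact Finset.mem_union_right _ (mem_heads_of_mem hu)
  have hdisj : Disjoint L₁ L₂ :=
    Finset.disjoint_left.2 fun w hw₁ hw₂ => (hL₂ w hw₂).1 (hL₁E₁ w hw₁)
  refine ⟨E₂, L₁ ∪ L₂, hE₁.trans hE₂, hF₂, by omega, ?_, fun w hw => ?_, fun x hx hxL => ?_⟩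
  · rw [Finset.card_union_of_disjoint hdisj, hL₁card, hL₂card, two_mul]
  · rcases Finset.mem_union.1 hw with hw | hw
    · obtain ⟨hwE, hwout, u, hu, huw⟩ := hL₁ w hw
      refine ⟨hwE, ?_, u, hu, hE₂ huw⟩
      rw [hout₂ w (hL₁E₁ w hw), hwout, if_neg fun hwL => hwE (hL hwL)]
    · obtain ⟨hwE₁, hwout, u, hu, huw⟩ := hL₂ w hw
      exact ⟨fun hwE => hwE₁ (hsub hwE), hwout, u, hu, huw⟩
  · rw [hout₂ x (hsub hx), hout₁ x hx, if_neg hxL, add_zero, add_zero]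

end Forest

theorem Forest.exists_tree (hJ : IsJoined G m) (hm : 0 < m) (h : Forest G m d A o E)
    (ha : a ∈ A) (hE : outdeg E a = 0) (had : o a + 2 ≤ d) (hd : ∀ x ∉ A, o x + 2 ≤ d) (i : ℕ)
    (hA : A.card + E.card + 2 * 2 ^ i + (2 * d + 3) * m ≤ Fintype.card V) :
    ∃ (E' : Finset (V × V)) (L : Finset V), E ⊆ E' ∧ Forest G m d A o E' ∧
      E'.card + 2 = E.card + 2 * 2 ^ i ∧ L.card = 2 ^ i ∧
      (∀ x ∈ A, x ≠ a → outdeg E' x = outdeg E x) ∧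
      ∀ w ∈ L, outdeg E' w = 0 ∧ ∃ p, p.length = i ∧ Branch E E' a w p := by
  induction i with
  | zero =>
    refine ⟨E, {a}, subset_rfl, h, by simp, by simp, fun _ _ _ => rfl, fun w hw => ?_⟩
    rw [Finset.mem_singleton.1 hw]
    exact ⟨hE, [], rfl, .nil⟩
  | succ i ih =>
    rw [pow_succ] at hA ⊢
    obtain ⟨E', L, hEE', hF, hE'card, hLcard, hout, hL⟩ := ih (by omega)
    have hLA : ∀ w ∈ L, w = a ∨ w ∈ heads E' := fun w hw => by
      obtain ⟨-, p, -, hp⟩ := hL w hw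
      exact or_iff_not_imp_left.2 fun hwa => hp.mem_heads w (hp.mem_tail hwa)
    have hLE' : L ⊆ A ∪ heads E' := fun w hw => by
      rcases hLA w hw with rfl | hw
      · exact Finset.mem_union_left _ ha
      · exact Finset.mem_union_right _ hw
    have hLd : ∀ w ∈ L, o w + outdeg E' w + 2 ≤ d := fun w hw => by
      rw [(hL w hw).1, add_zero]
      rcases hLA w hw with rfl | hw
      · exact had
      · exact hd w (hF.notMem_of_mem_heads hw)
    obtain ⟨E'', L', hE'', hF', hE''card, hL'card, hL', hout'⟩ :=
      hF.exists_double_layer hJ hm hLE' hLd (by omega)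
    refine ⟨E'', L', hEE'.trans hE'', hF', by omega, by omega, fun x hx hxa => ?_, fun w hw => ?_⟩
    · refine (hout' x (Finset.mem_union_left _ hx) fun hxL => ?_).trans (hout x hx hxa)
      exact hF.notMem_of_mem_heads ((hLA x hxL).resolve_left hxa) hx
    · obtain ⟨hwE', hwout, u, hu, huw⟩ := hL' w hw
      obtain ⟨-, p, hplen, hp⟩ := hL u hu
      exact ⟨hwout, p ++ [w], by simp [hplen],
        hp.concat hEE' hE'' (fun hw => hwE' (Finset.mem_union_right _ hw)) huw⟩

lemma Forest.branch_leaf_ne {E₁ E₂ : Finset (V × V)} (h₁ : Forest G m d A o E₁)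
    (h₂ : Forest G m d A o E₂) (ha : a ∈ A) (hb : b ∈ A) (hab : a ≠ b)
    (hp : Branch E E₁ a v p) (hq : Branch E₁ E₂ b w q) : v ≠ w := by
  rintro rfl
  by_cases hva : v = a
  · subst hva
    exact h₂.notMem_of_mem_heads (hq.mem_heads v (hq.mem_tail hab)) ha
  · have hv₁ := hp.mem_heads v (hp.mem_tail hva)
    have hvb : v ≠ b := fun hvb => h₁.notMem_of_mem_heads hv₁ (hvb ▸ hb)
    exact hq.notMem_heads v (hq.mem_tail hvb) hv₁

lemma Forest.isConnection {E₁ E₂ : Finset (V × V)} (h : Forest G m d A o E₂) (hE : E₁ ⊆ E₂)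
    (hp : Branch E E₁ a v p) (hq : Branch E₁ E₂ b w q) (hvw : G.Adj v w) :
    IsConnection G A a b (p ++ q.reverse) := by
  have hpq : ∀ x ∈ p, x ∉ q := fun x hxp hxq => hq.notMem_heads x hxq (hp.mem_heads x hxp)
  have hpE := hp.arcs_subset.trans hE
  refine ⟨?_, ?_, ?_⟩
  · exact List.nodup_append'.2 ⟨hp.nodup, List.nodup_reverse.2 hq.nodup,
      fun x hx hx' => hpq x hx (List.mem_reverse.1 hx')⟩
  · simp only [List.mem_append, List.mem_reverse]
    rintro x (hx | hx)
    · exact h.notMem_of_mem_heads (heads_mono hE (hp.mem_heads x hx))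
    · exact h.notMem_of_mem_heads (hq.mem_heads x hx)
  · have hsplit : a :: (p ++ q.reverse) ++ [b] = (a :: p) ++ (b :: q).reverse := by simp
    rw [hsplit, List.isChain_append, isChain_adj_reverse, List.head?_reverse,
      List.getLast?_eq_some_getLast (by simp), List.getLast?_eq_some_getLast (by simp),
      hp.getLast, hq.getLast]
    refine ⟨isChain_of_arcs fun e he => h.adj e (hpE he),
      isChain_of_arcs fun e he => h.adj e (hq.arcs_subset he), ?_⟩
    simpa using hvw

lemma Forest.extendable_connection {E₁ E₂ : Finset (V × V)} (h : Forest G m d A o E₂)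
    (hE : E₁ ⊆ E₂) (hp : Branch E E₁ a v p) (hq : Branch E₁ E₂ b w q) :
    Extendable G m d (A ∪ (p ++ q.reverse).toFinset) (fun u => o u + (if u = a then 1 else 0) +
      (if u = b then 1 else 0) + if u ∈ p ++ q.reverse then 1 else 0) := by
  have hext := h.extendable_of_subset
    (Finset.union_subset (hp.arcs_subset.trans hE) hq.arcs_subset)
  have hheads : heads (arcs a p ∪ arcs b q) = (p ++ q.reverse).toFinset := by
    rw [heads_union, heads_arcs, heads_arcs, List.toFinset_append, List.toFinset_reverse]
  rw [hheads] at hext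
  refine hext.mono fun x => ?_
  have hunion := outdeg_union_le (arcs a p) (arcs b q) x
  have hpout := outdeg_arcs_le a hp.nodup x
  have hqout := outdeg_arcs_le b hq.nodup x
  have hmem : (if x ∈ p then 1 else 0) + (if x ∈ q then 1 else 0) ≤
      if x ∈ p ++ q.reverse then 1 else 0 := by
    by_cases hxp : x ∈ p
    · have hxq : x ∉ q := fun hxq => hq.notMem_heads x hxq (hp.mem_heads x hxp)
      simp [hxp, hxq]
    · simp [hxp]
  omega

/-- Binary trees grown from `a` and `b` have `2 ^ i ≥ m` leaves each, so some edge joins them. -/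
theorem Extendable.exists_connection (hJ : IsJoined G m) (hm : 0 < m) (h : Extendable G m d A o)
    (ha : a ∈ A) (hb : b ∈ A) (hab : a ≠ b) (had : o a + 2 ≤ d) (hbd : o b + 2 ≤ d)
    (hd : ∀ x ∉ A, o x + 2 ≤ d) (hi : m ≤ 2 ^ i)
    (hA : A.card + 4 * 2 ^ i + (2 * d + 3) * m ≤ Fintype.card V) :
    ∃ p, p.length = 2 * i ∧ IsConnection G A a b p ∧
      Extendable G m d (A ∪ p.toFinset) (fun u => o u + (if u = a then 1 else 0) +
        (if u = b then 1 else 0) + if u ∈ p then 1 else 0) := by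
  obtain ⟨E₁, L₁, -, hF₁, hE₁card, hL₁card, hout, hL₁⟩ := h.forest_empty.exists_tree hJ hm ha
    outdeg_empty had hd i (by rw [Finset.card_empty]; omega)
  rw [Finset.card_empty] at hE₁card
  obtain ⟨E₂, L₂, hE, hF₂, -, hL₂card, -, hL₂⟩ := hF₁.exists_tree hJ hm hb
    ((hout b hb hab.symm).trans outdeg_empty) hbd hd i (by omega)
  have hdisj : Disjoint L₁ L₂ := Finset.disjoint_left.2 fun w hw₁ hw₂ => by
    obtain ⟨-, p, -, hp⟩ := hL₁ w hw₁
    obtain ⟨-, q, -, hq⟩ := hL₂ w hw₂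
    exact hF₁.branch_leaf_ne hF₂ ha hb hab hp hq rfl
  obtain ⟨v, hv, w, hw, hvw⟩ := exists_adj_of_isJoined hJ hdisj (by omega) (by omega)
  obtain ⟨-, p, hplen, hp⟩ := hL₁ v hv
  obtain ⟨-, q, hqlen, hq⟩ := hL₂ w hw
  exact ⟨p ++ q.reverse, by simp; omega, hF₂.isConnection hE hp hq hvw,
    hF₂.extendable_connection hE hp hq⟩

end Forest

/-! ### Absorbers -/

section Absorber

variable {V : Type*} {G : SimpleGraph V} {a b z a' y : V} {R R' : List V}
  {W : Multiset (List V)} {H : Multiset V}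

/-- If some path family has the ends of the paths in `W` among its ends, then these ends can be
traded for `a` and `y` by absorbing the vertices of `H`: see `Absorber.absorb`. In `step`, the
connector `R` serves if `b` and `z` are the two ends of the same path, and `R'` otherwise. -/
inductive Absorber (G : SimpleGraph V) (y : V) : V → Multiset (List V) → Multiset V → Prop
  | base {a : V} {l : List V} (hl : (a :: l ++ [y]).IsChain G.Adj) :
      Absorber G y a 0 ((a :: l ++ [y] : List V) : Multiset V)
  | step {a b z a' : V} {M R R' : List V} {W : Multiset (List V)} {H : Multiset V}
      (hbz : G.Adj b z) (hab : G.Adj a b) (hM : listEnds M = {b, z})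
      (hR : (z :: R ++ [a']).IsChain G.Adj) (hR' : (a :: R' ++ [a']).IsChain G.Adj)
      (hRR' : R.Perm R') (h : Absorber G y a' W H) :
      Absorber G y a (M ::ₘ W) (a ::ₘ (R + H))

lemma exists_detour {F : Multiset (List V)} {Y : Multiset V} (hF : Valid G F)
    (hends : ends F = {b, z} + Y) (hbz : G.Adj b z) (hab : G.Adj a b)
    (hR : (z :: R ++ [a']).IsChain G.Adj) (hR' : (a :: R' ++ [a']).IsChain G.Adj)
    (hRR' : R.Perm R') :
    ∃ C P, Valid G C ∧ ends C = Y ∧ (a :: P ++ [a']).IsChain G.Adj ∧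
      (P : Multiset V) + verts C = R + verts F := by
  obtain ⟨l, F₀, hre⟩ := exists_reorient_cons (x := b) (F := F) (by simp [hends])
  have hval := hre.valid G hF
  obtain ⟨w, hw⟩ : ∃ w, (b :: l).getLast? = some w :=
    ⟨_, List.getLast?_eq_some_getLast (List.cons_ne_nil b l)⟩
  have hlends : listEnds (b :: l) = {b, w} := by simp [listEnds, hw]
  have hF₀ends : {b, w} + ends F₀ = {b, z} + Y := by
    rw [← hlends, ← ends_cons, hre.ends_eq, hends]
  by_cases hwz : w = z
  · subst hwz
    refine ⟨F₀, b :: l ++ R, (valid_cons.1 hval).2.1, add_left_cancel hF₀ends, ?_, ?_⟩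
    · rw [List.cons_append, List.isChain_cons] at hR
      rw [← List.cons_append, List.append_assoc, List.isChain_append, List.getLast?_cons_cons, hw]
      refine ⟨List.isChain_cons_cons.2 ⟨hab, (valid_cons.1 hval).1.2.1⟩, hR.2, ?_⟩
      rintro _ ⟨⟩
      exact hR.1
    · rw [← hre.verts_eq, verts_cons, ← Multiset.coe_add]
      abel
  · have hz : z ∈ ends F₀ := by
      have hmem : z ∈ ({b, w} : Multiset V) + ends F₀ := by rw [hF₀ends]; simp
      simpa [hbz.ne', Ne.symm hwz] using hmem
    obtain ⟨C, hC, hCverts, hCends⟩ := Mergeable.of_adj (A := {b :: l}) (B := F₀)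
      (by rwa [Multiset.singleton_add]) (x := b) (y := z) (by simp [hlends]) hz hbz
    refine ⟨C, R', hC, add_left_cancel (a := {b, z}) ?_, hR', ?_⟩
    · rw [← hends, ← hre.ends_eq, ← Multiset.singleton_add, ← hCends]
      simp
    · rw [hCverts, Multiset.singleton_add, hre.verts_eq, Multiset.coe_eq_coe.2 hRR']

lemma Valid.exists_prepend {C : Multiset (List V)} {P : List V}
    (h : Valid G ((a :: P) ::ₘ C)) (ha' : a' ∈ ends C) (hP : (a :: P ++ [a']).IsChain G.Adj) :
    ∃ F, Valid G F ∧ verts F = a ::ₘ (P + verts C) ∧ a' ::ₘ ends F = a ::ₘ ends C := by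
  obtain ⟨w, hw⟩ : ∃ w, (a :: P).getLast? = some w :=
    ⟨_, List.getLast?_eq_some_getLast (List.cons_ne_nil a P)⟩
  have hadj : G.Adj w a' := (List.isChain_append.1 hP).2.2 w (by simp [hw]) a' (by simp)
  have hPends : listEnds (a :: P) = {w, a} := by
    rw [Multiset.pair_comm]; simp [listEnds, hw]
  obtain ⟨F, hF, hFverts, hFends⟩ := Mergeable.of_adj (A := {a :: P}) (B := C)
    (by rwa [Multiset.singleton_add]) (x := w) (y := a') (by simp [hPends]) ha' hadj
  refine ⟨F, hF, ?_, (Multiset.cons_inj_right w).1 ?_⟩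
  · rw [hFverts, Multiset.singleton_add, verts_cons, ← Multiset.cons_coe, Multiset.cons_add]
  rw [hFends, ends_add, ends_singleton, hPends]
  simp

theorem Absorber.absorb (h : Absorber G y a W H) {F : Multiset (List V)} {X : Multiset V}
    (hF : Valid G F) (hFH : (verts F + H).Nodup) (hX : ends F = X + ends W) :
    ∃ F', Valid G F' ∧ verts F' = verts F + H ∧ ends F' = X + {a, y} := by
  induction h generalizing X with
  | @base a l hl =>
    refine ⟨(a :: l ++ [y]) ::ₘ F, ⟨?_, ?_⟩, ?_, ?_⟩
    · exact Multiset.forall_mem_cons.2 ⟨⟨by simp, hl⟩, hF.1⟩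
    · rwa [verts_cons, add_comm]
    · rw [verts_cons, add_comm]
    · rw [ends_cons, hX, listEnds_append (by simp) (by simp), add_comm]
      simp
  | @step a b z a' M R R' W H hbz hab hM hR hR' hRR' _ ih =>
    obtain ⟨F', hF', hF'verts, hF'ends⟩ := ih (X := X + {b, z})
      (Multiset.nodup_of_le (add_le_add_right ((Multiset.le_add_left _ _).trans
        (Multiset.le_cons_self _ _)) _) hFH) (by rw [hX, ends_cons, hM, add_assoc])
    obtain ⟨C, P, hC, hCends, hP, hPverts⟩ := exists_detour (Y := X + {a', y}) hF'
      (by rw [hF'ends]; abel) hbz hab hR hR' hRR'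
    have hverts : a ::ₘ ((P : Multiset V) + verts C) = verts F + a ::ₘ (R + H) := by
      rw [hPverts, hF'verts, Multiset.add_cons, ← add_assoc, ← add_assoc, add_comm (R : Multiset V)]
    have hPC : Valid G ((a :: P) ::ₘ C) := by
      refine ⟨Multiset.forall_mem_cons.2 ⟨⟨by simp, (List.isChain_append.1 hP).1⟩, hC.1⟩, ?_⟩
      rwa [verts_cons, ← Multiset.cons_coe, Multiset.cons_add, hverts]
    obtain ⟨E, hE, hEverts, hEends⟩ := hPC.exists_prepend (by simp [hCends]) hP
    refine ⟨E, hE, hEverts.trans hverts, (Multiset.cons_inj_right a').1 ?_⟩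
    rw [hEends, hCends]
    simp only [Multiset.insert_eq_cons, ← Multiset.singleton_add]
    abel

end Absorber

/-! ### Construction of absorbers -/

section AbsorberConstruction

variable {V : Type*} {G : SimpleGraph V} {a b z a' s t v w x y : V} {c g p R R' : List V}

/-- Two paths of `G` ending at `s`, the first starting at `v` and the second at `w`, which visit the
same vertices; they are listed by `R ++ [s]` and `R' ++ [s]`. -/
structure Twin (G : SimpleGraph V) (v w s : V) (R R' : List V) : Prop where
  left_isChain : (R ++ [s]).IsChain G.Adj
  left_head : (R ++ [s]).head? = some v
  right_isChain : (R' ++ [s]).IsChain G.Adj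
  right_head : (R' ++ [s]).head? = some w
  perm : R.Perm R'
  nodup : (R ++ [s]).Nodup

lemma twin_singleton (G : SimpleGraph V) (s : V) : Twin G s s s [] [] := by
  constructor <;> simp

/-- With a path `s, c, y`, the first path continues from `s` to `y` and then to `x`, while the
second one starts at `y`, runs to `s` and back to `w`, and then steps to `x`. -/
lemma Twin.extend (h : Twin G v w s R R') (hc : (s :: c ++ [y]).IsChain G.Adj) (hwx : G.Adj w x)
    (hxy : G.Adj x y) (hnodup : (R ++ s :: c ++ [y] ++ [x]).Nodup) :
    Twin G v y x (R ++ s :: c ++ [y]) (y :: c.reverse ++ s :: R'.reverse) where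
  left_isChain := by
    have hRc : (R ++ (s :: c ++ [y])).IsChain G.Adj := by
      have hR := h.left_isChain
      rw [List.isChain_append] at hR ⊢
      exact ⟨hR.1, hc, by simpa using hR.2.2⟩
    rw [List.isChain_append, List.append_assoc]
    refine ⟨hRc, by simp, ?_⟩
    simpa [List.getLast?_append, List.getLast?_cons] using hxy.symm
  left_head := by
    rw [← h.left_head]
    cases R <;> simp
  right_isChain := by
    have hc' : (y :: c.reverse ++ [s]).IsChain G.Adj := by
      simpa using isChain_adj_reverse.2 hc
    have hR' : (s :: R'.reverse).IsChain G.Adj := by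
      simpa using isChain_adj_reverse.2 h.right_isChain
    have hlast : (s :: R'.reverse).getLast? = some w := by
      rw [← h.right_head, ← List.getLast?_reverse, List.reverse_append, List.reverse_singleton,
        List.singleton_append]
    rw [List.isChain_append, List.getLast?_append_cons, hlast]
    refine ⟨?_, by simp, by simpa using hwx⟩
    rw [List.isChain_append] at hc' ⊢
    exact ⟨hc'.1, hR', by simpa using hc'.2.2⟩
  right_head := by simp
  perm := by
    rw [← Multiset.coe_eq_coe]
    simp only [← Multiset.coe_add, ← Multiset.cons_coe, ← Multiset.singleton_add,
      Multiset.coe_nil, Multiset.coe_reverse, Multiset.coe_eq_coe.2 h.perm]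
    abel
  nodup := hnodup

/-- The new vertices of one step of an absorber: a triangle-like end `a, b, z`, and the two
connectors `R` and `R'` to `a'`. -/
structure Switch (G : SimpleGraph V) (A : Finset V) (a b z a' : V) (R R' : List V) : Prop where
  adj_left : G.Adj a b
  adj_right : G.Adj b z
  isChain : (z :: R ++ [a']).IsChain G.Adj
  isChain' : (a :: R' ++ [a']).IsChain G.Adj
  perm : R.Perm R'
  nodup : (b :: z :: (R ++ [a'])).Nodup
  notMem : ∀ x ∈ b :: z :: (R ++ [a']), x ∉ A

/-- An absorber `(W, H)` between `a` and `y` which consists of `κ` paths with `r` vertices each,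
lives in `A'`, and meets `A` in no vertices other than `a` and `y`. -/
structure AbsorberIn (G : SimpleGraph V) (A A' : Finset V) (a y : V) (κ r : ℕ)
    (W : Multiset (List V)) (H : Multiset V) : Prop where
  absorber : Absorber G y a W H
  card_eq : W.card = κ
  length_eq : ∀ l ∈ W, l.length = r
  valid : Valid G W
  nodup : (H + verts W).Nodup
  mem : ∀ v ∈ H + verts W, v ∈ A'
  eq_or_eq : ∀ v ∈ H + verts W, v ∈ A → v = a ∨ v = y

variable {A A' A'' : Finset V}

lemma Switch.nodup_append (hS : Switch G A a b z a' R R')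
    (hmem : ∀ x ∈ b :: z :: (R ++ [a']), x ∈ A') (hp : IsConnection G A' b z p) :
    (p ++ b :: z :: R ++ [a']).Nodup := by
  simpa using List.nodup_append'.2 ⟨hp.nodup, hS.nodup, fun x hxp hx => hp.notMem x hxp (hmem x hx)⟩

variable [DecidableEq V]

lemma IsConnection.prepend (hgnodup : g.Nodup) (hgA : ∀ x ∈ g, x ∉ A)
    (hg : (b :: g).IsChain G.Adj) (ht : (b :: g).getLast? = some t)
    (h : IsConnection G (A ∪ g.toFinset) t z c) : IsConnection G A b z (g ++ c) where
  nodup := List.nodup_append'.2 ⟨hgnodup, h.nodup, fun x hxg hxc => h.notMem x hxc (by simp [hxg])⟩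
  notMem x hx := (List.mem_append.1 hx).elim (hgA x) fun hxc hxA => h.notMem x hxc (by simp [hxA])
  isChain := by
    have hc := h.isChain
    rw [List.cons_append, List.isChain_cons] at hc
    rw [← List.cons_append, List.append_assoc, List.isChain_append, ht]
    refine ⟨hg, hc.2, ?_⟩
    rintro _ ⟨⟩
    exact hc.1

lemma absorberIn_of_isConnection (ha : a ∈ A) (hy : y ∈ A) (hay : a ≠ y)
    (h : IsConnection G A a y p) (r : ℕ) :
    AbsorberIn G A (A ∪ p.toFinset) a y 0 r 0 ((a :: p ++ [y] : List V) : Multiset V) where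
  absorber := .base h.isChain
  card_eq := rfl
  length_eq := by simp
  valid := valid_zero
  nodup := by
    have hap : a ∉ p := fun hp => h.notMem a hp ha
    have hyp : y ∉ p := fun hp => h.notMem y hp hy
    simp [List.nodup_append', h.nodup, hap, hyp, hay]
  mem v hv := by
    simp only [verts_zero, add_zero, Multiset.mem_coe, List.mem_append, List.mem_cons,
      List.not_mem_nil, or_false] at hv
    rcases hv with (rfl | hv) | rfl <;> simp [*]
  eq_or_eq v hv hvA := by
    simp only [verts_zero, add_zero, Multiset.mem_coe, List.mem_append, List.mem_cons,
      List.not_mem_nil, or_false] at hv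
    rcases hv with (rfl | hv) | rfl
    exacts [.inl rfl, absurd hvA (h.notMem v hv), .inr rfl]

lemma Switch.mem_notMem_ne (hS : Switch G A a b z a' R R') (hA : A ⊆ A')
    (hmem : ∀ x ∈ b :: z :: (R ++ [a']), x ∈ A') (hp : IsConnection G A' b z p) :
    ∀ x ∈ p ++ b :: z :: R, x ∈ A' ∪ p.toFinset ∧ x ∉ A ∧ x ≠ a' := fun x hx => by
  have hmemR : ∀ x ∈ b :: z :: R, x ∈ b :: z :: (R ++ [a']) := fun x hx => by simp at hx ⊢; tauto
  have ha' := (List.nodup_append'.1 (hS.nodup_append hmem hp)).2.2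
  refine ⟨?_, ?_, fun e => ha' hx (by simp [e])⟩ <;> rcases List.mem_append.1 hx with hxp | hxS
  exacts [by simp [hxp], Finset.mem_union_left _ (hmem x (hmemR x hxS)),
    fun hxA => hp.notMem x hxp (hA hxA), hS.notMem x (hmemR x hxS)]

lemma AbsorberIn.cons {κ r : ℕ} {W : Multiset (List V)} {H : Multiset V} (ha : a ∈ A) (hy : y ∈ A)
    (hay : a ≠ y) (hS : Switch G A a b z a' R R') (hA : A ⊆ A')
    (hmem : ∀ x ∈ b :: z :: (R ++ [a']), x ∈ A') (hp : IsConnection G A' b z p)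
    (hr : p.length + 2 = r) (hA'' : A' ∪ p.toFinset ⊆ A'')
    (h : AbsorberIn G (A' ∪ p.toFinset) A'' a' y κ r W H) :
    AbsorberIn G A A'' a y (κ + 1) r ((b :: p ++ [z]) ::ₘ W) (a ::ₘ (R + H)) := by
  have hnodup := (List.nodup_append'.1 (hS.nodup_append hmem hp)).1
  let S : List V := p ++ b :: z :: R
  have hSnew : ∀ x ∈ S, x ∈ A' ∪ p.toFinset ∧ x ∉ A ∧ x ≠ a' := hS.mem_notMem_ne hA hmem hp
  have hverts : a ::ₘ ((R : Multiset V) + H) + verts ((b :: p ++ [z]) ::ₘ W) =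
      a ::ₘ ((S : Multiset V) + (H + verts W)) := by
    rw [verts_cons]
    simp only [S, ← Multiset.coe_add, ← Multiset.cons_coe, ← Multiset.singleton_add,
      Multiset.coe_nil]
    abel
  have hold : ∀ v ∈ H + verts W, v ∈ A → v = y := fun v hv hvA =>
    (h.eq_or_eq v hv (Finset.mem_union_left _ (hA hvA))).resolve_left
      fun hva' => hS.notMem a' (by simp) (hva' ▸ hvA)
  have hSdisj : ∀ x ∈ S, x ∉ H + verts W := fun x hx hxW => by
    rcases h.eq_or_eq x hxW (hSnew x hx).1 with rfl | rfl
    exacts [(hSnew x hx).2.2 rfl, (hSnew x hx).2.1 hy]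
  have haW : a ∉ H + verts W := fun hmem => hay (hold a hmem ha)
  refine ⟨.step hS.adj_right hS.adj_left ?_ hS.isChain hS.isChain' hS.perm h.absorber,
    by simp [h.card_eq], ?_, ?_, ?_, fun v hv => ?_, fun v hv hvA => ?_⟩
  · rw [listEnds_append (by simp) (by simp)]
    simp
  · exact Multiset.forall_mem_cons.2 ⟨by simpa using hr, h.length_eq⟩
  · refine valid_cons.2 ⟨⟨by simp, hp.isChain, ?_⟩, h.valid, fun v hv hvW => ?_⟩
    · have hperm : (p ++ [b, z]).Perm (b :: p ++ [z]) := by simp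
      exact hperm.nodup_iff.1 (hnodup.sublist (by simp))
    · exact hSdisj v (by simp [S] at hv ⊢; tauto) (Multiset.mem_add.2 (.inr hvW))
  · rw [hverts, Multiset.nodup_cons, Multiset.nodup_add, Multiset.mem_add, not_or]
    exact ⟨⟨fun haS => (hSnew a haS).2.1 ha, haW⟩, hnodup, h.nodup,
      Multiset.disjoint_left.2 fun {x} hx => hSdisj x hx⟩
  · rw [hverts, Multiset.mem_cons, Multiset.mem_add, Multiset.mem_coe] at hv
    rcases hv with rfl | hv | hv
    exacts [hA'' (Finset.mem_union_left _ (hA ha)), hA'' (hSnew v hv).1, h.mem v hv]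
  · rw [hverts, Multiset.mem_cons, Multiset.mem_add, Multiset.mem_coe] at hv
    rcases hv with rfl | hv | hv
    exacts [.inl rfl, absurd hvA (hSnew v hv).2.1, .inr (hold v hv hvA)]

variable [Fintype V] {m d i n n' : ℕ} {o o' o'' : V → ℕ} {T T' : Set V}

/-- The number of vertices which have to be left outside an extendable set in order to extend it by
`Extendable.exists_leaf` or `Extendable.exists_connection`. -/
def reserve (m d i : ℕ) : ℕ := 4 * 2 ^ i + (2 * d + 3) * m

/-- The hypotheses under which absorbers are built: connections in a graph which is `m`-joined have
two halves of `i` vertices each. -/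
structure Setting (G : SimpleGraph V) (m d i : ℕ) : Prop where
  isJoined : IsJoined G m
  pos : 0 < m
  six_le : 6 ≤ d
  le_two_pow : m ≤ 2 ^ i

/-- An extendable set in which the number `o x` of times a vertex `x` has been used is bounded. -/
structure Tame (G : SimpleGraph V) (m d : ℕ) (A : Finset V) (o : V → ℕ) : Prop where
  extendable : Extendable G m d A o
  le_four : ∀ x, o x ≤ 4
  eq_zero : ∀ x ∉ A, o x = 0

/-- The set `A` grows to a tame set `A'` by at most `n` vertices, and of the vertices of `A` only
those in `T` are used in doing so. -/
structure Growth (G : SimpleGraph V) (m d : ℕ) (A A' : Finset V) (o o' : V → ℕ) (n : ℕ)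
    (T : Set V) : Prop where
  tame : Tame G m d A' o'
  subset : A ⊆ A'
  card_le : A'.card ≤ A.card + n
  eq_of_notMem : ∀ x ∈ A, x ∉ T → o' x = o x

namespace Growth

lemma refl (h : Tame G m d A o) (T : Set V) : Growth G m d A A o o 0 T :=
  ⟨h, subset_rfl, le_rfl, fun _ _ _ => rfl⟩

lemma mono (h : Growth G m d A A' o o' n T) (hT : T ⊆ T') : Growth G m d A A' o o' n T' :=
  ⟨h.tame, h.subset, h.card_le, fun x hx hxT => h.eq_of_notMem x hx (mt (@hT x) hxT)⟩

lemma trans (h : Growth G m d A A' o o' n T) (h' : Growth G m d A' A'' o' o'' n' T')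
    (hT : ∀ x ∈ A, x ∈ T' → x ∈ T) : Growth G m d A A'' o o'' (n + n') T where
  tame := h'.tame
  subset := h.subset.trans h'.subset
  card_le := by have := h.card_le; have := h'.card_le; omega
  eq_of_notMem x hx hxT := by
    rw [h'.eq_of_notMem x (h.subset hx) (mt (hT x hx) hxT), h.eq_of_notMem x hx hxT]

end Growth

namespace Tame

lemma exists_leaf (S : Setting G m d i) (h : Tame G m d A o) (hv : v ∈ A) (hov : o v ≤ 3)
    (hA : A.card + reserve m d i ≤ Fintype.card V) :
    ∃ w ∉ A, G.Adj v w ∧ ∃ o', Growth G m d A (insert w A) o o' 1 {v} ∧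
      o' v = o v + 1 ∧ o' w = 0 := by
  have hd := S.six_le
  unfold reserve at hA
  obtain ⟨w, hw, hvw, hE⟩ := h.extendable.exists_leaf S.isJoined S.pos (v := v) (by omega)
    (by omega)
  have hwv : w ≠ v := hvw.ne'
  refine ⟨w, hw, hvw, _, ⟨⟨hE, fun x => ?_, fun x hx => ?_⟩, Finset.subset_insert w A,
    Finset.card_insert_le w A, fun x _ hx => ?_⟩, by simp, by simp [hwv, h.eq_zero w hw]⟩
  · have := h.le_four x
    split_ifs with hx
    · subst hx; omega
    · omega
  · rw [Finset.mem_insert, not_or] at hx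
    simp [h.eq_zero x hx.2, ne_of_mem_of_not_mem hv hx.2 |>.symm]
  · simp [Set.mem_singleton_iff.not.1 hx]

lemma exists_connection (S : Setting G m d i) (h : Tame G m d A o) (ha : a ∈ A) (hb : b ∈ A)
    (hab : a ≠ b) (hoa : o a ≤ 3) (hob : o b ≤ 3)
    (hA : A.card + reserve m d i ≤ Fintype.card V) :
    ∃ p, p.length = 2 * i ∧ IsConnection G A a b p ∧
      ∃ o', Growth G m d A (A ∪ p.toFinset) o o' (2 * i) {a, b} ∧ o' a = o a + 1 ∧
        ∀ x ∈ p, o' x = 1 := by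
  have hd := S.six_le
  unfold reserve at hA
  obtain ⟨p, hlen, hp, hE⟩ := h.extendable.exists_connection S.isJoined S.pos ha hb hab
    (by omega) (by omega) (fun x hx => by rw [h.eq_zero x hx]; omega) S.le_two_pow (by omega)
  have hApx : ∀ x ∈ A, x ∉ p := fun x hx hxp => hp.notMem x hxp hx
  have hpne : ∀ x ∈ p, o x = 0 ∧ x ≠ a ∧ x ≠ b := fun x hx =>
    ⟨h.eq_zero x (hp.notMem x hx), fun e => hApx a ha (e ▸ hx), fun e => hApx b hb (e ▸ hx)⟩
  refine ⟨p, hlen, hp, _, ⟨⟨hE, fun x => ?_, fun x hx => ?_⟩, Finset.subset_union_left,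
    ?_, fun x hx hxT => ?_⟩, by simp [hab, hApx a ha], fun x hx => by simp [hx, hpne x hx]⟩
  · have := h.le_four x
    by_cases hxp : x ∈ p
    · simp [hxp, hpne x hxp]
    · by_cases hxa : x = a
      · subst hxa; simp [hab, hxp]; omega
      · by_cases hxb : x = b
        · subst hxb; simp [hxa, hxp]; omega
        · simpa [hxp, hxa, hxb] using this
  · rw [Finset.mem_union, not_or, List.mem_toFinset] at hx
    simp [h.eq_zero x hx.1, hx.2, (ne_of_mem_of_not_mem ha hx.1).symm,
      (ne_of_mem_of_not_mem hb hx.1).symm]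
  · exact (Finset.card_union_le _ _).trans
      (Nat.add_le_add_left ((List.toFinset_card_le p).trans hlen.le) _)
  · rw [Set.mem_insert_iff, Set.mem_singleton_iff, not_or] at hxT
    simp [hxT, hApx x hx]

lemma exists_path (S : Setting G m d i) (k : ℕ) (h : Tame G m d A o) (hv : v ∈ A)
    (hov : o v ≤ 3) (hA : A.card + k + reserve m d i ≤ Fintype.card V) :
    ∃ g : List V, g.length = k ∧ g.Nodup ∧ (∀ x ∈ g, x ∉ A) ∧ (v :: g).IsChain G.Adj ∧
      ∃ o', Growth G m d A (A ∪ g.toFinset) o o' k {v} ∧ o' v ≤ o v + 1 ∧ ∀ x ∈ g, o' x ≤ 1 := by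
  induction k generalizing A o v with
  | zero => exact ⟨[], rfl, by simp, by simp, by simp, o, by simpa using Growth.refl h {v},
      by simp, by simp⟩
  | succ k ih =>
    obtain ⟨w, hw, hvw, o₁, h₁, hv₁, hw₁⟩ := h.exists_leaf S hv hov (by omega)
    obtain ⟨g, hglen, hgnodup, hgA, hg, o₂, h₂, hw₂, hg₂⟩ := ih h₁.tame
      (Finset.mem_insert_self w A) (by omega) (by have := h₁.card_le; omega)
    have hwg : w ∉ g := fun hwg => hgA w hwg (Finset.mem_insert_self w A)
    have hunion : A ∪ (w :: g).toFinset = insert w A ∪ g.toFinset := by ext; simp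
    refine ⟨w :: g, by simp [hglen], List.nodup_cons.2 ⟨hwg, hgnodup⟩,
      List.forall_mem_cons.2 ⟨hw, fun x hx hxA => hgA x hx (Finset.mem_insert_of_mem hxA)⟩,
      List.isChain_cons_cons.2 ⟨hvw, hg⟩, o₂, ?_, ?_, List.forall_mem_cons.2 ⟨by omega, hg₂⟩⟩
    · rw [hunion, add_comm k]
      refine h₁.trans h₂ fun x hx hxw => ?_
      exact absurd hx (by rwa [Set.mem_singleton_iff.1 hxw])
    · rw [h₂.eq_of_notMem v (Finset.mem_insert_of_mem hv) (by simpa using hvw.ne), hv₁]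

/-- A connection with `k` more inner vertices. -/
lemma exists_long_connection (S : Setting G m d i) (k : ℕ) (h : Tame G m d A o) (hb : b ∈ A)
    (hz : z ∈ A) (hbz : b ≠ z) (hob : o b ≤ 2) (hoz : o z ≤ 3)
    (hA : A.card + (k + 2 * i) + reserve m d i ≤ Fintype.card V) :
    ∃ p, p.length = k + 2 * i ∧ IsConnection G A b z p ∧
      ∃ o', Growth G m d A (A ∪ p.toFinset) o o' (k + 2 * i) {b, z} := by
  obtain ⟨g, hglen, hgnodup, hgA, hg, o₁, h₁, hb₁, hg₁⟩ :=
    h.exists_path S k hb (by omega) (by omega)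
  obtain ⟨t, ht⟩ : ∃ t, (b :: g).getLast? = some t :=
    ⟨_, List.getLast?_eq_some_getLast (List.cons_ne_nil b g)⟩
  have htg : t = b ∨ t ∈ g := by simpa using List.mem_of_mem_getLast? ht
  have ht₁ : t ≠ z ∧ o₁ t ≤ 3 ∧ t ∈ A ∪ g.toFinset ∧ (t ∈ A → t = b) := by
    rcases htg with rfl | htg
    · exact ⟨hbz, by omega, Finset.mem_union_left _ hb, fun _ => rfl⟩
    · exact ⟨fun e => hgA t htg (e ▸ hz), (hg₁ t htg).trans (by omega), by simp [htg],
        fun htA => absurd htA (hgA t htg)⟩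
  have hz₁ : o₁ z = o z := h₁.eq_of_notMem z hz (by simpa using hbz.symm)
  obtain ⟨c, hclen, hc, o₂, h₂, -⟩ := h₁.tame.exists_connection S ht₁.2.2.1
    (h₁.subset hz) ht₁.1 ht₁.2.1 (by omega) (by have := h₁.card_le; omega)
  refine ⟨g ++ c, by simp [hglen, hclen], hc.prepend hgnodup hgA hg ht, o₂, ?_⟩
  rw [List.toFinset_append, ← Finset.union_assoc]
  refine (h₁.mono (by simp)).trans h₂ ?_
  rintro x hx (rfl | hxz)
  exacts [.inl (ht₁.2.2.2 hx), .inr hxz]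

lemma exists_twin_extend (S : Setting G m d i) (h : Tame G m d A o) (hT : Twin G v w s R R')
    (hwx : G.Adj w x) (hxy : G.Adj x y) (hnodup : (R ++ s :: x :: y :: p).Nodup)
    (hmem : ∀ u ∈ R ++ s :: x :: y :: p, u ∈ A) (hos : o s ≤ 3) (hoy : o y ≤ 3)
    (hA : A.card + reserve m d i ≤ Fintype.card V) :
    ∃ Q Q' A' o', Growth G m d A A' o o' (2 * i) {s, y} ∧ Twin G v y x Q Q' ∧
      (Q ++ x :: p).Nodup ∧ ∀ u ∈ Q, u ∈ A' ∧ (u ∈ A → u ∈ R ++ [s, y]) := by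
  have hsy : s ≠ y := by
    rintro rfl
    simp [List.nodup_append'] at hnodup
  obtain ⟨c, -, hc, o', h', -, -⟩ := h.exists_connection S (hmem s (by simp)) (hmem y (by simp))
    hsy hos hoy hA
  have hperm : (c ++ (R ++ s :: x :: y :: p)).Perm (R ++ s :: c ++ [y] ++ x :: p) := by
    rw [← Multiset.coe_eq_coe]
    simp only [← Multiset.coe_add, ← Multiset.cons_coe, ← Multiset.singleton_add,
      Multiset.coe_nil]
    abel
  have hnodup' := hperm.nodup_iff.1 (List.nodup_append'.2 ⟨hc.nodup, hnodup, fun u huc hu =>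
    hc.notMem u huc (hmem u hu)⟩)
  refine ⟨_, _, _, o', h', hT.extend hc.isChain hwx hxy (hnodup'.sublist (by simp)), hnodup',
    fun u hu => ⟨?_, fun huA => ?_⟩⟩
  · have := hmem u
    simp at this hu ⊢
    tauto
  · have := mt (hc.notMem u) (not_not.2 huA)
    simp at hu ⊢
    tauto

/-- Each pair `x, y` of consecutive vertices of `p` is used to extend the two paths. -/
lemma exists_twin (S : Setting G m d i) (j : ℕ) (h : Tame G m d A o) (hT : Twin G v w s R R')
    (hp : p.length = 2 * j) (hwp : (w :: p).IsChain G.Adj) (hnodup : (R ++ s :: p).Nodup)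
    (hmem : ∀ x ∈ R ++ s :: p, x ∈ A) (ho : ∀ x ∈ s :: p, o x ≤ 2)
    (hA : A.card + 2 * i * j + reserve m d i ≤ Fintype.card V) :
    ∃ s' w' Q Q' A' o', Growth G m d A A' o o' (2 * i * j) {x | x ∈ s :: p} ∧
      Twin G v w' s' Q Q' ∧ o' s' ≤ 2 ∧ (w :: p).getLast? = some w' ∧
      ∀ x ∈ Q ++ [s'], x ∈ A' ∧ (x ∈ A → x ∈ R ++ s :: p) := by
  induction j generalizing A o w s R R' p with
  | zero =>
    obtain rfl : p = [] := by simpa using hp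
    exact ⟨s, w, R, R', A, o, .refl h _, hT, ho s (by simp), by simp,
      fun x hx => ⟨hmem x hx, fun _ => hx⟩⟩
  | succ j ih =>
    obtain ⟨x, y, p, rfl⟩ : ∃ x y q, p = x :: y :: q := by
      match p, hp with
      | x :: y :: q, _ => exact ⟨x, y, q, rfl⟩
    rw [List.isChain_cons_cons, List.isChain_cons_cons] at hwp
    rw [Nat.mul_succ] at hA ⊢
    obtain ⟨R₁, R₁', A₁, o₁, h₁, hT₁, hnodup₁, hmem₁⟩ := h.exists_twin_extend S hT hwp.1 hwp.2.1
      hnodup hmem ((ho s (by simp)).trans (by omega)) ((ho y (by simp)).trans (by omega))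
      (by omega)
    have hxp : ∀ u ∈ x :: p, u ∈ A ∧ o₁ u ≤ 2 := fun u hu => by
      have huA : u ∈ A := hmem u (by simp at hu ⊢; tauto)
      have hsy : u ∉ ({s, y} : Set V) := by
        have := (List.nodup_append'.1 hnodup).2.1
        rintro (rfl | rfl) <;> simp at hu this <;> tauto
      rw [h₁.eq_of_notMem u huA hsy]
      exact ⟨huA, ho u (by simp at hu ⊢; tauto)⟩
    obtain ⟨s', w', Q, Q', A', o', h', hQ, hs', hlast, hQmem⟩ := ih h₁.tame hT₁
      (by simp at hp; omega) hwp.2.2 hnodup₁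
      (List.forall_mem_append.2 ⟨fun u hu => (hmem₁ u hu).1, fun u hu => h₁.subset (hxp u hu).1⟩)
      (fun u hu => (hxp u hu).2) (by have := h₁.card_le; omega)
    refine ⟨s', w', Q, Q', A', o', ?_, hQ, hs', by simpa only [List.getLast?_cons_cons],
      fun u hu => ⟨(hQmem u hu).1, fun huA => ?_⟩⟩
    · rw [add_comm (2 * i * j)]
      refine (h₁.mono (T' := {u | u ∈ s :: x :: y :: p}) ?_).trans h' fun u _ hu => ?_
      · rintro u (rfl | rfl) <;> simp
      · simp at hu ⊢
        tauto
    · have huQ := (hQmem u hu).2 (h₁.subset huA)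
      have huR := (hmem₁ u · |>.2 huA)
      simp at huQ huR ⊢
      tauto

lemma exists_twin_adj (S : Setting G m d i) (h : Tame G m d A o) (hw : w ∈ A) (ha : a ∈ A)
    (hwa : w ≠ a) (how : o w ≤ 1) (hoa : o a ≤ 3)
    (hA : A.card + (2 * i + 2 * i * i) + reserve m d i ≤ Fintype.card V) :
    ∃ s w' Q Q' A' o', Growth G m d A A' o o' (2 * i + 2 * i * i) {w, a} ∧
      Twin G w w' s Q Q' ∧ G.Adj a w' ∧ o' s ≤ 2 ∧ ∀ x ∈ Q ++ [s], x ∈ A' ∧ (x ∈ A → x = w) := by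
  obtain ⟨p, hplen, hp, o₁, h₁, hw₁, hp₁⟩ := h.exists_connection S hw ha hwa (by omega) hoa
    (by omega)
  have hpA : ∀ x ∈ A, x ∉ p := fun x hx hxp => hp.notMem x hxp hx
  obtain ⟨hwp, -, hlast_adj⟩ := List.isChain_append.1 hp.isChain
  obtain ⟨s, w', Q, Q', A', o', h₂, hQ, hs, hlast, hQmem⟩ := h₁.tame.exists_twin S i
    (twin_singleton G w) hplen hwp (by simpa using ⟨hpA w hw, hp.nodup⟩) (by simp +contextual [hw])
    (List.forall_mem_cons.2 ⟨by omega, fun x hx => by rw [hp₁ x hx]; omega⟩)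
    (by have := h₁.card_le; omega)
  refine ⟨s, w', Q, Q', A', o', h₁.trans h₂ fun x hx hxp => ?_, hQ,
    (hlast_adj w' hlast a (by simp)).symm, hs, fun x hx => ⟨(hQmem x hx).1, fun hxA => ?_⟩⟩
  · exact .inl ((List.mem_cons.1 hxp).resolve_right (hpA x hx))
  · exact (List.mem_cons.1 ((hQmem x hx).2 (h₁.subset hxA))).resolve_right (hpA x hxA)

lemma exists_switch (S : Setting G m d i) (h : Tame G m d A o) (ha : a ∈ A) (hoa : o a ≤ 2)
    (hA : A.card + (3 + 2 * i + 2 * i * i) + reserve m d i ≤ Fintype.card V) :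
    ∃ b z a' R R' A' o', Growth G m d A A' o o' (3 + 2 * i + 2 * i * i) {a} ∧
      Switch G A a b z a' R R' ∧ (∀ x ∈ b :: z :: (R ++ [a']), x ∈ A') ∧
      o' b ≤ 1 ∧ o' z ≤ 1 ∧ o' a' ≤ 2 := by
  obtain ⟨g, hglen, hgnodup, hgA, hg, o₁, h₁, ha₁, hg₁⟩ :=
    h.exists_path S 3 ha (by omega) (by omega)
  obtain ⟨b, z, w, rfl⟩ := List.length_eq_three.1 hglen
  have hcard₁ := h₁.card_le
  have hbzw : b ≠ z ∧ b ≠ w ∧ z ≠ w := by simpa [and_assoc] using hgnodup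
  simp only [List.isChain_cons_cons] at hg
  obtain ⟨s, w', Q, Q', A', o', h₂, hQ, haw', hs₂, hQmem⟩ := h₁.tame.exists_twin_adj S (w := w)
    (a := a) (by simp) (h₁.subset ha) (fun e => hgA w (by simp) (e ▸ ha)) (hg₁ w (by simp))
    (by omega) (by omega)
  have hval : ∀ x ∈ [b, z], o' x ≤ 1 ∧ x ∈ A' ∧ x ∉ Q ++ [s] := fun x hx => by
    have hxw : x ≠ w := by rintro rfl; simp at hx; tauto
    have hxa : x ≠ a := by rintro rfl; exact hgA x (by simp at hx ⊢; tauto) ha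
    have hx₁ : x ∈ A ∪ [b, z, w].toFinset := by simp at hx ⊢; tauto
    refine ⟨?_, h₂.subset hx₁, fun hxQ => hxw ((hQmem x hxQ).2 hx₁)⟩
    rw [h₂.eq_of_notMem x hx₁ (by simp [hxw, hxa])]
    exact hg₁ x (by simp at hx ⊢; tauto)
  obtain ⟨hb, hbA', hbQ⟩ := hval b (by simp)
  obtain ⟨hz, hzA', hzQ⟩ := hval z (by simp)
  refine ⟨b, z, s, Q, Q', A', o', ?_, ⟨hg.1, hg.2.1, ?_, ?_, hQ.perm, ?_, ?_⟩, ?_, hb, hz, hs₂⟩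
  · rw [add_assoc 3]
    refine h₁.trans h₂ ?_
    rintro x hx (rfl | hxa)
    exacts [absurd hx (hgA x (by simp)), hxa]
  · simpa [List.isChain_cons, hQ.left_head] using ⟨hg.2.2.1, hQ.left_isChain⟩
  · simpa [List.isChain_cons, hQ.right_head] using ⟨haw', hQ.right_isChain⟩
  · exact List.nodup_cons.2 ⟨List.not_mem_cons_of_ne_of_not_mem hbzw.1 hbQ,
      List.nodup_cons.2 ⟨hzQ, hQ.nodup⟩⟩
  · refine List.forall_mem_cons.2 ⟨hgA b (by simp), List.forall_mem_cons.2 ⟨hgA z (by simp),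
      fun x hx hxA => hgA w (by simp) ?_⟩⟩
    exact (hQmem x hx).2 (Finset.mem_union_left _ hxA) ▸ hxA
  · exact List.forall_mem_cons.2 ⟨hbA', List.forall_mem_cons.2 ⟨hzA', fun x hx => (hQmem x hx).1⟩⟩

theorem exists_absorberIn (S : Setting G m d i) (k κ : ℕ) (h : Tame G m d A o) (ha : a ∈ A)
    (hy : y ∈ A) (hay : a ≠ y) (hoa : o a ≤ 2) (hoy : o y ≤ 2)
    (hA : A.card + κ * (k + 3 + 4 * i + 2 * i * i) + 2 * i + reserve m d i ≤ Fintype.card V) :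
    ∃ W H A' o', AbsorberIn G A A' a y κ (k + 2 * i + 2) W H ∧ Tame G m d A' o' ∧ A ⊆ A' ∧
      A'.card ≤ A.card + κ * (k + 3 + 4 * i + 2 * i * i) + 2 * i := by
  induction κ generalizing A o a with
  | zero =>
    obtain ⟨p, -, hp, o', h', -⟩ := h.exists_connection S ha hy hay (by omega) (by omega)
      (by omega)
    exact ⟨_, _, _, o', absorberIn_of_isConnection ha hy hay hp _, h'.tame, h'.subset,
      by simpa using h'.card_le⟩
  | succ κ ih =>
    rw [Nat.succ_mul κ] at hA ⊢
    obtain ⟨b, z, a', R, R', A₁, o₁, h₁, hS, hmem, hb₁, hz₁, ha'₁⟩ :=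
      h.exists_switch S ha hoa (by omega)
    have hcard₁ := h₁.card_le
    obtain ⟨p, hplen, hp, o₂, h₂⟩ := h₁.tame.exists_long_connection S k (hmem b (by simp))
      (hmem z (by simp)) hS.adj_right.ne (by omega) (by omega) (by omega)
    have hcard₂ := h₂.card_le
    have hya' : y ≠ a' := fun e => hS.notMem a' (by simp) (e ▸ hy)
    have ha'₂ : o₂ a' = o₁ a' := h₂.eq_of_notMem a' (hmem a' (by simp)) fun hbz => by
      have := hS.nodup
      simp at this hbz
      grind
    have hy₂ : o₂ y = o y := by
      rw [h₂.eq_of_notMem y (h₁.subset hy), h₁.eq_of_notMem y hy (by simpa using hay.symm)]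
      rintro (rfl | rfl)
      exacts [hS.notMem y (by simp) hy, hS.notMem y (by simp) hy]
    obtain ⟨W, H, A', o', hW, h', hA', hcard'⟩ := ih h₂.tame (h₂.subset (hmem a' (by simp)))
      (h₂.subset (h₁.subset hy)) hya'.symm (by omega) (by omega) (by omega)
    exact ⟨_, _, A', o', hW.cons ha hy hay hS h₁.subset hmem hp (by omega) hA', h',
      h₁.subset.trans (h₂.subset.trans hA'), by omega⟩

end Tame

end AbsorberConstruction

/-! ### Hamilton paths -/

section HamiltonPath

variable {V : Type*} {G : SimpleGraph V} {x y : V}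

lemma listEnds_le {l : List V} (h : 2 ≤ l.length) : listEnds l ≤ l := by
  obtain ⟨a, l, rfl⟩ := List.exists_cons_of_length_pos (by omega : 0 < l.length)
  obtain ⟨q, b, rfl⟩ : ∃ q b, l = q ++ [b] := by
    simpa using List.eq_nil_or_concat l |>.resolve_left (by rintro rfl; simp at h)
  rw [← List.cons_append, listEnds_append (by simp) (by simp), ← Multiset.coe_add]
  gcongr <;> simp

lemma ends_le_verts {F : Multiset (List V)} (h : ∀ l ∈ F, 2 ≤ l.length) : ends F ≤ verts F := by
  induction F using Multiset.induction_on with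
  | empty => simp
  | cons l F ih =>
    rw [Multiset.forall_mem_cons] at h
    rw [ends_cons, verts_cons]
    exact add_le_add (listEnds_le h.1) (ih h.2)

variable [DecidableEq V]

lemma exists_isHamiltonian_of_list {l : List V} (hl : l.IsChain G.Adj) (hnodup : l.Nodup)
    (hx : l.head? = some x) (hy : l.getLast? = some y) (hmem : ∀ v, v ∈ l) :
    ∃ P : G.Walk x y, P.IsHamiltonian := by
  have hne : l ≠ [] := List.ne_nil_of_mem (hmem x)
  refine ⟨(Walk.ofSupport l hne hl).copy ((List.head_eq_iff_head?_eq_some hne).2 hx)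
    (List.getLast_of_getLast?_eq_some hy), fun v => ?_⟩
  rw [Walk.support_copy, Walk.support_ofSupport]
  exact List.count_eq_one_of_mem hnodup (hmem v)

lemma Valid.exists_isHamiltonian {F : Multiset (List V)} (hF : Valid G F)
    (hmem : ∀ v, v ∈ verts F) (hends : ends F = {x, y}) : ∃ P : G.Walk x y, P.IsHamiltonian := by
  obtain ⟨l, F₀, h⟩ := exists_reorient_cons (F := F) (x := x) (by simp [hends])
  have hval := h.valid G hF
  obtain rfl : F₀ = 0 := by
    have hcard := hval.card_ends
    rw [h.ends_eq, hends, Multiset.card_pair, Multiset.card_cons] at hcard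
    exact Multiset.card_eq_zero.1 (by omega)
  obtain ⟨⟨-, hchain, hnodup⟩, -⟩ := valid_cons.1 hval
  have hverts := h.verts_eq
  have hlast := h.ends_eq
  rw [verts_cons, verts_zero, add_zero] at hverts
  rw [ends_cons, ends_zero, add_zero, hends] at hlast
  refine exists_isHamiltonian_of_list hchain hnodup rfl ?_ fun v => ?_
  · simpa [listEnds, List.getLast?_cons] using hlast
  · rw [← Multiset.mem_coe, hverts]
    exact hmem v

lemma exists_isHamiltonian_of_isJoined_one [Finite V] (hJ : IsJoined G 1) (hxy : x ≠ y) :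
    ∃ P : G.Walk x y, P.IsHamiltonian := by
  cases nonempty_fintype V
  have hadj : ∀ u v : V, u ≠ v → G.Adj u v := fun u v huv => by
    simpa using hJ {u} {v} (by simpa using huv) rfl rfl
  have hnodup : (x :: ({x, y}ᶜ : Finset V).toList ++ [y]).Nodup := by
    simp [List.nodup_append', Finset.nodup_toList, hxy]
  refine exists_isHamiltonian_of_list (hnodup.imp (hadj _ _)).isChain hnodup rfl
    List.getLast?_concat fun v => ?_
  by_cases hx : v = x <;> by_cases hy : v = y <;> simp [hx, hy]

variable [Fintype V] {m d i : ℕ} {A B : Finset V} {o : V → ℕ}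

lemma tame_pair (hexp : ∀ U : Finset V, U.card ≤ 2 * m → (d + 2) * U.card ≤ (nbhd G U).card)
    (x y : V) : Tame G m d {x, y} 0 where
  extendable U hU := by
    rcases U.eq_empty_or_nonempty with rfl | hne
    · simp
    · have hsdiff := Finset.le_card_sdiff ({x, y} : Finset V) (nbhd G U)
      have hpair : ({x, y} : Finset V).card ≤ 2 := Finset.card_le_two
      have hUpos := hne.card_pos
      have hU' := hexp U hU
      rw [add_mul] at hU'
      omega
  le_four := by simp
  eq_zero := by simp

lemma Tame.le_card_nbhd_inter (h : Tame G m d A o) (hB : Aᶜ ⊆ B) (U : Finset V)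
    (hU : U.card ≤ 2 * m) : d * U.card ≤ (nbhd G U ∩ B).card + 4 * U.card := by
  have hsum : ∑ u ∈ U, o u ≤ 4 * U.card := by
    simpa [mul_comm] using Finset.sum_le_card_nsmul U o 4 fun u _ => h.le_four u
  refine (h.extendable U hU).trans (Nat.add_le_add (Finset.card_le_card fun v hv => ?_) hsum)
  rw [Finset.mem_sdiff, ← Finset.mem_compl] at hv
  exact Finset.mem_inter.2 ⟨hv.1, hB hv.2⟩

lemma AbsorberIn.exists_isHamiltonian {A₀ A : Finset V} {κ r q : ℕ} {W F : Multiset (List V)}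
    {H : Multiset V} (h : AbsorberIn G A₀ A x y κ r W H) (hJ : IsJoined G m) (hm : m ≤ 2 ^ i)
    (hF : Valid G F) (hFmem : ∀ v, v ∈ verts F ↔ v ∉ H + verts W)
    (hexp : ∀ U : Finset V, U.card ≤ m →
      4 * U.card ≤ (nbhd G U ∩ (H + verts W).toFinsetᶜ).card)
    (hr : 2 ≤ r) (hq : 20 * m < q * r) (hκ : 5 * q + F.card * (4 * i + 1) ≤ κ) :
    ∃ P : G.Walk x y, P.IsHamiltonian := by
  obtain ⟨hH, hW, hHW⟩ := Multiset.nodup_add.1 h.nodup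
  have hFW : Valid G (F + W) := valid_add.2 ⟨hF, h.valid, fun v hvF hvW =>
    (hFmem v).1 hvF (Multiset.mem_add.2 (.inr hvW))⟩
  have hWends : (0 + ends W).Nodup := by
    rw [zero_add]
    exact Multiset.nodup_of_le (ends_le_verts fun l hl => (h.length_eq l hl).ge.trans' hr) hW
  obtain ⟨F₁, hF₁, hverts₁, hends₁⟩ := exists_insertion hJ hm hFW hexp (by simp [hFmem])
    h.length_eq hr hq (h.card_eq ▸ hκ) hWends (Multiset.zero_le _) (by simp [hF.card_ends])
  have hF₁H : (verts F₁ + H).Nodup := by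
    refine Multiset.nodup_add.2 ⟨hF₁.2, hH, Multiset.disjoint_left.2 fun {v} hv hvH => ?_⟩
    rw [hverts₁, Multiset.mem_add, hFmem] at hv
    exact hv.elim (fun hv => hv (Multiset.mem_add.2 (.inl hvH))) (Multiset.disjoint_left.1 hHW hvH)
  obtain ⟨F₂, hF₂, hverts₂, hends₂⟩ := h.absorber.absorb hF₁ hF₁H hends₁
  refine hF₂.exists_isHamiltonian (fun v => ?_) (hends₂.trans (zero_add _))
  rw [hverts₂, hverts₁, Multiset.mem_add, Multiset.mem_add, hFmem, Multiset.mem_add]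
  tauto

theorem exists_isHamiltonian_of_setting {k κ a t ℓ M q : ℕ} (S : Setting G m d i)
    (hexp : ∀ U : Finset V, U.card ≤ 2 * m → (d + 2) * U.card ≤ (nbhd G U).card)
    (hxy : x ≠ y) (had : 3 * a + 5 ≤ d) (hd : 8 ≤ d) (hat : m ≤ a ^ t)
    (hM : 8 ^ t * ℓ ≤ M) (hMpos : 0 < M) (hq : 20 * m < q * (k + 2 * i + 2))
    (hreserve : 2 + κ * (k + 3 + 4 * i + 2 * i * i) + 2 * i + reserve m d i ≤ Fintype.card V)
    (hcover : 2 + κ * (k + 3 + 4 * i + 2 * i * i) + 2 * i + (37 * m + 5 * M + 2) ≤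
      Fintype.card V)
    (hκ : ∀ s, ℓ * s ≤ ℓ * (2 * (M + M * (4 * M))) + Fintype.card V →
      5 * q + s * (4 * i + 1) ≤ κ) :
    ∃ P : G.Walk x y, P.IsHamiltonian := by
  have hpair : ({x, y} : Finset V).card = 2 := Finset.card_pair hxy
  obtain ⟨W, H, A, o, hW, hA, -, hAcard⟩ := (tame_pair hexp x y).exists_absorberIn S k κ
    (by simp) (by simp) hxy (by simp) (by simp) (by omega)
  have hAB : Aᶜ ⊆ (H + verts W).toFinsetᶜ :=
    Finset.compl_subset_compl.2 fun v hv => hW.mem v (Multiset.mem_toFinset.1 hv)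
  have hexpB : ∀ (c : ℕ), c + 4 ≤ d → ∀ U : Finset V, U.card ≤ m →
      c * U.card ≤ (nbhd G U ∩ (H + verts W).toFinsetᶜ).card := fun c hc U hU => by
    have hdU := hA.le_card_nbhd_inter hAB U (by omega)
    have hcU := Nat.mul_le_mul_right U.card hc
    rw [add_mul] at hcU
    omega
  have hBcard := Finset.card_le_card hAB
  rw [Finset.card_compl A] at hBcard
  obtain ⟨F, hF, hFverts, hFcard⟩ := exists_covering_family S.isJoined
    (hexpB (3 * a + 1) (by omega)) hat hM hMpos (by omega)
  exact hW.exists_isHamiltonian S.isJoined S.le_two_pow hF (by simp [hFverts])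
    (hexpB 4 hd) (by omega) hq
    (hκ F.card (hFcard.trans (Nat.add_le_add_left (Finset.card_le_univ _) _)))

end HamiltonPath

/-! ### Choice of the parameters -/

section Parameters

variable {f i m n : ℕ}

lemma linear_and_quadratic_le_two_pow (hf : 20 ≤ f) :
    2 ^ 24 * (80 * f + 80) ≤ 2 ^ (2 * f) ∧
      8 * (2 * (20 * f + 22) * (20 * f + 22)) ≤ 2 ^ (2 * f) := by
  induction f, hf using Nat.le_induction with
  | base => norm_num
  | succ f hf ih =>
    rw [show 2 ^ (2 * (f + 1)) = 4 * 2 ^ (2 * f) by ring]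
    constructor
    · linarith [ih.1]
    · nlinarith [ih.2]

lemma absorber_card_le (hf : 20 ≤ f) (hn : 2 ^ (20 * f) ≤ n) (hi : i ≤ 20 * f + 19) :
    2 + 2 ^ (18 * f) * (320 * m / 2 ^ (18 * f) + 1 + 3 + 4 * i + 2 * i * i) + 2 * i ≤
      320 * m + n / 8 := by
  have hκn : 2 ^ (18 * f) * 2 ^ (2 * f) ≤ n := by rwa [← pow_add, ← add_mul]
  have hκpos : 0 < 2 ^ (18 * f) := by positivity
  generalize 2 ^ (18 * f) = κ at hκn hκpos ⊢
  have hi2 : 2 * i * i ≤ 2 * (20 * f + 19) * (20 * f + 19) := by gcongr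
  have hcost : (6 + 6 * i + 2 * i * i) * 8 ≤ 2 ^ (2 * f) := by
    have := (linear_and_quadratic_le_two_pow hf).2
    nlinarith
  have hmain : κ * (6 + 6 * i + 2 * i * i) ≤ n / 8 := by
    rw [Nat.le_div_iff_mul_le (by norm_num), mul_assoc]
    exact (Nat.mul_le_mul_left κ hcost).trans hκn
  have hsmall : 2 + 2 * i ≤ κ * (2 + 2 * i) := Nat.le_mul_of_pos_left _ hκpos
  have hdiv : κ * (320 * m / κ) ≤ 320 * m := Nat.mul_div_le _ _
  linarith

lemma covering_family_card_le (hn : n ≤ 2 ^ (20 * f + 20)) {s : ℕ}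
    (hs : 2 ^ (4 * f) * s ≤
      2 ^ (4 * f) * (2 * (2 ^ (5 * f) + 2 ^ (5 * f) * (4 * 2 ^ (5 * f)))) + n) :
    s ≤ 2 ^ 21 * 2 ^ (16 * f) := by
  have hn' : n ≤ 2 ^ (4 * f) * (2 ^ 20 * 2 ^ (16 * f)) := by
    rw [← pow_add, ← pow_add]
    exact hn.trans_eq (by ring)
  have hs' : s ≤ 2 * (2 ^ (5 * f) + 2 ^ (5 * f) * (4 * 2 ^ (5 * f))) + 2 ^ 20 * 2 ^ (16 * f) := by
    refine Nat.le_of_mul_le_mul_left (c := 2 ^ (4 * f)) ?_ (by positivity)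
    rw [Nat.mul_add]
    omega
  have h₅ : 2 ^ (5 * f) ≤ 2 ^ (16 * f) := Nat.pow_le_pow_right (by norm_num) (by omega)
  have h₁₀ : 2 ^ (5 * f) * 2 ^ (5 * f) ≤ 2 ^ (16 * f) := by
    rw [← pow_add]
    exact Nat.pow_le_pow_right (by norm_num) (by omega)
  linarith

lemma insertion_card_le (hf : 20 ≤ f) (hi : i ≤ 20 * f + 19) {s : ℕ}
    (hs : s ≤ 2 ^ 21 * 2 ^ (16 * f)) :
    5 * 2 ^ (18 * f - 4) + s * (4 * i + 1) ≤ 2 ^ (18 * f) := by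
  have hq : 16 * 2 ^ (18 * f - 4) = 2 ^ (18 * f) := by
    rw [show 16 = 2 ^ 4 by norm_num, ← pow_add, Nat.add_sub_cancel' (by omega)]
  have hsi : 8 * (s * (4 * i + 1)) ≤ 2 ^ (18 * f) := calc
    8 * (s * (4 * i + 1)) ≤ 8 * (2 ^ 21 * 2 ^ (16 * f) * (80 * f + 80)) :=
      Nat.mul_le_mul_left _ (Nat.mul_le_mul hs (by omega))
    _ = 2 ^ (16 * f) * (2 ^ 24 * (80 * f + 80)) := by ring
    _ ≤ 2 ^ (16 * f) * 2 ^ (2 * f) :=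
      Nat.mul_le_mul_left _ (linear_and_quadratic_le_two_pow hf).1
    _ = 2 ^ (18 * f) := by rw [← pow_add, ← add_mul]
  omega

lemma twenty_mul_lt (hf : 0 < f) (i : ℕ) :
    20 * m < 2 ^ (18 * f - 4) * (320 * m / 2 ^ (18 * f) + 1 + 2 * i + 2) := by
  have hq : 16 * 2 ^ (18 * f - 4) = 2 ^ (18 * f) := by
    rw [show 16 = 2 ^ 4 by norm_num, ← pow_add, Nat.add_sub_cancel' (by omega)]
  have hk : 320 * m < 2 ^ (18 * f) * (320 * m / 2 ^ (18 * f) + 1) :=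
    Nat.lt_mul_div_succ _ (by positivity)
  rw [← hq, mul_assoc, hq] at hk
  have hmono := Nat.mul_le_mul_left (2 ^ (18 * f - 4))
    (by omega : 320 * m / 2 ^ (18 * f) + 1 ≤ 320 * m / 2 ^ (18 * f) + 1 + 2 * i + 2)
  omega

end Parameters

section Expander

variable {V : Type*} [Fintype V] [DecidableEq V] {G : SimpleGraph V} {m d : ℕ} {x y : V}

set_option exponentiation.threshold 500 in
/-- With `20 * f` about `log₂ n`, the absorber consists of `2 ^ (18 * f)` paths on about
`320 * m / 2 ^ (18 * f)` vertices each, and `2 ^ (4 * f)` is the typical length of the paths which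
cover the other vertices. -/
theorem exists_isHamiltonian_of_large (hJ : IsJoined G m) (hm : 0 < m) (hd : 3 * 2 ^ 120 + 8 ≤ d)
    (hexp : ∀ U : Finset V, U.card ≤ 2 * m → (d + 2) * U.card ≤ (nbhd G U).card)
    (hn : 2 ^ 400 ≤ Fintype.card V) (hnm : (8 * d + 4000) * m ≤ Fintype.card V) (hxy : x ≠ y) :
    ∃ P : G.Walk x y, P.IsHamiltonian := by
  obtain ⟨f, hfn, hnf⟩ := exists_nat_pow_near (x := Fintype.card V) (y := 2 ^ 20)
    (hn.trans' Nat.one_le_two_pow) (by norm_num)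
  obtain ⟨i, him, hmi⟩ := exists_nat_pow_near (x := m) (y := 2) hm (by norm_num)
  rw [← pow_mul] at hfn hnf
  rw [Nat.mul_succ] at hnf
  have hf : 20 ≤ f := by
    have := (Nat.pow_lt_pow_iff_right (by norm_num)).1 (hn.trans_lt hnf)
    omega
  have hnm' : 8 * (d * m) + 4000 * m ≤ Fintype.card V := by rwa [← mul_assoc, ← add_mul]
  have hi : i + 1 ≤ 20 * f + 19 := by
    have := (Nat.pow_lt_pow_iff_right (by norm_num : 1 < 2)).1
      (by rw [pow_succ]; omega : 2 ^ (i + 1) < 2 ^ (20 * f + 20))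
    omega
  have hM : 2 ^ (5 * f) * 64 ≤ Fintype.card V := by
    rw [show 64 = 2 ^ 6 by norm_num, ← pow_add]
    exact hfn.trans' (Nat.pow_le_pow_right (by norm_num) (by omega))
  have hMpos : 0 < 2 ^ (5 * f) := by positivity
  have habs := absorber_card_le (m := m) hf hfn hi
  have hres : reserve m d (i + 1) ≤ 2 * (d * m) + 11 * m := by
    rw [reserve, pow_succ, add_mul, mul_assoc 2 d]
    omega
  refine exists_isHamiltonian_of_setting (a := 2 ^ 120) (t := f / 3) (ℓ := 2 ^ (4 * f))
    ⟨hJ, hm, by omega, hmi.le⟩ hexp hxy (by omega) (by omega) ?_ ?_ hMpos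
    (twenty_mul_lt (by omega) (i + 1)) (by omega) (by omega) fun s hs =>
      insertion_card_le hf hi (covering_family_card_le hnf.le hs)
  · rw [← pow_mul]
    exact hmi.le.trans (Nat.pow_le_pow_right (by norm_num) (by omega))
  · rw [show 8 = 2 ^ 3 by norm_num, ← pow_mul, ← pow_add]
    exact Nat.pow_le_pow_right (by norm_num) (by omega)

variable [DecidableRel G.Adj] {C : ℝ}

lemma card_extNbhd_le (X : Finset V) : (extNbhd G X).card ≤ (nbhd G X).card :=
  Finset.card_le_card fun _ hv => mem_nbhd.2 (Finset.mem_filter.1 hv).2.2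

/-- A set of at most `2 * ⌈r⌉₊` vertices, where `1 ≤ r`, has a quarter of its vertices in a subset
of size at most `r`. -/
lemma le_card_nbhd_of_isCExpander (h : IsCExpander G C) (hC : 4 * (d : ℝ) ≤ C)
    (hn : 1 ≤ (Fintype.card V : ℝ) / (2 * C)) (U : Finset V)
    (hU : U.card ≤ 2 * ⌈(Fintype.card V : ℝ) / (2 * C)⌉₊) : d * U.card ≤ (nbhd G U).card := by
  rcases U.eq_empty_or_nonempty with rfl | hne
  · simp
  set r := (Fintype.card V : ℝ) / (2 * C)
  have hfloor : 1 ≤ ⌊r⌋₊ := Nat.le_floor (by exact_mod_cast hn)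
  have hceil : ⌈r⌉₊ ≤ ⌊r⌋₊ + 1 := Nat.ceil_le_floor_add_one r
  obtain ⟨X, hXU, hX⟩ := Finset.exists_subset_card_eq (min_le_left U.card ⌊r⌋₊)
  have hUpos := hne.card_pos
  have hUX : U.card ≤ 4 * X.card := by omega
  have hXr : (X.card : ℝ) ≤ r :=
    (Nat.cast_le.2 (hX.le.trans (min_le_right _ _))).trans (Nat.floor_le (by linarith))
  have hXnbhd : (extNbhd G X).card ≤ (nbhd G U).card :=
    (card_extNbhd_le X).trans (Finset.card_le_card (nbhd_mono hXU))
  have : (d : ℝ) * U.card ≤ (nbhd G U).card := calc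
    (d : ℝ) * U.card ≤ d * (4 * X.card) := by gcongr; exact_mod_cast hUX
    _ = 4 * d * X.card := by ring
    _ ≤ C * X.card := by gcongr
    _ ≤ (extNbhd G X).card := h.2 X (by omega) hXr
    _ ≤ (nbhd G U).card := by exact_mod_cast hXnbhd
  exact_mod_cast this

end Expander

lemma ceil_div_two_mul_mul_le {n C : ℝ} (hC : 0 < C) (hn : 1 ≤ n / (2 * C)) :
    ⌈n / (2 * C)⌉₊ * C ≤ n := by
  have hceil := (Nat.ceil_lt_add_one (zero_le_one.trans hn)).le
  calc ⌈n / (2 * C)⌉₊ * C ≤ (2 * (n / (2 * C))) * C := by gcongr; linarith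
    _ = n := by field_simp

end ExpanderHamilton

open ExpanderHamilton in
set_option exponentiation.threshold 500 in
theorem expander_hamilton_connected_general {V : Type*} [Fintype V] [DecidableEq V]
    {G : SimpleGraph V} [DecidableRel G.Adj] {C : ℝ} (hC : 2 ^ 400 ≤ C) (h : IsCExpander G C)
    {x y : V} (hxy : x ≠ y) : ∃ P : G.Walk x y, P.IsHamiltonian := by
  have hCpos : 0 < C := hC.trans_lt' (by positivity)
  have hnpos : (0 : ℝ) < Fintype.card V := by exact_mod_cast Fintype.card_pos_iff.2 ⟨x⟩
  rcases le_or_gt ((Fintype.card V : ℝ) / (2 * C)) 1 with hr | hr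
  · have hone : ⌈(Fintype.card V : ℝ) / (2 * C)⌉₊ = 1 :=
      le_antisymm (Nat.ceil_le.2 (by exact_mod_cast hr)) (Nat.one_le_ceil_iff.2 (by positivity))
    exact exists_isHamiltonian_of_isJoined_one (hone ▸ h.1) hxy
  · have hnC : 2 * C < Fintype.card V := (one_lt_div (by positivity)).1 hr
    have hdC : 8 * ((3 * 2 ^ 120 + 8 : ℕ) : ℝ) + 4000 ≤ C := hC.trans' (by norm_num)
    refine exists_isHamiltonian_of_large h.1 (Nat.ceil_pos.2 (by positivity)) le_rfl
      (le_card_nbhd_of_isCExpander h (by push_cast at hdC ⊢; linarith) hr.le) ?_ ?_ hxy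
    · exact_mod_cast (by linarith : (2 ^ 400 : ℝ) ≤ Fintype.card V)
    · have hmC := ceil_div_two_mul_mul_le hCpos hr.le
      rw [← Nat.cast_le (α := ℝ), Nat.cast_mul, mul_comm]
      refine hmC.trans' (mul_le_mul_of_nonneg_left ?_ (Nat.cast_nonneg _))
      exact_mod_cast hdC

/-- Theorem 3.2 (Draganić–Montgomery–Munhá Correia–Pokrovskiy–Sudakov):
there is a universal constant `C₀ > 0` such that every `C`-expander with
`C ≥ C₀` is Hamilton-connected. -/
theorem expander_hamilton_connected :
    ∃ C₀ : ℝ, 0 < C₀ ∧ ∀ C : ℝ, C₀ ≤ C →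
      ∀ (V : Type) [Fintype V] [DecidableEq V]
        (G : SimpleGraph V) [DecidableRel G.Adj],
        IsCExpander G C →
        ∀ x y : V, x ≠ y → ∃ P : G.Walk x y, P.IsHamiltonian :=
  ⟨2 ^ 400, by positivity, fun _ hC _ _ _ _ _ h _ _ hxy =>
    expander_hamilton_connected_general hC h hxy⟩
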